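/- arXiv:math/0502350 — 3 statements merged into one kernel-verified Lean document; each statement's English description precedes it below -/
import Mathlib

section
/- For every prime number q with q > 3, there are no nonzero integers x, y with x^2 − y^q = 1. -/
theorem kc_key (p : ℕ) (hp : p.Prime) (hodd : Odd p) (A B z : ℤ) (hAB : IsCoprime A B)
    (h : A ^ p - B ^ p = z ^ 2) (hz : ¬ (p : ℤ) ∣ z) : ∃ c : ℤ, A - B = c ^ 2 := by
  have hz0 : z ≠ 0 := by
    rintro rfl
    exact hz (dvd_zero _)
  have hle : B ≤ A := by
    have h1 : B ^ p ≤ A ^ p := by nlinarith [sq_nonneg z]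
    exact hodd.strictMono_pow.le_iff_le.mp h1
  have hfac : (A - B) * (∑ i ∈ Finset.range p, A ^ i * B ^ (p - 1 - i)) = z ^ 2 := by
    rw [mul_comm, (Commute.all A B).geom_sum₂_mul, h]
  have hpZ : Prime (p : ℤ) := Nat.prime_iff_prime_int.mp hp
  have hcop : IsCoprime (A - B) (∑ i ∈ Finset.range p, A ^ i * B ^ (p - 1 - i)) := by
    apply isCoprime_of_prime_dvd
    · rintro ⟨h1, -⟩
      rw [h1, zero_mul] at hfac
      exact hz0 (pow_eq_zero_iff (two_ne_zero) |>.mp hfac.symm)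
    · intro r hr h1 h2
      rw [dvd_geom_sum₂_iff_of_dvd_sub h1] at h2
      rcases hr.dvd_or_dvd h2 with h3 | h3
      · have h4 : (p : ℤ) ∣ r := (hr.dvd_prime_iff_associated hpZ |>.mp h3).symm.dvd
        have h5 : (p : ℤ) ∣ z ^ 2 := by
          rw [← hfac]
          exact (h4.trans h1).mul_right _
        exact hz (hpZ.dvd_of_dvd_pow h5)
      · have hB := hr.dvd_of_dvd_pow h3
        have hA : r ∣ A := by
          have := dvd_add h1 hB
          simpa using this
        exact hr.not_isUnit (hAB.isUnit_of_dvd' hA hB)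
  obtain ⟨c, hc | hc⟩ := Int.sq_of_isCoprime hcop hfac
  · exact ⟨c, hc⟩
  · exact ⟨0, by nlinarith [sq_nonneg c]⟩

theorem kc_aux (D u x Y : ℕ) (huu : 1 < u * u) (h1 : u * u - D = 1)
    (h : x * x = (u * u - 1) * Y * Y + 1) : x * x - D * Y * Y = 1 := by
  have : D = u * u - 1 := by omega
  rw [this, h]
  omega

theorem kc_pell (u x m : ℕ) (hu : 1 < u) (hm : 0 < m) (heven : Even (u * u - 1))
    (h : x * x = (u * u - 1) * (u * u - 1) ^ m * (u * u - 1) ^ m + 1) : False := by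
  have h1 := Pell.pell_eq hu 1
  simp only [Pell.xn_one, Pell.yn_one, mul_one] at h1
  have huu : 1 < u * u := by nlinarith
  obtain ⟨n, -, hn⟩ := Pell.eq_pell (x := x) (y := (u * u - 1) ^ m) hu
    (kc_aux _ u x _ huu h1 h)
  have h2 := Pell.yn_modEq_two hu n
  rw [← hn] at h2
  have h3 : Even ((u * u - 1) ^ m) := heven.pow_of_ne_zero hm.ne'
  have h4 : 2 ∣ n := by
    have : (u * u - 1) ^ m % 2 = 0 := Nat.even_iff.mp h3
    unfold Nat.ModEq at h2
    omega
  have h5 := (Pell.y_dvd_iff hu 2 n).mpr h4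
  rw [← hn] at h5
  have h6 : Pell.yn hu 2 = 2 * u := by
    have := Pell.yn_succ_succ hu 0
    simpa using this
  rw [h6] at h5
  have h7 : u ∣ (u * u - 1) ^ m := (Dvd.intro_left 2 rfl).trans h5
  have h8 : Nat.Coprime u (u * u - 1) := by
    have : Nat.gcd u (u * u - 1) ∣ 1 := by
      have a1 : Nat.gcd u (u * u - 1) ∣ u * u := (Nat.gcd_dvd_left _ _).mul_right _
      have a2 := Nat.gcd_dvd_right u (u * u - 1)
      have := Nat.dvd_sub a1 a2
      rwa [show u * u - (u * u - 1) = 1 by omega] at this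
    exact Nat.dvd_one.mp this
  have h9 := Nat.Coprime.eq_one_of_dvd (h8.pow_right m) h7
  omega

theorem kc_even (q : ℕ) (hodd : Odd q) (hq3 : 3 < q) (x y : ℤ) (hx : 0 < x) (hxe : Even x)
    (h : x ^ 2 - y ^ q = 1) : False := by
  have hc : IsCoprime (x - 1) (x + 1) := by
    obtain ⟨k, hk⟩ := hxe
    exact ⟨k, 1 - k, by subst hk; ring⟩
  obtain ⟨⟨d, hd⟩, e, he⟩ := Int.eq_pow_of_mul_eq_pow_odd hc hodd
    (show (x - 1) * (x + 1) = y ^ q by linarith)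
  have hq0 : q ≠ 0 := by omega
  have hdo : Odd d := by
    have : Odd (d ^ q) := by rw [← hd]; exact hxe.sub_odd odd_one
    exact (Int.odd_pow' hq0).mp this
  have heo : Odd e := by
    have : Odd (e ^ q) := by rw [← he]; exact hxe.add_odd odd_one
    exact (Int.odd_pow' hq0).mp this
  have hlt : d < e := hodd.strictMono_pow.lt_iff_lt.mp (show d ^ q < e ^ q by linarith)
  have hd0 : 0 ≤ d := hodd.pow_nonneg_iff.mp (by rw [← hd]; omega)
  have h2 : d + 2 ≤ e := by
    obtain ⟨a, ha⟩ := hdo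
    obtain ⟨b, hb⟩ := heo
    omega
  have h3 : (d + 2) ^ q ≤ e ^ q := pow_le_pow_left₀ (by omega) h2 q
  have h4 : d ^ q + 2 ^ q ≤ (d + 2) ^ q := pow_add_pow_le hd0 (by norm_num) hq0
  have h5 : (2 : ℤ) ^ 2 ≤ 2 ^ q := pow_le_pow_right₀ (by norm_num) (by omega)
  linarith

theorem kc_dvd (q : ℕ) (hq : q.Prime) (hodd : Odd q) (hq3 : 3 < q) (x y : ℤ) (hy : 0 < y)
    (hye : Even y) (h : x ^ 2 - y ^ q = 1) : (q : ℤ) ∣ x := by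
  by_contra hx
  obtain ⟨c, hc⟩ := kc_key q hq hodd y (-1) x isCoprime_one_right.neg_right
    (by rw [hodd.neg_one_pow]; linarith) hx
  obtain ⟨m, hm⟩ := hodd
  have hcc : (c.natAbs : ℤ) * c.natAbs = y + 1 := by
    rw [← Int.natCast_mul, Int.natAbs_mul_self]; linarith
  have hyn : ((c.natAbs * c.natAbs - 1 : ℕ) : ℤ) = y := by
    have : ((c.natAbs * c.natAbs : ℕ) : ℤ) = y + 1 := by push_cast at *; exact hcc
    omega
  apply kc_pell c.natAbs x.natAbs m
  · by_contra hcon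
    have : (c.natAbs : ℤ) ≤ 1 := by omega
    nlinarith
  · omega
  · rw [← Int.even_coe_nat, hyn]; exact hye
  · generalize c.natAbs * c.natAbs - 1 = N at *
    have hxx : ((x.natAbs * x.natAbs : ℕ) : ℤ) = x * x := Int.natAbs_mul_self
    have : ((x.natAbs * x.natAbs : ℕ) : ℤ) = ((N * N ^ m * N ^ m + 1 : ℕ) : ℤ) := by
      rw [hxx]
      push_cast
      rw [hyn]
      have e : y * y ^ m * y ^ m = y ^ q := by rw [hm]; ring
      rw [e]; linarith
    exact_mod_cast this

theorem kc_main (q : ℕ) (hq : q.Prime) (hodd : Odd q) (hq3 : 3 < q) (x t w : ℤ) (hw : w ≠ 0)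
    (hxt : x = 4 * t + 1) (h : x ^ 2 - (2 * w) ^ q = 1) (hqx : (q : ℤ) ∣ x) : False := by
  obtain ⟨n, rfl⟩ : ∃ n, q = n + 3 := ⟨q - 3, by omega⟩
  have h1 : t * (2 * t + 1) = 2 ^ n * w ^ (n + 3) := by
    have : 8 * (t * (2 * t + 1)) = 8 * (2 ^ n * w ^ (n + 3)) := by
      have e : (2 * w) ^ (n + 3) = 8 * (2 ^ n * w ^ (n + 3)) := by rw [mul_pow]; ring
      rw [← e]; subst hxt; linarith
    linarith
  have hc2 : IsCoprime ((2 : ℤ) ^ n) (2 * t + 1) :=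
    IsCoprime.pow_left ⟨-t, 1, by ring⟩
  obtain ⟨s, hs⟩ : (2 : ℤ) ^ n ∣ t := hc2.dvd_of_dvd_mul_right ⟨_, h1⟩
  have h2 : s * (2 * t + 1) = w ^ (n + 3) := by
    have h2n : (2 : ℤ) ^ n ≠ 0 := by positivity
    apply mul_left_cancel₀ h2n
    rw [← h1, ← mul_assoc, ← hs]
  have hct : IsCoprime t (2 * t + 1) := ⟨-2, 1, by ring⟩
  have hcs : IsCoprime s (2 * t + 1) := hct.of_isCoprime_of_dvd_left ⟨2 ^ n, by rw [hs]; ring⟩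
  obtain ⟨⟨a, ha⟩, b, hb⟩ := Int.eq_pow_of_mul_eq_pow_odd hcs hodd h2
  have hq0 : n + 3 ≠ 0 := by omega
  have ha0 : a ≠ 0 := by
    rintro rfl
    rw [zero_pow hq0] at ha
    rw [ha, zero_mul] at h2
    exact hw ((pow_eq_zero_iff hq0).mp h2.symm)
  have hab : IsCoprime a b := by
    rw [ha, hb] at hcs
    exact (IsCoprime.pow_iff (by omega) (by omega)).mp hcs
  have h2b : IsCoprime (2 : ℤ) b := by
    have : IsCoprime (2 : ℤ) (b ^ (n + 3)) := by
      rw [← hb]; exact ⟨-t, 1, by ring⟩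
    exact (IsCoprime.pow_right_iff (by omega)).mp this
  have hcop : IsCoprime (b ^ 2) (2 * a) := (h2b.mul_left hab).symm.pow_left
  have hz : ¬ ((n + 3 : ℕ) : ℤ) ∣ 2 * t - 1 := by
    intro hd
    have h3 : ((n + 3 : ℕ) : ℤ) ∣ 3 := by
      have := dvd_sub hqx (hd.mul_left 2)
      rwa [hxt, show 4 * t + 1 - 2 * (2 * t - 1) = 3 by ring] at this
    have := Int.le_of_dvd (by norm_num) h3
    omega
  obtain ⟨c, hc⟩ := kc_key (n + 3) hq hodd (b ^ 2) (2 * a) (2 * t - 1) hcop (by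
    have e1 : (b ^ 2) ^ (n + 3) = (2 * t + 1) ^ 2 := by rw [hb]; ring
    have e2 : (2 * a) ^ (n + 3) = 8 * t := by rw [mul_pow, ← ha, hs]; ring
    rw [e1, e2]; ring) hz
  -- size
  have hlt : |a| < |b| := by
    by_contra hcon
    push Not at hcon
    have e1 : |b| ^ (n + 3) ≤ |a| ^ (n + 3) := pow_le_pow_left₀ (abs_nonneg _) hcon _
    rw [← abs_pow, ← abs_pow, ← ha, ← hb] at e1
    have hn1 : (2 : ℤ) ^ 1 ≤ 2 ^ n := pow_le_pow_right₀ (by norm_num) (by omega)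
    have hs1 : 1 ≤ |s| := by
      apply Int.one_le_abs
      rw [ha]; exact pow_ne_zero _ ha0
    have e2 : |t| = 2 ^ n * |s| := by rw [hs, abs_mul, abs_of_pos (by positivity)]
    have e3 : 2 * |s| ≤ |t| := by rw [e2]; nlinarith
    have e4 : 2 * |t| - 1 ≤ |2 * t + 1| := by
      rcases abs_cases t with h | h <;> rcases abs_cases (2 * t + 1) with h' | h' <;> omega
    omega
  have hb2 : |b| ^ 2 = b ^ 2 := sq_abs b
  have hcc : |c| ^ 2 = c ^ 2 := sq_abs c
  have hcn := abs_nonneg c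
  have han := neg_abs_le a
  have han' := le_abs_self a
  rcases lt_trichotomy |c| |b| with h | h | h
  · nlinarith
  · rw [h] at hcc
    apply ha0
    linarith
  · nlinarith [abs_nonneg b]

/-- Ko-Chao's theorem: for every prime `q > 3`, there are no nonzero integers `x, y` with
`x ^ 2 - y ^ q = 1`. -/
theorem ko_chao (q : ℕ) (hq : q.Prime) (hq3 : 3 < q) :
    ¬ ∃ x y : ℤ, x ≠ 0 ∧ y ≠ 0 ∧ x ^ 2 - y ^ q = 1 := by
  rintro ⟨x, y, hx, hy, h⟩
  have hodd : Odd q := hq.odd_of_ne_two (by omega)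
  have hypos : 0 < y := by
    have : 0 ≤ y ^ q := by
      have : 0 < x ^ 2 := by positivity
      omega
    have := hodd.pow_nonneg_iff.mp this
    omega
  rcases Int.even_or_odd x with hxe | hxo
  · rcases lt_or_gt_of_ne hx with h0 | h0
    · exact kc_even q hodd hq3 (-x) y (by omega) hxe.neg (by rw [neg_sq]; exact h)
    · exact kc_even q hodd hq3 x y h0 hxe h
  · have hye : Even y := by
      have h1 : Even (y ^ q) := by
        have : y ^ q = x ^ 2 - 1 := by linarith
        rw [this]
        exact hxo.pow.sub_odd odd_one
      exact (Int.even_pow.mp h1).1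
    have hd := kc_dvd q hq hodd hq3 x y hypos hye h
    obtain ⟨w, hw⟩ := hye
    obtain ⟨k, hk⟩ := hxo
    have hw2 : y = 2 * w := by omega
    subst hw2
    have hw0 : w ≠ 0 := by omega
    rcases Int.even_or_odd k with ⟨t, ht⟩ | ⟨t, ht⟩
    · exact kc_main q hq hodd hq3 x t w hw0 (by omega) h hd
    · exact kc_main q hq hodd hq3 (-x) (-t - 1) w hw0 (by omega) (by rw [neg_sq]; exact h)
        (hd.neg_right)
end

section
/- Let p and q be odd primes, let ε = 1 or ε = −1, and let x, y be positive integers with x^p − y^q = ε. Then q divides x and p divides y. -/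
lemma cas_ineq1 (a p : ℕ) (ha : 1 ≤ a) (q : ℕ) (h : p ≤ q) : (a^q+1)^p ≤ (a^p+1)^q := by
  induction q, h using Nat.le_induction with
  | base => exact le_rfl
  | succ q hq ih =>
    calc (a^(q+1)+1)^p ≤ ((a^q+1)*a)^p := by
          apply Nat.pow_le_pow_left; rw [pow_succ]; nlinarith
      _ = (a^q+1)^p * a^p := by rw [mul_pow]
      _ ≤ (a^p+1)^q * (a^p+1) := Nat.mul_le_mul ih (by omega)
      _ = _ := by rw [pow_succ]

lemma cas_ineq2 (a : ℤ) (P : ℕ) (ha : 1 ≤ a) (q : ℕ) (h : P ≤ q) :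
    (a^P-1)^q ≤ (a^q-1)^P := by
  induction q, h using Nat.le_induction with
  | base => exact le_rfl
  | succ q hq ih =>
    have h1 : 1 ≤ a^P := one_le_pow₀ ha
    have h2 : 1 ≤ a^q := one_le_pow₀ ha
    calc (a^P-1)^(q+1) = (a^P-1)^q * (a^P-1) := by rw [pow_succ]
      _ ≤ (a^q-1)^P * a^P := by
          apply mul_le_mul ih (by omega) (by omega)
          exact pow_nonneg (by omega) _
      _ = ((a^q-1)*a)^P := by rw [mul_pow]
      _ ≤ _ := by
          apply pow_le_pow_left₀
          · apply mul_nonneg <;> omega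
          · rw [pow_succ]; nlinarith

/-- second-order expansion of the geometric sum -/
lemma cas_geom (s : ℤ) (n : ℕ) : ∃ k, ∑ i ∈ Finset.range n, (1+s)^i = n + s * k := by
  induction n with
  | zero => exact ⟨0, by simp⟩
  | succ n ih =>
    obtain ⟨k, hk⟩ := ih
    have : s ∣ (1+s)^n - 1 := by
      have := sub_dvd_pow_sub_pow (1+s) 1 n
      simpa using this
    obtain ⟨c, hc⟩ := this
    refine ⟨k + c, ?_⟩
    rw [Finset.sum_range_succ, hk]
    push_cast
    linear_combination hc

lemma cas_pow2 (s : ℤ) (n : ℕ) : ∃ k, (1-s)^n = 1 - n*s + s^2 * k := by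
  induction n with
  | zero => exact ⟨0, by simp⟩
  | succ n ih =>
    obtain ⟨k, hk⟩ := ih
    refine ⟨k + n - s*k, ?_⟩
    rw [pow_succ, hk]
    push_cast
    ring

lemma cas_geom2 (s : ℤ) (n : ℕ) : ∃ k, 2 * ∑ i ∈ Finset.range n, (1-s)^i = 2*n - n*(n-1)*s + 2 * s^2 * k := by
  induction n with
  | zero => exact ⟨0, by simp⟩
  | succ n ih =>
    obtain ⟨k, hk⟩ := ih
    obtain ⟨c, hc⟩ := cas_pow2 s n
    refine ⟨k + c, ?_⟩
    rw [Finset.sum_range_succ, mul_add, hk, hc]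
    push_cast
    ring

/-- If `p ∤ y` then `x - 1` is a `q`-th power. -/
lemma cas_pow (p q : ℕ) (hp : p.Prime) (hqodd : Odd q)
    (x y : ℤ) (h : x ^ p - y ^ q = 1) (hpy : ¬ (p : ℤ) ∣ y) : ∃ a : ℤ, x - 1 = a ^ q := by
  have hpZ : Prime (p : ℤ) := Nat.prime_iff_prime_int.mp hp
  have hfac : (x - 1) * ∑ i ∈ Finset.range p, x^i = y ^ q := by
    rw [mul_geom_sum]; linarith
  obtain ⟨k, hk⟩ := cas_geom (x-1) p
  rw [show 1 + (x-1) = x by ring] at hk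
  have hnd : ¬ (p:ℤ) ∣ x - 1 := by
    intro hd
    exact hpy (hpZ.dvd_of_dvd_pow (hfac ▸ hd.mul_right _))
  have hc : IsCoprime (x-1) (p:ℤ) := ((hpZ.irreducible.coprime_iff_not_dvd).2 hnd).symm
  have hc' : IsCoprime (x-1) (∑ i ∈ Finset.range p, x^i) := by
    rw [hk]; exact hc.add_mul_left_right k
  exact Int.eq_pow_of_mul_eq_pow_odd_left hc' hqodd hfac

/-- The easy case. -/
lemma cas_easy (p q : ℕ) (hp : p.Prime) (hpodd : Odd p) (hqodd : Odd q) (hpq : p ≤ q)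
    (x y : ℤ) (hx : x ≠ 0) (hy : y ≠ 0) (h : x ^ p - y ^ q = 1) : (p : ℤ) ∣ y := by
  by_contra hpy
  obtain ⟨a, ha⟩ := cas_pow p q hp hqodd x y h hpy
  have hq0 : q ≠ 0 := by rintro rfl; simp at hqodd
  have hp0 : p ≠ 0 := hp.ne_zero
  have hxa : x = a^q + 1 := by linarith
  subst hxa
  rcases lt_trichotomy a 0 with h0 | h0 | h0
  · obtain ⟨A, rfl⟩ : ∃ A, a = -A := ⟨-a, by ring⟩
    obtain ⟨Y, rfl⟩ : ∃ Y, y = -Y := ⟨-y, by ring⟩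
    rw [hqodd.neg_pow, hqodd.neg_pow] at h
    have e : (-A^q+1)^p = -(A^q-1)^p := by rw [← hpodd.neg_pow]; ring
    rw [e] at h
    have hA : 1 ≤ A := by omega
    have hA2 : 2 ≤ A := by
      by_contra hh
      have : A = 1 := by omega
      subst this
      apply hx; rw [hqodd.neg_pow]; simp
    have h1 := cas_ineq2 A p hA q hpq
    have hlt : A^p - 1 < Y := by
      apply (hqodd.strictMono_pow (R := ℤ)).lt_iff_lt.1
      show (A^p-1)^q < Y^q
      linarith
    have hlt2 : Y < A^p := by
      apply (hqodd.strictMono_pow (R := ℤ)).lt_iff_lt.1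
      show Y^q < (A^p)^q
      have h2 : 1 < A^q := one_lt_pow₀ (by omega) hq0
      have h3 : (A^q-1)^p + 1 ≤ (A^q)^p - 1 + 1:= by
        have : (A^q-1)^p < (A^q)^p := pow_lt_pow_left₀ (by omega) (by omega) hp0
        omega
      have h4 : (A^q-1)^p + 1 = Y^q := by linarith
      have h5 : (A^p)^q = (A^q)^p := by rw [← pow_mul, ← pow_mul, mul_comm]
      rw [h5, ← h4]
      -- need strictness
      have : (A^q-1)^p + 1 < (A^q)^p := by
        obtain ⟨B, hB⟩ : ∃ B, A^q = B + 1 := ⟨A^q-1, by ring⟩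
        rw [hB]
        have hB1 : 1 ≤ B := by omega
        have hB2 : 1 ≤ B^p := one_le_pow₀ hB1
        have : B^p + 2 ≤ (B+1)^p := by
          obtain ⟨n, rfl⟩ : ∃ n, p = n + 2 := ⟨p - 2, by have := hp.two_le; omega⟩
          have h6 : B^(n+1) + 1 ≤ (B+1)^(n+1) := by
            have := pow_lt_pow_left₀ (show B < B+1 by omega) (by omega) (show n+1 ≠ 0 by omega)
            omega
          have h7 : 1 ≤ B^(n+1) := one_le_pow₀ hB1
          rw [show n+2 = (n+1)+1 by ring, pow_succ, pow_succ (B+1)]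
          nlinarith
        simp only [add_sub_cancel_right]
        omega
      exact this
    omega
  · subst h0
    simp [hq0] at h
    exact hy h
  · lift a to ℕ using h0.le
    have h1 : (1:ℕ) ≤ a := by exact_mod_cast h0
    have h2 : ((a:ℤ)^q+1)^p ≤ ((a:ℤ)^p+1)^q := by exact_mod_cast cas_ineq1 a p h1 q hpq
    have hlt : y < (a:ℤ)^p + 1 := by
      apply (hqodd.strictMono_pow (R := ℤ)).lt_iff_lt.1
      show y^q < ((a:ℤ)^p+1)^q
      linarith
    have hlt2 : (a:ℤ)^p < y := by
      apply (hqodd.strictMono_pow (R := ℤ)).lt_iff_lt.1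
      show ((a:ℤ)^p)^q < y^q
      have h5 : ((a:ℤ)^p)^q = (a^q)^p := by rw [← pow_mul, ← pow_mul, mul_comm]
      have hB1 : 1 ≤ (a:ℤ)^q := one_le_pow₀ (by omega)
      rw [h5]
      have : ((a:ℤ)^q)^p + 2 ≤ (a^q+1)^p := by
        generalize (a:ℤ)^q = B at hB1
        obtain ⟨n, rfl⟩ : ∃ n, p = n + 2 := ⟨p - 2, by have := hp.two_le; omega⟩
        have h6 : B^(n+1) + 1 ≤ (B+1)^(n+1) := by
          have := pow_lt_pow_left₀ (show B < B+1 by omega) (by omega) (show n+1 ≠ 0 by omega)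
          omega
        have h7 : 1 ≤ B^(n+1) := one_le_pow₀ hB1
        rw [show n+2 = (n+1)+1 by ring, pow_succ, pow_succ (B+1)]
        nlinarith
      linarith
    omega

/-- Lower bound for `|x|`. -/
lemma cas_lower (p q : ℕ) (hp : p.Prime) (hq : q.Prime) (hpodd : Odd p) (hqodd : Odd q)
    (hpq : q < p) (x y : ℤ) (hx : x ≠ 0) (hy : y ≠ 0) (h : x ^ p - y ^ q = 1)
    (hqx : (q : ℤ) ∣ x) : (q:ℤ)^p - q ≤ |x| := by
  have hqZ : Prime (q : ℤ) := Nat.prime_iff_prime_int.mp hq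
  have hq3 : 3 ≤ q := by
    have := hq.two_le
    rcases hqodd with ⟨k, hk⟩; omega
  have hfac : (y+1) * ∑ i ∈ Finset.range q, (1-(y+1))^i = x^p := by
    have := mul_neg_geom_sum (1-(y+1)) q
    rw [show 1 - (1-(y+1)) = y+1 by ring] at this
    rw [this, show 1-(y+1) = -y by ring, hqodd.neg_pow]; linarith
  have hqs : (q:ℤ) ∣ y + 1 := by
    have := Fact.mk hq
    rw [← ZMod.intCast_zmod_eq_zero_iff_dvd (a := y+1)]
    have h1 : ((x^p - y^q : ℤ) : ZMod q) = 1 := by rw [h]; simp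
    have h2 : (x : ZMod q) = 0 := (ZMod.intCast_zmod_eq_zero_iff_dvd _ _).2 hqx
    push_cast at h1 ⊢
    rw [ZMod.pow_card, h2, zero_pow hp.ne_zero] at h1
    linear_combination -h1
  obtain ⟨k, hk⟩ := cas_geom2 (y+1) q
  obtain ⟨w, hw⟩ := hqs
  obtain ⟨g, hg⟩ := hqodd
  set T := ∑ i ∈ Finset.range q, (1-(y+1))^i with hT
  set s := y + 1 with hs
  have hT2 : T = q * (1 - s * (g - w * k)) := by
    have hg' : (q:ℤ) = 2*g+1 := by exact_mod_cast hg
    have : 2 * T = 2 * (q * (1 - s * (g - w * k))) := by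
      rw [hk]
      have : (q:ℤ)*(q-1)*s = q*(2*g)*s := by rw [hg']; ring
      rw [this]
      linear_combination (2*s*k)*hw
    linarith
  obtain ⟨T', hT'⟩ : ∃ T', T' = 1 - s * (g - w * k) := ⟨_, rfl⟩
  rw [← hT'] at hT2
  obtain ⟨x', rfl⟩ := hqx
  have hq0 : (q:ℤ) ≠ 0 := by exact_mod_cast hq.ne_zero
  obtain ⟨n, rfl⟩ : ∃ n, p = n + 1 := ⟨p - 1, by have := hp.two_le; omega⟩
  have h1 : s * T' = q^n * x'^(n+1) := by
    apply mul_left_cancel₀ hq0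
    rw [hT2, mul_pow] at hfac
    linear_combination hfac
  have hcop : IsCoprime s T' := by
    refine ⟨g - w*k, 1, ?_⟩
    rw [hT']; ring
  have hcopq : IsCoprime ((q:ℤ)^n) T' := by
    apply IsCoprime.pow_left
    exact hcop.of_isCoprime_of_dvd_left ⟨w, hw⟩
  obtain ⟨Y, hY⟩ : (q:ℤ)^n ∣ s := hcopq.dvd_of_dvd_mul_right ⟨_, h1⟩
  have hqn0 : (q:ℤ)^n ≠ 0 := pow_ne_zero _ hq0
  have h2 : Y * T' = x'^(n+1) := by
    apply mul_left_cancel₀ hqn0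
    rw [← h1, hY]; ring
  have hcop2 : IsCoprime Y T' := hcop.of_isCoprime_of_dvd_left ⟨(q:ℤ)^n, by rw [hY]; ring⟩
  obtain ⟨u, hu⟩ := Int.eq_pow_of_mul_eq_pow_odd_right hcop2 hpodd h2
  have hx' : x' ≠ 0 := by rintro rfl; simp at hx
  -- u ≡ 1 mod q^n
  have hu1 : (q:ℤ)^n ∣ u - 1 := by
    have e1 : ((u : ZMod (q^n)))^(n+1) = 1 := by
      have : ((q^n : ℕ) : ℤ) ∣ u^(n+1) - 1 := by
        rw [← hu, hT', hY]; push_cast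
        exact ⟨-(Y * (g - w * k)), by ring⟩
      have := (ZMod.intCast_zmod_eq_zero_iff_dvd _ _).2 this
      push_cast at this
      linear_combination this
    have e2 : ((u : ZMod (q^n)))^(Nat.totient (q^n)) = 1 := by
      obtain ⟨v, hv⟩ : IsUnit (u : ZMod (q^n)) := IsUnit.of_pow_eq_one e1 (by omega)
      rw [← hv, ← Units.val_pow_eq_pow_val, ZMod.pow_totient]; simp
    have e3 := pow_gcd_eq_one.2 ⟨e1, e2⟩
    have e4 : Nat.gcd (n+1) (Nat.totient (q^n)) = 1 := by
      rw [Nat.totient_prime_pow hq (by omega)]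
      apply Nat.Coprime.mul_right
      · apply Nat.Coprime.pow_right
        exact (Nat.coprime_primes hp hq).2 (by omega)
      · exact (Nat.Prime.coprime_iff_not_dvd hp).2 (fun hd => by
          have := Nat.le_of_dvd (by omega) hd; omega)
    rw [e4, pow_one] at e3
    have : ((q^n : ℕ) : ℤ) ∣ u - 1 := by
      rw [← ZMod.intCast_zmod_eq_zero_iff_dvd]
      push_cast; rw [e3]; ring
    exact_mod_cast this
  have hqn : (q:ℤ)*q ≤ q^n := by
    rw [← pow_two]
    exact pow_le_pow_right₀ (by omega) (by omega)
  have hs0 : s ≠ 0 := by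
    intro h0; rw [h0, zero_mul] at hfac
    exact pow_ne_zero _ hx hfac.symm
  have hune : u ≠ 1 := by
    rintro rfl
    rw [one_pow] at hu
    rw [hu, mul_one] at hT2
    rw [hT2, ← sub_eq_zero] at hfac
    have h3 : y^q + 1 = (y+1)*q := by
      have : (q * x')^(n+1) = y^q+1 := by linarith
      rw [this] at hfac
      linarith
    have hyd : y ∣ (q:ℤ) - 1 := by
      refine ⟨y^(q-1) - q, ?_⟩
      have : y^q = y * y^(q-1) := by rw [← pow_succ']; congr 1; omega
      rw [mul_sub, ← this]; linarith
    have h4 := Int.le_of_dvd (by omega) ((abs_dvd _ _).2 hyd)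
    have h5 : (q:ℤ)^n ≤ |s| := Int.le_of_dvd (abs_pos.2 hs0) ((dvd_abs _ _).2 ⟨_, hY⟩)
    have h6 : |s| ≤ |y| + 1 := by
      have := abs_add_le y 1; simpa [hs] using this
    have : (3:ℤ) * q ≤ q * q := by
      apply mul_le_mul_of_nonneg_right <;> omega
    omega
  have h7 : (q:ℤ)^n ≤ |u-1| := Int.le_of_dvd (abs_pos.2 (sub_ne_zero.2 hune)) ((dvd_abs _ _).2 hu1)
  have h8 : |u - 1| ≤ |u| + 1 := by
    have := abs_sub u 1; simpa using this
  have h9 : |u| ≤ |x'| := by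
    have : u ∣ x' := by
      rw [← Int.pow_dvd_pow_iff (n := n+1) (by omega)]
      exact ⟨Y, by rw [← h2, hu]; ring⟩
    exact Int.le_of_dvd (abs_pos.2 hx') ((abs_dvd_abs _ _).2 this)
  rw [abs_mul, abs_of_nonneg (show (0:ℤ) ≤ q by omega), pow_succ]
  nlinarith

noncomputable def casC (α : ℝ) (j : ℕ) : ℝ := (∏ i ∈ Finset.range j, (α - i)) / (j.factorial : ℝ)

lemma casC_succ (α : ℝ) (j : ℕ) : casC α (j+1) * (j+1) = α * casC (α-1) j := by
  unfold casC
  rw [Finset.prod_range_succ', Nat.factorial_succ]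
  push_cast
  have : (j.factorial : ℝ) ≠ 0 := by exact_mod_cast j.factorial_ne_zero
  have h2 : (j + 1 : ℝ) ≠ 0 := by positivity
  field_simp
  rw [mul_comm]
  congr 1
  · ring
  · apply Finset.prod_congr rfl; intros; ring

lemma cas_taylor (σ : ℝ) (hσ : |σ| = 1) (n : ℕ) : ∀ α : ℝ, (n:ℝ) - 1 ≤ α → α ≤ n →
    ∀ s ∈ Set.Icc (0:ℝ) (1/2),
    ‖(1 + σ * s)^α - ∑ j ∈ Finset.range (n+1), casC α j * (σ*s)^j‖ ≤ 2 * s^(n+1) := by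
  have hpos : ∀ s ∈ Set.Icc (0:ℝ) (1/2), 1/2 ≤ 1 + σ * s := by
    intro s hs
    have h1 : |σ * s| ≤ 1/2 := by rw [abs_mul, hσ, one_mul, abs_of_nonneg hs.1]; exact hs.2
    have := (abs_le.1 h1).1
    linarith
  induction n with
  | zero =>
    intro α h1 h2 s hs
    simp only [CharP.cast_eq_zero] at h1 h2
    have hp := hpos s hs
    simp only [zero_add, Finset.range_one, Finset.sum_singleton, pow_zero, mul_one, pow_one]
    have hc : casC α 0 = 1 := by simp [casC]
    rw [hc, Real.norm_eq_abs]
    have habs : |σ * s| = s := by rw [abs_mul, hσ, one_mul, abs_of_nonneg hs.1]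
    set r := 1 + σ * s with hr
    have hr0 : 0 < r := by linarith
    have hrs : |r - 1| = s := by rw [hr]; simpa using habs
    have hinv : r ^ (-1:ℝ) = 1 / r := by rw [Real.rpow_neg_one, one_div]
    have key : |1/r - 1| ≤ 2 * s := by
      have : 1/r - 1 = -(r-1)/r := by field_simp; ring
      rw [this, abs_div, abs_neg, hrs, abs_of_pos hr0, div_le_iff₀ hr0]
      nlinarith [hs.1]
    rcases le_total r 1 with h | h
    · have a1 : 1 ≤ r^α := Real.one_le_rpow_of_pos_of_le_one_of_nonpos hr0 h h2
      have a2 : r^α ≤ r^(-1:ℝ) := Real.rpow_le_rpow_of_exponent_ge hr0 h (by linarith)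
      rw [hinv] at a2
      rw [abs_of_nonneg (by linarith)]
      have := (abs_le.1 key).2
      linarith
    · have a1 : r^α ≤ 1 := Real.rpow_le_one_of_one_le_of_nonpos h h2
      have a2 : r^(-1:ℝ) ≤ r^α := Real.rpow_le_rpow_of_exponent_le h (by linarith)
      rw [hinv] at a2
      rw [abs_of_nonpos (by linarith)]
      have := (abs_le.1 key).1
      linarith
  | succ n ih =>
    intro α h1 h2
    push_cast at h1 h2
    have hα : 0 ≤ α := by have : (0:ℝ) ≤ n := by positivity
                          linarith
    have ih' := ih (α - 1) (by linarith) (by linarith)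
    have hder : ∀ s ∈ Set.Icc (0:ℝ) (1/2), HasDerivAt
        (fun s => (1 + σ * s)^α - ∑ j ∈ Finset.range (n+1+1), casC α j * (σ*s)^j)
        (σ * α * ((1 + σ * s)^(α-1) - ∑ j ∈ Finset.range (n+1), casC (α-1) j * (σ*s)^j)) s := by
      intro s hs
      have hp := hpos s hs
      have hl : HasDerivAt (fun s : ℝ => σ * s) σ s := by
        simpa using (hasDerivAt_id s).const_mul σ
      have d1 : HasDerivAt (fun s => (1 + σ * s)^α) (σ * α * (1+σ*s)^(α-1)) s :=
        (hl.const_add 1).rpow_const (Or.inl (by linarith))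
      have d2 : HasDerivAt (fun s => ∑ j ∈ Finset.range (n+1+1), casC α j * (σ*s)^j)
          (∑ j ∈ Finset.range (n+1+1), casC α j * ((j:ℝ) * (σ*s)^(j-1) * σ)) s := by
        apply HasDerivAt.fun_sum
        intro j _
        exact (hl.pow j).const_mul _
      refine (d1.fun_sub d2).congr_deriv ?_
      symm
      rw [Finset.sum_range_succ' _ (n+1)]
      simp only [Nat.cast_zero, zero_mul, mul_zero, add_zero, Nat.add_sub_cancel]
      rw [mul_sub, Finset.mul_sum]
      congr 1
      apply Finset.sum_congr rfl
      intro j _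
      have := casC_succ α j
      push_cast
      linear_combination (-(σ * s)^j * σ) * this
    intro s hs
    refine image_norm_le_of_norm_deriv_right_le_deriv_boundary (a := 0) (b := 1/2)
      (f := fun s => (1 + σ * s)^α - ∑ j ∈ Finset.range (n+1+1), casC α j * (σ*s)^j)
      (B := fun s => 2 * s^(n+1+1)) (B' := fun s => 2 * ((n+1+1:ℕ) * s^(n+1)))
      (fun s hs => (hder s hs).continuousAt.continuousWithinAt)
      (fun s hs => (hder s ⟨hs.1, hs.2.le⟩).hasDerivWithinAt) ?_ ?_ ?_ hs
    · rw [Finset.sum_range_succ']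
      simp [casC]
    · intro x
      have := (hasDerivAt_pow (n+1+1) x).const_mul 2
      simpa using this
    · intro s hs
      have := ih' s ⟨hs.1, hs.2.le⟩
      rw [norm_mul, norm_mul, Real.norm_eq_abs σ, hσ, one_mul, Real.norm_eq_abs α, abs_of_nonneg hα]
      have hs0 : 0 ≤ s^(n+1) := pow_nonneg hs.1 _
      push_cast
      calc _ ≤ α * (2 * s^(n+1)) := by gcongr
        _ ≤ ((n:ℝ)+1+1) * (2 * s^(n+1)) := by
          apply mul_le_mul_of_nonneg_right <;> linarith
        _ = _ := by ring

/-- integrality -/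
lemma cas_int (p q j : ℕ) (hq : q.Prime) : ∃ c : ℤ,
    c * (j.factorial : ℤ) = q^(padicValNat q j.factorial) * ∏ i ∈ Finset.range j, ((p:ℤ) - i * q)
    ∧ (¬ q ∣ p → ¬ (q:ℤ) ∣ c) := by
  have := Fact.mk hq
  obtain ⟨N, hN⟩ := pow_padicValNat_dvd (p := q) (n := j.factorial)
  have hNq : Nat.Coprime q N := by
    rw [Nat.Prime.coprime_iff_not_dvd hq]
    rintro ⟨M, rfl⟩
    have := pow_succ_padicValNat_not_dvd (p := q) (n := j.factorial) j.factorial_ne_zero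
    apply this
    exact ⟨M, by rw [pow_succ]; rw [mul_assoc]; exact hN⟩
  have hN0 : N ≠ 0 := by
    rintro rfl
    exact j.factorial_ne_zero (by simpa using hN)
  have hd : (N:ℤ) ∣ ∏ i ∈ Finset.range j, ((p:ℤ) - i * q) := by
    obtain ⟨r, hr⟩ : ∃ r : ℤ, (N:ℤ) ∣ q * r - 1 := by
      have : IsCoprime (q:ℤ) (N:ℤ) := Nat.isCoprime_iff_coprime.2 hNq
      obtain ⟨a, b, hab⟩ := this
      exact ⟨a, -b, by linear_combination hab⟩
    have hrc : IsCoprime (N:ℤ) (r^j) := by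
      apply IsCoprime.pow_right
      obtain ⟨e, he⟩ := hr
      exact ⟨-e, q, by linear_combination he⟩
    apply hrc.dvd_of_dvd_mul_left
    have e1 : r^j * ∏ i ∈ Finset.range j, ((p:ℤ) - i * q) = ∏ i ∈ Finset.range j, (r * ((p:ℤ) - i * q)) := by
      rw [Finset.prod_mul_distrib]; simp
    rw [e1]
    have e2 : (N:ℤ) ∣ ∏ i ∈ Finset.range j, (p * r - i : ℤ) := by
      have h1 : (j.factorial : ℤ) ∣ ∏ i ∈ Finset.range j, (p * r - i : ℤ) := by
        have := Ring.descPochhammer_eq_factorial_smul_choose (p * r : ℤ) j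
        rw [← descPochhammer_eval_eq_prod_range]
        refine ⟨Ring.choose (p*r:ℤ) j, ?_⟩
        simpa [Polynomial.eval_eq_smeval] using this
      exact (by rw [hN]; push_cast; exact dvd_mul_left _ _ : (N:ℤ) ∣ (j.factorial:ℤ)).trans h1
    have e3 : (∏ i ∈ Finset.range j, (r * ((p:ℤ) - i * q))) ≡ ∏ i ∈ Finset.range j, (p * r - i : ℤ) [ZMOD N] := by
      apply Int.ModEq.prod
      intro i _
      apply Int.ModEq.symm
      rw [Int.modEq_iff_dvd]
      exact (hr.mul_left (-i)).trans (dvd_of_eq (by ring))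
    exact (Int.ModEq.dvd_iff e3).2 e2
  obtain ⟨c, hc⟩ := hd
  refine ⟨c, ?_, ?_⟩
  swap
  · intro hqp hqc
    have h1 : (q:ℤ) ∣ ∏ i ∈ Finset.range j, ((p:ℤ) - i * q) := hc ▸ hqc.mul_left _
    obtain ⟨i, _, hi⟩ := ((Nat.prime_iff_prime_int.mp hq).dvd_finsetProd_iff _).1 h1
    have h2 : (q:ℤ) ∣ p := (dvd_sub_left (dvd_mul_left _ _)).1 hi
    exact hqp (by exact_mod_cast h2)
  rw [hc]
  conv_lhs => rw [hN]
  push_cast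
  ring

lemma cas_coef (p q j : ℕ) (hq : q.Prime) (c : ℤ)
    (hc : c * (j.factorial : ℤ) = q^(padicValNat q j.factorial) * ∏ i ∈ Finset.range j, ((p:ℤ) - i * q)) :
    (q:ℝ)^(j + padicValNat q j.factorial) * casC ((p:ℝ)/q) j = c := by
  have hq0 : (q:ℝ) ≠ 0 := by exact_mod_cast hq.ne_zero
  have hf : (j.factorial : ℝ) ≠ 0 := by exact_mod_cast j.factorial_ne_zero
  unfold casC
  rw [← mul_div_assoc, div_eq_iff hf]
  have hc' : (c:ℝ) * (j.factorial : ℝ) = q^(padicValNat q j.factorial) * ∏ i ∈ Finset.range j, ((p:ℝ) - i * q) := by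
    exact_mod_cast hc
  rw [hc', pow_add, mul_comm ((q:ℝ)^j), mul_assoc]
  congr 1
  have : (q:ℝ)^j = ∏ i ∈ Finset.range j, (q:ℝ) := by simp
  rw [this, ← Finset.prod_mul_distrib]
  apply Finset.prod_congr rfl
  intro i _
  field_simp

lemma cas_root (u v : ℝ) (hu : 0 ≤ u) (hv : 0 ≤ v) (n : ℕ) :
    |u - v| * v^n ≤ |u^(n+1) - v^(n+1)| := by
  rcases le_total u v with h | h
  · have h1 : u^n ≤ v^n := pow_le_pow_left₀ hu h n
    have h2 : u^(n+1) ≤ v^(n+1) := pow_le_pow_left₀ hu h _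
    rw [abs_of_nonpos (by linarith), abs_of_nonpos (by linarith), pow_succ, pow_succ]
    nlinarith
  · have h1 : v^n ≤ u^n := pow_le_pow_left₀ hv h n
    have h2 : v^(n+1) ≤ u^(n+1) := pow_le_pow_left₀ hv h _
    rw [abs_of_nonneg (by linarith), abs_of_nonneg (by linarith), pow_succ, pow_succ]
    nlinarith

/-- analytic estimate -/
lemma cas_est (p q m : ℕ) (hq0 : 0 < q) (hqodd : Odd q) (hm1 : (m:ℝ) - 1 ≤ (p:ℝ)/q)
    (hm2 : (p:ℝ)/q ≤ m) (hmp : m + 1 ≤ p) (σ s u : ℝ) (hσ : |σ| = 1) (hs0 : 0 < s)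
    (hs : s ≤ 1/4) (hps : p * s ≤ 1/4)
    (hu : u^q = (1+σ*s)^p - (σ*s)^p) :
    |u - ∑ j ∈ Finset.range (m+1), casC ((p:ℝ)/q) j * (σ*s)^j| ≤ 4 * s^(m+1) := by
  have hT := cas_taylor σ hσ m _ hm1 hm2 s ⟨hs0.le, by linarith⟩
  rw [Real.norm_eq_abs] at hT
  have habs : |σ * s| = s := by rw [abs_mul, hσ, one_mul, abs_of_pos hs0]
  have hle := abs_le.1 habs.le
  set t := σ * s with ht
  have ht0 : 0 < 1 + t := by linarith
  have hqr : (q:ℝ) ≠ 0 := by exact_mod_cast hq0.ne'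
  obtain ⟨v, hv⟩ : ∃ v, v = (1+t)^((p:ℝ)/q) := ⟨_, rfl⟩
  rw [← hv] at hT
  have hv0 : 0 < v := hv ▸ Real.rpow_pos_of_pos ht0 _
  have hvq : v^q = (1+t)^p := by
    rw [hv, ← Real.rpow_natCast, ← Real.rpow_mul ht0.le, div_mul_cancel₀ _ hqr, Real.rpow_natCast]
  have hber : 1/2 ≤ (1+t)^p := by
    have := one_add_mul_le_pow (show (-2:ℝ) ≤ t by linarith) p
    have h2 : -(p * s) ≤ p * t := by
      have : (0:ℝ) ≤ p := by positivity
      nlinarith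
    linarith
  have htp : |t^p| ≤ s^(m+1) := by
    rw [abs_pow, habs]
    exact pow_le_pow_of_le_one hs0.le (by linarith) hmp
  have htp2 : s^(m+1) ≤ 1/4 := by
    calc s^(m+1) ≤ s^1 := pow_le_pow_of_le_one hs0.le (by linarith) (by omega)
      _ ≤ 1/4 := by simpa using hs
  have hu0 : 0 < u := by
    apply hqodd.pow_pos_iff.1
    rw [hu]
    have := (abs_le.1 htp).2
    linarith
  obtain ⟨n, rfl⟩ : ∃ n, q = n + 1 := ⟨q - 1, by omega⟩
  have hr := cas_root u v hu0.le hv0.le n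
  rw [hvq, hu] at hr
  have hvn : 1/2 ≤ v^n := by
    rcases le_total 1 v with h | h
    · have := one_le_pow₀ h (n := n); linarith
    · calc 1/2 ≤ v^(n+1) := by rw [hvq]; exact hber
        _ ≤ v^n := pow_le_pow_of_le_one hv0.le h (by omega)
  have hr2 : |u - v| * (1/2) ≤ s^(m+1) := by
    calc _ ≤ |u - v| * v^n := by gcongr
      _ ≤ _ := hr
      _ = |t^p| := by rw [← abs_neg]; congr 1; ring
      _ ≤ _ := htp
  have := abs_sub_le u v (∑ j ∈ Finset.range (m+1), casC ((p:ℝ)/(n+1:ℕ)) j * t^j)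
  linarith

lemma cas_hard (p q : ℕ) (hp : p.Prime) (hq : q.Prime) (hpodd : Odd p) (hqodd : Odd q)
    (hpq : q < p) (x y : ℤ) (hx : x ≠ 0) (hy : y ≠ 0) (h : x ^ p - y ^ q = 1) : (p : ℤ) ∣ y := by
  by_contra hpy
  have hqx : (q:ℤ) ∣ x := by
    have := cas_easy q p hq hqodd hpodd hpq.le (-y) (-x) (by simpa) (by simpa)
      (by rw [hpodd.neg_pow, hqodd.neg_pow]; linarith)
    simpa using this
  have hlow := cas_lower p q hp hq hpodd hqodd hpq x y hx hy h hqx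
  obtain ⟨a, ha⟩ := cas_pow p q hp hqodd x y h hpy
  have : Fact q.Prime := ⟨hq⟩
  have hq3 : 3 ≤ q := by
    have := hq.two_le
    rcases hqodd with ⟨k, hk⟩; omega
  have hp5 : 5 ≤ p := by
    rcases hqodd with ⟨k, hk⟩; rcases hpodd with ⟨l, hl⟩; omega
  have hqp : ¬ q ∣ p := fun hd => by
    have := (Nat.prime_dvd_prime_iff_eq hq hp).1 hd; omega
  obtain ⟨m, hm⟩ : ∃ m, m = p / q + 1 := ⟨_, rfl⟩
  have hmq1 : p / q * q < p := by
    have h1 := Nat.div_mul_le_self p q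
    rcases h1.lt_or_eq with h2 | h2
    · exact h2
    · exact absurd ⟨p/q, by rw [mul_comm]; exact h2.symm⟩ hqp
  have hmq2 : p < m * q := by
    rw [hm, mul_comm]; exact Nat.lt_mul_div_succ p hq.pos
  have hm3 : 3 * m ≤ p + 2 := by
    have : p / q * 3 ≤ p / q * q := Nat.mul_le_mul_left _ hq3
    omega
  obtain ⟨v, hv⟩ : ∃ v : ℕ → ℕ, v = fun j => padicValNat q j.factorial := ⟨_, rfl⟩
  have hv2 : 2 * v m ≤ m := by
    have h1 := sub_one_mul_padicValNat_factorial (p := q) m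
    have h2 : 2 * padicValNat q m.factorial ≤ (q-1) * padicValNat q m.factorial :=
      Nat.mul_le_mul_right _ (by omega)
    rw [hv]; dsimp only; omega
  have hmv : m + v m ≤ p - 2 := by
    rcases hpodd with ⟨l, hl⟩; omega
  have hvmono : ∀ j ≤ m, v j ≤ v m := by
    intro j hj
    rw [hv]; dsimp only
    exact (padicValNat_dvd_iff_le m.factorial_ne_zero).1
      (pow_padicValNat_dvd.trans (Nat.factorial_dvd_factorial hj))
  have hex := fun j => cas_int p q j hq
  choose C hC1 hC2 using hex
  have hC3 : ∀ j, (q:ℝ)^(j + v j) * casC ((p:ℝ)/q) j = C j := fun j => by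
    rw [hv]; exact cas_coef p q j hq (C j) (hC1 j)
  -- the integer
  obtain ⟨Z, hZ⟩ : ∃ Z : ℤ, Z = (q:ℤ)^(m + v m) * (a^(m*q-p) * y) -
    ∑ j ∈ Finset.range (m+1), (q:ℤ)^((m-j) + (v m - v j)) * C j * (a^q)^(m-j) := ⟨_, rfl⟩
  have hZ0 : Z ≠ 0 := by
    intro h0
    rw [h0, Finset.sum_range_succ] at hZ
    have d1 : (q:ℤ) ∣ (q:ℤ)^(m + v m) * (a^(m*q-p) * y) :=
      (dvd_pow_self _ (show m + v m ≠ 0 by rw [hm]; exact Nat.ne_of_gt (by positivity))).mul_right _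
    have d2 : (q:ℤ) ∣ ∑ j ∈ Finset.range m, (q:ℤ)^((m-j) + (v m - v j)) * C j * (a^q)^(m-j) := by
      apply Finset.dvd_sum
      intro j hj
      have := Finset.mem_range.1 hj
      exact ((dvd_pow_self _ (by omega)).mul_right _).mul_right _
    simp only [Nat.sub_self, pow_zero, add_zero, one_mul, mul_one] at hZ
    apply hC2 m hqp
    have : C m = (q:ℤ)^(m + v m) * (a^(m*q-p) * y) - ∑ j ∈ Finset.range m, (q:ℤ)^((m-j) + (v m - v j)) * C j * (a^q)^(m-j) := by
      linarith
    rw [this]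
    exact dvd_sub d1 d2
  -- size of a^q
  have hAlow : 8 * (q:ℤ)^(p-2) ≤ |a^q| := by
    rw [← ha]
    have h1 : |x| ≤ |x-1| + 1 := by
      have := abs_add_le (x-1) 1; simpa using this
    have h2 : (q:ℤ)^p = q^(p-2) * (q*q) := by
      rw [← pow_two, ← pow_add]; congr 1; omega
    have h3 : (q:ℤ)*q ≤ q^(p-2) := by
      rw [← pow_two]
      exact pow_le_pow_right₀ (by omega) (by omega)
    have h4 : (9:ℤ) ≤ q * q := by nlinarith
    have h5 : (3:ℤ)*q ≤ q*q := by nlinarith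
    nlinarith
  have hqp2 : (1:ℤ) ≤ q^(p-2) := one_le_pow₀ (by omega)
  have haq0 : a^q ≠ 0 := by
    intro h0; rw [h0, abs_zero] at hAlow; omega
  have ha0 : a ≠ 0 := by rintro rfl; exact haq0 (zero_pow hq.ne_zero)
  have haR : (a:ℝ) ≠ 0 := by exact_mod_cast ha0
  obtain ⟨A, hA⟩ : ∃ A : ℝ, A = (a:ℝ)^q := ⟨_, rfl⟩
  have hA0 : A ≠ 0 := hA ▸ pow_ne_zero _ haR
  have hAabs : 8 * (q:ℝ)^(p-2) ≤ |A| := by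
    rw [hA]; exact_mod_cast hAlow
  have hApos : 0 < |A| := abs_pos.2 hA0
  have hQ1 : (1:ℝ) ≤ (q:ℝ)^(p-2) := by exact_mod_cast hqp2
  have hpQ : (p:ℝ) ≤ 2 * (q:ℝ)^(p-2) := by
    have h1 : p - 2 < q^(p-2) := Nat.lt_pow_self (by omega)
    have h2 : p ≤ 2 * q^(p-2) := by omega
    exact_mod_cast h2
  have hσs : |A|/A * (1/|A|) = 1/A := by field_simp
  have hxR : (x:ℝ) = A + 1 := by
    have : (x:ℝ) - 1 = A := by rw [hA]; exact_mod_cast ha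
    linarith
  have hyq : (y:ℝ)^q = (A+1)^p - 1 := by
    rw [← hxR]
    have : (x:ℝ)^p - (y:ℝ)^q = 1 := by exact_mod_cast h
    linarith
  have hqR : (0:ℝ) < q := by exact_mod_cast hq.pos
  have est := cas_est p q m hq.pos hqodd
    (by rw [le_div_iff₀ hqR, hm]; push_cast; rw [add_sub_cancel_right]; exact_mod_cast hmq1.le)
    (by rw [div_le_iff₀ hqR]; exact_mod_cast hmq2.le)
    (by omega) (|A|/A) (1/|A|) ((y:ℝ)/(a:ℝ)^p)
    (by rw [abs_div, abs_abs, div_self hApos.ne'])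
    (by positivity)
    (by rw [div_le_div_iff₀ hApos (by norm_num)]; linarith)
    (by rw [mul_one_div, div_le_div_iff₀ hApos (by norm_num)]; linarith)
    (by
      rw [hσs, div_pow, hyq, ← pow_mul, mul_comm p q, pow_mul, ← hA]
      rw [one_div, inv_pow, show 1 + A⁻¹ = (A+1)/A by field_simp, div_pow, sub_div, one_div])
  rw [hσs] at est
  have hZR : (Z:ℝ) = (q:ℝ)^(m + v m) * A^m * ((y:ℝ)/(a:ℝ)^p -
      ∑ j ∈ Finset.range (m+1), casC ((p:ℝ)/q) j * (1/A)^j) := by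
    rw [hZ, mul_sub, Finset.mul_sum]
    push_cast
    congr 1
    · have : A^m = (a:ℝ)^(m*q-p) * (a:ℝ)^p := by
        rw [hA, ← pow_mul, ← pow_add]; congr 1
        rw [mul_comm q m]; omega
      rw [this]; field_simp
    · apply Finset.sum_congr rfl
      intro j hj
      have hj' : j ≤ m := by have := Finset.mem_range.1 hj; omega
      have hvj := hvmono j hj'
      rw [← hC3 j, ← hA]
      have e1 : (q:ℝ)^(m + v m) = (q:ℝ)^((m-j) + (v m - v j)) * (q:ℝ)^(j + v j) := by
        rw [← pow_add]; congr 1; omega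
      have e2 : A^m = A^(m-j) * A^j := by rw [← pow_add]; congr 1; omega
      rw [e1, e2, one_div, inv_pow]
      field_simp
  have hZ1 : (1:ℝ) ≤ |(Z:ℝ)| := by exact_mod_cast Int.one_le_abs hZ0
  have hD : (q:ℝ)^(m + v m) ≤ (q:ℝ)^(p-2) :=
    pow_le_pow_right₀ (by exact_mod_cast hq.one_lt.le) hmv
  rw [hZR, abs_mul, abs_mul, abs_pow A, abs_of_nonneg (by positivity)] at hZ1
  have : (q:ℝ)^(m + v m) * |A|^m * (4 * (1/|A|)^(m+1)) = 4 * (q:ℝ)^(m+v m) / |A| := by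
    rw [one_div, inv_pow, pow_succ]; field_simp
  have h2 : 1 ≤ 4 * (q:ℝ)^(m+v m) / |A| := by
    rw [← this]
    refine hZ1.trans ?_
    gcongr
  rw [le_div_iff₀ hApos] at h2
  linarith

lemma cas_all (p q : ℕ) (hp : p.Prime) (hq : q.Prime) (hpodd : Odd p) (hqodd : Odd q)
    (x y : ℤ) (hx : x ≠ 0) (hy : y ≠ 0) (h : x ^ p - y ^ q = 1) : (p : ℤ) ∣ y := by
  rcases le_or_gt p q with h1 | h1
  · exact cas_easy p q hp hpodd hqodd h1 x y hx hy h
  · exact cas_hard p q hp hq hpodd hqodd h1 x y hx hy h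

/-- Cassels' theorem (1953, 1961): if `p, q` are odd primes, `ε = ±1`, and `x, y` are
positive integers with `x ^ p - y ^ q = ε`, then `q ∣ x` and `p ∣ y`. -/
theorem cassels (p q : ℕ) (hp : p.Prime) (hq : q.Prime) (hpodd : Odd p) (hqodd : Odd q)
    (ε : ℤ) (hε : ε = 1 ∨ ε = -1) (x y : ℤ) (hx : 0 < x) (hy : 0 < y)
    (h : x ^ p - y ^ q = ε) :
    (q : ℤ) ∣ x ∧ (p : ℤ) ∣ y := by
  have hx' : x ≠ 0 := hx.ne'
  have hy' : y ≠ 0 := hy.ne'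
  have hnx : -x ≠ 0 := neg_ne_zero.2 hx'
  have hny : -y ≠ 0 := neg_ne_zero.2 hy'
  rcases hε with rfl | rfl
  · refine ⟨?_, cas_all p q hp hq hpodd hqodd x y hx' hy' h⟩
    have := cas_all q p hq hp hqodd hpodd (-y) (-x) hny hnx
      (by rw [hpodd.neg_pow, hqodd.neg_pow]; linarith)
    simpa using this
  · refine ⟨cas_all q p hq hp hqodd hpodd y x hy' hx' (by linarith), ?_⟩
    have := cas_all p q hp hq hpodd hqodd (-x) (-y) hnx hny
      (by rw [hpodd.neg_pow, hqodd.neg_pow]; linarith)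
    simpa using this
end

section
/- Let p and q be distinct odd primes with p ≤ 43 or q ≤ 43. Then there are no nonzero integers x, y with x^p − y^q = 1. -/
open NumberField
open scoped Pointwise
namespace Mih
section basics
variable {p : ℕ} [hp : Fact p.Prime] {K : Type*} [Field K] [NumberField K]
  [hK : IsCyclotomicExtension {p} ℚ K]

variable (K) in
/-- The automorphism `ζ ↦ ζ ^ a`. -/
noncomputable def sg (a : (ZMod p)ˣ) : Gal(K/ℚ) :=
  (IsCyclotomicExtension.Rat.galEquivZMod p K).symm a

lemma sg_mul (a b : (ZMod p)ˣ) : sg K (a * b) = sg K a * sg K b := map_mul _ _ _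
lemma sg_one : sg K (1 : (ZMod p)ˣ) = 1 := map_one _
lemma sg_inv (a : (ZMod p)ˣ) : sg K a⁻¹ = (sg K a)⁻¹ := map_inv _ _

lemma sg_smul_smul (a b : (ZMod p)ˣ) (z : 𝓞 K) : sg K a • sg K b • z = sg K (a * b) • z := by
  rw [sg_mul, mul_smul]

lemma sg_root (a : (ZMod p)ˣ) {x : 𝓞 K} (hx : x ^ p = 1) :
    sg K a • x = x ^ (a : ZMod p).val := by
  have := IsCyclotomicExtension.Rat.galEquivZMod_smul_of_pow_eq p K (sg K a) hx
  rw [this, sg, MulEquiv.apply_symm_apply]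

lemma sg_root_field (a : (ZMod p)ˣ) {x : K} (hx : x ^ p = 1) :
    sg K a x = x ^ (a : ZMod p).val := by
  have := IsCyclotomicExtension.Rat.galEquivZMod_apply_of_pow_eq p K (sg K a) hx
  rw [this, sg, MulEquiv.apply_symm_apply]

lemma coe_smul (g : Gal(K/ℚ)) (z : 𝓞 K) : ((g • z : 𝓞 K) : K) = g (z : K) := rfl

lemma sg_int (a : (ZMod p)ˣ) (n : ℤ) : sg K a • (n : 𝓞 K) = n := by
  apply RingOfIntegers.ext
  rw [coe_smul]; simp

lemma sg_nat (a : (ZMod p)ˣ) (n : ℕ) : sg K a • (n : 𝓞 K) = n := by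
  exact_mod_cast sg_int a (n : ℤ)

lemma norm_eq (z : 𝓞 K) :
    ∏ a : (ZMod p)ˣ, sg K a • z = ((Algebra.norm ℤ z : ℤ) : 𝓞 K) := by
  have : IsGalois ℚ K := IsCyclotomicExtension.isGalois {p} ℚ K
  apply RingOfIntegers.ext
  have h1 := Algebra.norm_eq_prod_automorphisms ℚ (z : K)
  have h2 := Algebra.coe_norm_int z
  have h3 : (((Algebra.norm ℤ z : ℤ) : 𝓞 K) : K) = algebraMap ℚ K (Algebra.norm ℚ (z : K)) := by
    rw [← h2]; simp
  rw [h3, h1, RingOfIntegers.coe_eq_algebraMap, map_prod]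
  exact Fintype.prod_equiv (IsCyclotomicExtension.Rat.galEquivZMod p K).symm.toEquiv _ _
    (fun a => rfl)

lemma norm_abs (z : 𝓞 K) : |((Algebra.norm ℤ z : ℤ) : ℝ)| = ∏ φ : K →+* ℂ, ‖φ (z : K)‖ := by
  have h1 := Algebra.norm_eq_prod_embeddings ℚ ℂ (z : K)
  rw [← Algebra.coe_norm_int z] at h1
  have h2 := congrArg norm h1
  rw [norm_prod] at h2
  have h3 : ‖(algebraMap ℚ ℂ) ((Algebra.norm ℤ z : ℤ) : ℚ)‖ = |((Algebra.norm ℤ z : ℤ) : ℝ)| := by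
    simp
  rw [← h3, h2]
  exact (Fintype.prod_equiv (RingHom.equivRatAlgHom K ℂ) _ _ (fun a => rfl)).symm

lemma conj_sg (φ : K →+* ℂ) (z : K) :
    φ (sg K (-1 : (ZMod p)ˣ) z) = (starRingEnd ℂ) (φ z) := by
  have hζ := IsCyclotomicExtension.zeta_spec p ℚ K
  have h : (RingHom.toRatAlgHom (φ.comp (sg K (-1 : (ZMod p)ˣ) : K →+* K))) =
      RingHom.toRatAlgHom ((starRingEnd ℂ).comp φ) := by
    apply (hζ.powerBasis ℚ).algHom_ext
    simp only [IsPrimitiveRoot.powerBasis_gen]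
    change φ (sg K (-1 : (ZMod p)ˣ) _) = (starRingEnd ℂ) (φ _)
    rw [sg_root_field _ hζ.pow_eq_one]
    set ζ := IsCyclotomicExtension.zeta p ℚ K
    have h1 : ζ ^ ((-1 : (ZMod p)ˣ) : ZMod p).val * ζ = 1 := by
      rw [← pow_succ]
      have : p ∣ ((-1 : (ZMod p)ˣ) : ZMod p).val + 1 := by
        rw [← ZMod.natCast_eq_zero_iff]; simp
      exact (hζ.pow_eq_one_iff_dvd _).2 this
    have hn : ‖φ ζ‖ = 1 := by
      apply Complex.norm_eq_one_of_pow_eq_one (n := p) _ hp.out.ne_zero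
      rw [← map_pow, hζ.pow_eq_one, map_one]
    have h2 : (starRingEnd ℂ) (φ ζ) * φ ζ = 1 := by
      rw [mul_comm, Complex.mul_conj, Complex.normSq_eq_norm_sq, hn]; simp
    have h3 : φ ζ ≠ 0 := by intro h; rw [h] at hn; simp at hn
    apply mul_right_cancel₀ h3
    rw [h2, ← map_mul, h1, map_one]
  have := congrArg (fun f => f z) h
  exact this

lemma conj_sg' (φ : K →+* ℂ) (z : 𝓞 K) :
    φ ((sg K (-1 : (ZMod p)ˣ) • z : 𝓞 K) : K) = (starRingEnd ℂ) (φ (z : K)) := by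
  rw [coe_smul, conj_sg]

lemma norm_sg (a : (ZMod p)ˣ) (z : 𝓞 K) : Algebra.norm ℤ (sg K a • z) = Algebra.norm ℤ z := by
  have h := norm_eq (p := p) (sg K a • z)
  rw [← Int.cast_inj (α := 𝓞 K), ← h, ← norm_eq (p := p) z]
  simp_rw [sg_smul_smul]
  exact Fintype.prod_equiv (Equiv.mulRight a) _ _ (fun b => rfl)

lemma finrank_eq : Module.finrank ℚ K = p - 1 := by
  rw [IsCyclotomicExtension.finrank (n := p) K (Polynomial.cyclotomic.irreducible_rat hp.out.pos),
    Nat.totient_prime hp.out]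

lemma absNorm_sg (a : (ZMod p)ˣ) (I : Ideal (𝓞 K)) :
    Ideal.absNorm (sg K a • I) = Ideal.absNorm I := by
  have : sg K a • I = I.map (MulSemiringAction.toRingEquiv _ (𝓞 K) (sg K a)) := by
    rw [Ideal.pointwise_smul_def]; rfl
  rw [this]
  simp only [Ideal.absNorm_apply, Submodule.cardQuot_apply]
  exact (Nat.card_congr (Ideal.quotientEquiv I _ _ rfl).toEquiv).symm

end basics
end Mih

open NumberField
open scoped Pointwise
namespace Mih
section char
lemma sum_pow_mul (F : Type*) [Field F] [Fintype F] (A B : ℕ) (h : A + B < Fintype.card F - 1) :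
    ∑ z : F, z ^ A * (1 - z) ^ B = 0 := by
  have : ∀ z : F, z ^ A * (1 - z) ^ B =
      ∑ j ∈ Finset.range (B + 1), ((-1) ^ j * (B.choose j : F)) * z ^ (A + j) := by
    intro z
    rw [show (1 - z) = (-z) + 1 by ring, add_pow, Finset.mul_sum]
    apply Finset.sum_congr rfl
    intro j _
    rw [neg_pow]; ring
  simp_rw [this]
  rw [Finset.sum_comm]
  apply Finset.sum_eq_zero
  intro j hj
  rw [← Finset.mul_sum, FiniteField.sum_pow_lt_card_sub_one, mul_zero]
  have := Finset.mem_range.1 hj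
  omega

lemma exists_char {p : ℕ} (hp : p.Prime) {R F : Type*} [CommRing R] [IsDomain R] [Field F]
    [Fintype F] (π : R →+* F) (ζ : R) (hζ : ζ ^ p = 1) (h1 : π ζ ≠ 1) :
    ∃ (χ : MulChar F R) (m : ℕ), p * m = Fintype.card F - 1 ∧ χ ^ p = 1 ∧
      (∀ z, π (χ z) = z ^ m) ∧ (∀ j, χ ^ j = 1 → p ∣ j) := by
  classical
  have hprim : IsPrimitiveRoot (π ζ) p := by
    have : orderOf (π ζ) = p := by
      have : Fact p.Prime := ⟨hp⟩
      exact orderOf_eq_prime (by rw [← map_pow, hζ, map_one]) h1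
    rw [← this]; exact IsPrimitiveRoot.orderOf _
  have hne : π ζ ≠ 0 := hprim.ne_zero hp.ne_zero
  have hcard : Fintype.card Fˣ = Fintype.card F - 1 := Fintype.card_units F
  have hcpos : 0 < Fintype.card Fˣ := Fintype.card_pos
  obtain ⟨m, hm⟩ : p ∣ Fintype.card Fˣ := by
    have := orderOf_dvd_card (x := Units.mk0 (π ζ) hne)
    rwa [← orderOf_units, Units.val_mk0, ← hprim.eq_orderOf] at this
  obtain ⟨g, hg⟩ := IsCyclic.exists_generator (α := Fˣ)
  have hgo : orderOf g = Fintype.card Fˣ := by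
    rw [orderOf_eq_card_of_forall_mem_zpowers hg, Nat.card_eq_fintype_card]
  have hgm : ((g : F) ^ m) ^ p = 1 := by
    rw [← pow_mul, mul_comm, ← hm, ← Units.val_pow_eq_pow_val, pow_card_eq_one, Units.val_one]
  have : NeZero p := ⟨hp.ne_zero⟩
  obtain ⟨i, hi, hgi⟩ := hprim.eq_pow_of_pow_eq_one hgm
  let zu : Rˣ := Units.mkOfMulEqOne ζ (ζ ^ (p - 1)) (by
    rw [← pow_succ', Nat.sub_add_cancel hp.one_le, hζ])
  have hzu : zu ^ p = 1 := by ext; simp [zu, hζ]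
  have hμ : zu ^ i ∈ rootsOfUnity (Fintype.card Fˣ) R := by
    rw [mem_rootsOfUnity, hm, ← pow_mul, mul_comm, mul_assoc, pow_mul, hzu, one_pow]
  let χ := MulChar.ofRootOfUnity hμ hg
  have hχg : χ g = ζ ^ i := by
    rw [MulChar.ofRootOfUnity_spec hμ hg]; simp [zu]
  have hmpos : m ≠ 0 := by rintro rfl; omega
  have key : ∀ z, π (χ z) = z ^ m := by
    intro z
    by_cases hz : z = 0
    · subst hz
      rw [MulChar.map_zero, map_zero, zero_pow hmpos]
    · obtain ⟨n, hn⟩ := (mem_powers_iff_mem_zpowers (x := g)).2 (hg (Units.mk0 z hz))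
      have hn' : (g : F) ^ n = z := by
        have := congrArg Units.val hn
        simpa using this
      rw [← hn', map_pow, hχg, ← pow_mul, map_pow, ← pow_mul, pow_mul, hgi]
      ring
  refine ⟨χ, m, by rw [← hm, hcard], ?_, key, ?_⟩
  · rw [MulChar.eq_iff hg, MulChar.pow_apply_coe, hχg, ← pow_mul, mul_comm, pow_mul, hζ]
    simp
  · intro j hj
    have h2 : (g : F) ^ (m * j) = 1 := by
      rw [pow_mul, ← key, ← map_pow, ← MulChar.pow_apply_coe, hj]; simp
    have h3 : g ^ (m * j) = 1 := by ext; simpa using h2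
    have h4 := orderOf_dvd_of_pow_eq_one h3
    rw [hgo, hm, mul_comm m j] at h4
    exact Nat.dvd_of_mul_dvd_mul_right (Nat.pos_of_ne_zero hmpos) h4
end char
end Mih

open NumberField
open scoped Pointwise
namespace Mih
/-- The half system attached to the Jacobi sum `J(χ, χ ^ k)`. -/
def TT (p k : ℕ) [NeZero p] : Finset (ZMod p)ˣ :=
  Finset.univ.filter (fun t => (t : ZMod p).val + ((k : ZMod p) * t).val < p)

section jac
variable {p : ℕ} [hp : Fact p.Prime] {K : Type*} [Field K] [NumberField K]
  [hK : IsCyclotomicExtension {p} ℚ K]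

lemma TT_neg {k : ℕ} (hk0 : (k : ZMod p) ≠ 0) (hk1 : (k : ZMod p) + 1 ≠ 0) (t : (ZMod p)ˣ) :
    -t ∈ TT p k ↔ t ∉ TT p k := by
  have h0 : (t : ZMod p) ≠ 0 := t.ne_zero
  have h1 : (k : ZMod p) * t ≠ 0 := mul_ne_zero hk0 h0
  have : NeZero (t : ZMod p) := ⟨h0⟩
  have : NeZero ((k : ZMod p) * t) := ⟨h1⟩
  simp only [TT, Finset.mem_filter, Finset.mem_univ, true_and, Units.val_neg, mul_neg]
  rw [ZMod.val_neg_of_ne_zero, ZMod.val_neg_of_ne_zero]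
  have h2 : (t : ZMod p).val + ((k : ZMod p) * t).val ≠ p := by
    intro h
    have h3 := congrArg (Nat.cast : ℕ → ZMod p) h
    simp only [Nat.cast_add, ZMod.natCast_val, ZMod.cast_id', id, CharP.cast_eq_zero] at h3
    apply mul_ne_zero hk1 h0
    rw [← h3]; ring
  have := ZMod.val_lt (t : ZMod p)
  have := ZMod.val_lt ((k : ZMod p) * (t : ZMod p))
  omega

lemma TT_prod {k : ℕ} (hk0 : (k : ZMod p) ≠ 0) (hk1 : (k : ZMod p) + 1 ≠ 0)
    {M : Type*} [CommMonoid M] (f : (ZMod p)ˣ → M) :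
    (∏ t ∈ TT p k, f t) * (∏ t ∈ TT p k, f (-t)) = ∏ t, f t := by
  classical
  have h : ∏ t ∈ TT p k, f (-t) = ∏ t ∈ (TT p k)ᶜ, f t := by
    apply Finset.prod_bij' (fun t _ => -t) (fun t _ => -t)
    · simp
    · simp
    · simp
    · intro t ht; rw [Finset.mem_compl, TT_neg hk0 hk1]; simpa using ht
    · intro t ht; rw [TT_neg hk0 hk1]; simpa using ht
  rw [h, Finset.prod_mul_prod_compl]

lemma TT_card {k : ℕ} (hk0 : (k : ZMod p) ≠ 0) (hk1 : (k : ZMod p) + 1 ≠ 0) :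
    (TT p k).card + (TT p k).card = p - 1 := by
  have := TT_prod hk0 hk1 (fun _ => Multiplicative.ofAdd 1)
  simp only [Finset.prod_const, Finset.card_univ, ZMod.card_units_eq_totient,
    Nat.totient_prime hp.out, ← ofAdd_nsmul] at this
  simpa using congrArg Multiplicative.toAdd this

lemma jac {ζ : 𝓞 K} (hζ : IsPrimitiveRoot ζ p) {k : ℕ} (hk0 : (k : ZMod p) ≠ 0)
    (hk1 : (k : ZMod p) + 1 ≠ 0) (L : Ideal (𝓞 K)) [hL : L.IsMaximal] (hL0 : L ≠ ⊥) (c : ℤ)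
    (hc : (c : 𝓞 K) - ζ ∈ L) (h1 : 1 - ζ ∉ L) :
    ∃ J : 𝓞 K, Ideal.span {J} = ∏ t ∈ TT p k, sg K t⁻¹ • L ∧
      J * sg K (-1 : (ZMod p)ˣ) • J = (Ideal.absNorm L : ℕ) := by
  classical
  letI : Field (𝓞 K ⧸ L) := Ideal.Quotient.field L
  have hfin : Finite (𝓞 K ⧸ L) := Ring.HasFiniteQuotients.finiteQuotient hL0
  letI : Fintype (𝓞 K ⧸ L) := Fintype.ofFinite _
  set π := Ideal.Quotient.mk L with hπ
  have hcard : Fintype.card (𝓞 K ⧸ L) = Ideal.absNorm L := by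
    rw [Ideal.absNorm_apply, Submodule.cardQuot_apply, Nat.card_eq_fintype_card]
  have hπζ : π ζ ≠ 1 := by
    intro h
    apply h1
    rw [← Ideal.Quotient.eq_zero_iff_mem, map_sub, map_one]
    change 1 - π ζ = 0
    rw [h, sub_self]
  obtain ⟨χ, m, hm, hχp, hχ, hχo⟩ := exists_char hp.out π ζ hζ.pow_eq_one hπζ
  have hp0 : p ≠ 0 := hp.out.ne_zero
  have hord : orderOf (π ζ) = p :=
    orderOf_eq_prime (by rw [← map_pow, hζ.pow_eq_one, map_one]) hπζ
  -- values
  have hval : ∀ z, z ≠ 0 → χ z ^ p = 1 := by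
    intro z hz
    rw [← MulChar.pow_apply' _ hp0, hχp, MulChar.one_apply (isUnit_iff_ne_zero.2 hz)]
  have hmod : ∀ z (i j : ℕ), (i : ZMod p) = j → i ≠ 0 → j ≠ 0 → χ z ^ i = χ z ^ j := by
    intro z i j hij hi hj
    by_cases hz : z = 0
    · rw [hz, MulChar.map_zero, zero_pow hi, zero_pow hj]
    · have : i ≡ j [MOD p] := (ZMod.natCast_eq_natCast_iff _ _ _).1 hij
      exact pow_eq_pow_of_modEq this (hval z hz)
  have hsg : ∀ (a : (ZMod p)ˣ) z, sg K a • χ z = χ z ^ (a : ZMod p).val := by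
    intro a z
    by_cases hz : z = 0
    · have : (a : ZMod p).val ≠ 0 := by
        rw [Ne, ZMod.val_eq_zero]; exact a.ne_zero
      rw [hz, MulChar.map_zero, zero_pow this, smul_zero]
    · exact sg_root a (hval z hz)
  have hk : k ≠ 0 := by rintro rfl; simp at hk0
  have hJ : jacobiSum χ (χ ^ k) = ∑ z, χ z * χ (1 - z) ^ k := by
    simp only [jacobiSum, MulChar.pow_apply' _ hk]
  have hsgJ : ∀ a : (ZMod p)ˣ, sg K a • jacobiSum χ (χ ^ k) =
      ∑ z, χ z ^ (a : ZMod p).val * χ (1 - z) ^ ((k : ZMod p) * a).val := by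
    intro a
    rw [hJ, Finset.smul_sum]
    apply Finset.sum_congr rfl
    intro z _
    rw [smul_mul', smul_pow', hsg, hsg, ← pow_mul]
    congr 1
    apply hmod
    · simp [mul_comm]
    · apply mul_ne_zero _ hk
      rw [Ne, ZMod.val_eq_zero]; exact a.ne_zero
    · rw [Ne, ZMod.val_eq_zero]; exact mul_ne_zero hk0 a.ne_zero
  have hmem : ∀ t ∈ TT p k, sg K t • jacobiSum χ (χ ^ k) ∈ L := by
    intro t ht
    rw [← Ideal.Quotient.eq_zero_iff_mem, hsgJ]
    change π _ = 0
    rw [map_sum]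
    simp only [map_mul, map_pow, hχ, ← pow_mul]
    apply sum_pow_mul
    rw [← hm, ← mul_add, mul_comm]
    have h2 : 0 < p * m := by rw [hm]; have := Fintype.one_lt_card (α := 𝓞 K ⧸ L); omega
    have h3 : 0 < m := Nat.pos_of_mul_pos_left h2
    simp only [TT, Finset.mem_filter, Finset.mem_univ, true_and] at ht
    exact Nat.mul_lt_mul_of_pos_right ht h3
  set J := jacobiSum χ (χ ^ k) with hJdef
  have hconj : J * sg K (-1 : (ZMod p)ˣ) • J = (Ideal.absNorm L : ℕ) := by
    have e1 : sg K (-1 : (ZMod p)ˣ) • J = jacobiSum χ⁻¹ (χ ^ k)⁻¹ := by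
      have hinv : χ⁻¹ = χ ^ (p - 1) := by
        rw [inv_eq_iff_mul_eq_one, ← pow_succ', Nat.sub_add_cancel hp.out.one_le, hχp]
      have hpm : p - 1 ≠ 0 := by have := hp.out.two_le; omega
      rw [hsgJ, ← inv_pow, hinv, jacobiSum]
      apply Finset.sum_congr rfl
      intro z _
      rw [← pow_mul, MulChar.pow_apply' _ hpm, MulChar.pow_apply' _ (mul_ne_zero hpm hk)]
      congr 1
      · apply hmod
        · simp [Nat.cast_sub hp.out.one_le]
        · rw [Ne, ZMod.val_eq_zero]; simp
        · exact hpm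
      · apply hmod
        · simp [Nat.cast_sub hp.out.one_le]
        · rw [Ne, ZMod.val_eq_zero]; simpa using hk0
        · exact mul_ne_zero hpm hk
    rw [e1]
    have hinj : Function.Injective (algebraMap (𝓞 K) K) := RingOfIntegers.coe_injective
    apply hinj
    rw [map_mul, ← jacobiSum_ringHomComp, ← jacobiSum_ringHomComp, ← MulChar.ringHomComp_inv,
      ← MulChar.ringHomComp_inv, jacobiSum_mul_jacobiSum_inv, hcard]
    · simp
    · rw [ringChar.eq_zero]
      intro h
      have : CharP (𝓞 K ⧸ L) 0 := by rw [h]; exact ringChar.charP _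
      have := CharP.charP_to_charZero (𝓞 K ⧸ L)
      exact not_finite (𝓞 K ⧸ L)
    · rw [MulChar.ringHomComp_ne_one_iff hinj]
      intro h
      have := hχo 1 (by simpa using h)
      exact hp.out.one_lt.ne' (Nat.dvd_one.1 this)
    · rw [MulChar.ringHomComp_ne_one_iff hinj]
      intro h
      exact hk0 ((ZMod.natCast_eq_zero_iff _ _).2 (hχo k h))
    · rw [← MulChar.ringHomComp_mul, MulChar.ringHomComp_ne_one_iff hinj]
      intro h
      rw [← pow_succ'] at h
      apply hk1
      exact_mod_cast ((ZMod.natCast_eq_zero_iff _ _).2 (hχo (k+1) h))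
  refine ⟨J, ?_, hconj⟩
  have hN0 : Ideal.absNorm L ≠ 0 := by rwa [Ne, Ideal.absNorm_eq_zero_iff]
  have hdvd : ∏ t ∈ TT p k, sg K t⁻¹ • L ∣ Ideal.span {J} := by
    have hmax : ∀ a : (ZMod p)ˣ, (sg K a • L).IsMaximal := by
      intro a
      have : (sg K a • L).IsPrime := (Ideal.IsPrime.smul_iff _).2 hL.isPrime
      apply this.isMaximal
      intro h
      have h2 := absNorm_sg a L
      rw [h, Ideal.absNorm_bot] at h2
      exact hN0 h2.symm
    apply Finset.prod_dvd_of_coprime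
    · intro a _ b _ hab
      have := hmax a⁻¹
      have := hmax b⁻¹
      apply Ideal.isCoprime_of_isMaximal
      intro h
      change sg K a⁻¹ • L = sg K b⁻¹ • L at h
      apply hab
      have h3 : sg K (a * b⁻¹) • L = L := by
        rw [sg_mul, mul_smul, ← h, ← mul_smul, ← sg_mul, mul_inv_cancel, sg_one, one_smul]
      have h4 := Ideal.smul_mem_pointwise_smul (sg K (a * b⁻¹)) _ _ hc
      rw [h3, smul_sub, sg_int, sg_root _ hζ.pow_eq_one] at h4
      have h5 := L.sub_mem hc h4
      rw [sub_sub_sub_cancel_left, ← Ideal.Quotient.eq_zero_iff_mem, map_sub] at h5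
      have h6 : π ζ ^ ((a * b⁻¹ : (ZMod p)ˣ) : ZMod p).val = π ζ ^ 1 := by
        rw [pow_one, ← map_pow]; exact sub_eq_zero.1 h5
      have hu : IsOfFinOrder (π ζ) := by
        rw [← orderOf_pos_iff, hord]; exact hp.out.pos
      rw [hu.pow_inj_mod, hord, ← Nat.ModEq, ← ZMod.natCast_eq_natCast_iff] at h6
      simp only [ZMod.natCast_val, ZMod.cast_id', id, Nat.cast_one] at h6
      have h7 : a * b⁻¹ = 1 := Units.ext h6
      exact mul_inv_eq_one.1 h7
    · intro t ht
      rw [Ideal.dvd_span_singleton, sg_inv, Ideal.mem_inv_pointwise_smul_iff]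
      exact hmem t ht
  obtain ⟨M, hM⟩ := hdvd
  have hn1 : Ideal.absNorm (∏ t ∈ TT p k, sg K t⁻¹ • L) = Ideal.absNorm L ^ (TT p k).card := by
    rw [map_prod]
    simp only [absNorm_sg, Finset.prod_const]
  have hn2 : Ideal.absNorm (Ideal.span {J}) = Ideal.absNorm L ^ (TT p k).card := by
    have e := congrArg (Algebra.norm ℤ) hconj
    rw [map_mul, norm_sg] at e
    have e2 : Algebra.norm ℤ ((Ideal.absNorm L : ℕ) : 𝓞 K) = (Ideal.absNorm L : ℤ) ^ (p - 1) := by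
      have := Algebra.norm_algebraMap_of_basis (RingOfIntegers.basis K) (Ideal.absNorm L : ℤ)
      rw [← Module.finrank_eq_card_basis (RingOfIntegers.basis K), RingOfIntegers.rank,
        finrank_eq (p := p)] at this
      rw [← this]; simp
    rw [e2, ← TT_card hk0 hk1, pow_add] at e
    rw [Ideal.absNorm_span_singleton]
    have e3 := Int.natAbs_mul_self' (Algebra.norm ℤ J)
    rw [e] at e3
    have e4 : (Algebra.norm ℤ J).natAbs * (Algebra.norm ℤ J).natAbs =
      Ideal.absNorm L ^ (TT p k).card * Ideal.absNorm L ^ (TT p k).card := by exact_mod_cast e3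
    exact Nat.mul_self_inj.1 e4
  have hM1 : Ideal.absNorm M = 1 := by
    have e := congrArg Ideal.absNorm hM
    rw [map_mul, hn1, hn2] at e
    exact (Nat.eq_of_mul_eq_mul_left (pow_pos (Nat.pos_of_ne_zero hN0) _)
      (by rw [mul_one]; exact e)).symm
  rw [Ideal.absNorm_eq_one_iff] at hM1
  rw [hM, hM1, Ideal.mul_top]
end jac
end Mih

open NumberField
open scoped Pointwise
namespace Mih
section qpow
variable {p : ℕ} [hp : Fact p.Prime] {K : Type*} [Field K] [NumberField K]
  [hK : IsCyclotomicExtension {p} ℚ K]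

lemma dvd_sg {ζ : 𝓞 K} (hζ : IsPrimitiveRoot ζ p) (b : (ZMod p)ˣ) :
    1 - ζ ∣ sg K b • (1 - ζ) := by
  rw [smul_sub, smul_one, sg_root _ hζ.pow_eq_one]
  exact one_sub_dvd_one_sub_pow ζ _

lemma dvd_sg' {ζ : 𝓞 K} (hζ : IsPrimitiveRoot ζ p) (b : (ZMod p)ˣ) :
    sg K b • (1 - ζ) ∣ 1 - ζ := by
  obtain ⟨c, hc⟩ := dvd_sg (K := K) hζ b⁻¹
  refine ⟨sg K b • c, ?_⟩
  rw [← smul_mul', ← hc, sg_smul_smul, mul_inv_cancel, sg_one, one_smul]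

lemma sub_dvd {ζ : 𝓞 K} (hζ : IsPrimitiveRoot ζ p) {a b : (ZMod p)ˣ} (hab : a ≠ b) :
    sg K a • ζ - sg K b • ζ ∣ 1 - ζ := by
  have hc : a⁻¹ * b ≠ 1 := by
    intro h; exact hab (inv_mul_eq_one.1 h)
  set c := a⁻¹ * b with hcdef
  have hd0 : ((c : ZMod p) - 1) ≠ 0 := by
    intro h; exact hc (Units.ext (sub_eq_zero.1 h))
  set d := Units.mk0 ((c : ZMod p) - 1) hd0 with hd
  have h1 : sg K c • ζ = ζ * sg K d • ζ := by
    rw [sg_root _ hζ.pow_eq_one, sg_root _ hζ.pow_eq_one, ← pow_succ']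
    apply pow_eq_pow_of_modEq _ hζ.pow_eq_one
    rw [← ZMod.natCast_eq_natCast_iff]
    simp [hd]
  have h2 : sg K a • ζ - sg K b • ζ = sg K a • (ζ * sg K d • (1 - ζ)) := by
    rw [show b = a * c by simp [hcdef], ← sg_smul_smul, h1, ← smul_sub, smul_sub (sg K d), smul_one]
    ring_nf
  obtain ⟨e, he⟩ := dvd_sg' (K := K) hζ d
  obtain ⟨f, hf⟩ := dvd_sg' (K := K) hζ a
  have hu : ζ * ζ ^ (p - 1) = 1 := by
    rw [← pow_succ', Nat.sub_add_cancel hp.out.one_le, hζ.pow_eq_one]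
  refine ⟨sg K a • (ζ ^ (p-1) * e) * f, ?_⟩
  rw [hf, h2, ← mul_assoc, ← smul_mul']
  congr 2
  calc (1 - ζ) = sg K d • (1 - ζ) * e := he
    _ = (ζ * ζ ^ (p - 1)) * (sg K d • (1 - ζ)) * e := by rw [hu, one_mul]
    _ = _ := by ring

lemma jprod {ζ : 𝓞 K} (hζ : IsPrimitiveRoot ζ p) {k : ℕ} (hk0 : (k : ZMod p) ≠ 0)
    (hk1 : (k : ZMod p) + 1 ≠ 0) (c : ℤ) (A : Ideal (𝓞 K)) (hA0 : A ≠ 0)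
    (hA : ∀ L : Ideal (𝓞 K), L.IsMaximal → A ≤ L → (c : 𝓞 K) - ζ ∈ L ∧ 1 - ζ ∉ L) :
    ∃ J : 𝓞 K, Ideal.span {J} = ∏ t ∈ TT p k, sg K t⁻¹ • A ∧
      J * sg K (-1 : (ZMod p)ˣ) • J = (Ideal.absNorm A : ℕ) := by
  have hmul : ∀ (g : Gal(K/ℚ)) (I J : Ideal (𝓞 K)), g • (I * J) = (g • I) * (g • J) := by
    intro g I J
    simp only [Ideal.pointwise_smul_def, Ideal.map_mul]
  revert hA0 hA
  induction A using UniqueFactorizationMonoid.induction_on_prime with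
  | h₁ => intro h; exact absurd rfl h
  | h₂ A hA =>
    intro _ _
    rw [Ideal.isUnit_iff] at hA
    subst hA
    refine ⟨1, ?_, by simp⟩
    rw [Finset.prod_congr rfl (g := fun _ => (1 : Ideal (𝓞 K)))]
    · rw [Finset.prod_const, one_pow, Ideal.span_singleton_one, Ideal.one_eq_top]
    · intro t _
      rw [Ideal.pointwise_smul_def, Ideal.one_eq_top, Ideal.map_top]
  | h₃ A L hA0 hL ih =>
    intro hLA hLm
    obtain ⟨J, hJ1, hJ2⟩ := ih hA0 (fun M hM hAM => hLm M hM (le_trans Ideal.mul_le_right hAM))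
    have hLM : L.IsMaximal := (Ideal.isPrime_of_prime hL).isMaximal hL.ne_zero
    obtain ⟨h1, h2⟩ := hLm L hLM Ideal.mul_le_left
    obtain ⟨J', hJ1', hJ2'⟩ := jac hζ hk0 hk1 L hL.ne_zero c h1 h2
    refine ⟨J' * J, ?_, ?_⟩
    · rw [← Ideal.span_singleton_mul_span_singleton, hJ1, hJ1', ← Finset.prod_mul_distrib]
      simp only [hmul]
    · rw [smul_mul', map_mul, Nat.cast_mul, ← hJ2, ← hJ2']; ring

lemma root_pow {q : ℕ} (hq : q.Prime) (hpo : p ≠ 2) (hqp : p < q) (ε : 𝓞 K)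
    (h : ∃ n, 0 < n ∧ ε ^ n = 1) : ∃ η : 𝓞 K, η ^ q = ε ∧ η ^ (2 * p) = 1 := by
  have hζ := IsCyclotomicExtension.zeta_spec p ℚ K
  obtain ⟨n, hn, hε⟩ := h
  have hfo : IsOfFinOrder (ε : K) := isOfFinOrder_iff_pow_eq_one.2
    ⟨n, hn, by exact_mod_cast congrArg (algebraMap (𝓞 K) K) hε⟩
  obtain ⟨r, hr⟩ := hζ.exists_neg_pow_of_isOfFinOrder (hp.out.odd_of_ne_two hpo) hfo
  have h2p : ε ^ (2 * p) = 1 := by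
    apply RingOfIntegers.ext
    rw [RingOfIntegers.coe_eq_algebraMap, map_pow, ← RingOfIntegers.coe_eq_algebraMap, hr, ← pow_mul,
      show r * (2 * p) = 2 * (p * r) by ring, pow_mul, neg_sq, pow_mul, pow_right_comm _ 2 p,
      hζ.pow_eq_one]
    simp
  have hcop : Nat.Coprime q (2 * p) := by
    apply Nat.Coprime.mul_right
    · rw [Nat.coprime_primes hq Nat.prime_two]; have := hp.out.two_le; omega
    · rw [Nat.coprime_primes hq hp.out]; omega
  obtain ⟨m, hm⟩ := Nat.exists_mul_mod_eq_one_of_coprime hcop (by have := hp.out.two_le; omega)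
  refine ⟨ε ^ m, ?_, ?_⟩
  · rw [← pow_mul, mul_comm]
    have : q * m ≡ 1 [MOD 2 * p] := by
      rw [Nat.ModEq, hm.2, Nat.mod_eq_of_lt]; have := hp.out.two_le; omega
    simpa using pow_eq_pow_of_modEq this h2p
  · rw [← pow_mul, mul_comm, pow_mul, h2p, one_pow]

/-- Main output of Stickelberger's relation. -/
lemma stick {ζ : 𝓞 K} (hζ : IsPrimitiveRoot ζ p) (hpo : p ≠ 2) {q : ℕ} (hq : q.Prime)
    (hqp : p < q) {k : ℕ} (hk0 : (k : ZMod p) ≠ 0)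
    (hk1 : (k : ZMod p) + 1 ≠ 0) (x b : ℤ) (u0 : 𝓞 K) (hu : u0 * (1 - ζ) = x - ζ)
    (hu1 : 1 - ζ ∣ u0 - 1) (hN : Algebra.norm ℤ u0 = b ^ q) (hb : b ≠ 0) :
    ∃ J : 𝓞 K, ∏ t ∈ TT p k, sg K t⁻¹ • u0 = J ^ q := by
  classical
  have hnot : ∀ (L : Ideal (𝓞 K)), L.IsPrime → ∀ a : (ZMod p)ˣ, sg K a • u0 ∈ L → 1 - ζ ∉ L := by
    intro L hL a ha h1
    obtain ⟨w, hw⟩ := hu1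
    have h2 := Ideal.mem_of_dvd _ (dvd_sg hζ a) h1
    have h3 : sg K a • (u0 - 1) ∈ L := by
      rw [hw, smul_mul']; exact L.mul_mem_right _ h2
    rw [smul_sub, smul_one] at h3
    apply hL.ne_top
    rw [Ideal.eq_top_iff_one]
    simpa using L.sub_mem ha h3
  have hspan : ∀ a : (ZMod p)ˣ, Ideal.span {sg K a • u0} = sg K a • Ideal.span {u0} := by
    intro a
    rw [Ideal.pointwise_smul_def, Ideal.map_span, Set.image_singleton]; rfl
  have hcop : ∀ a ∈ (Finset.univ : Finset (ZMod p)ˣ), ∀ b ∈ (Finset.univ : Finset (ZMod p)ˣ),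
      a ≠ b → IsCoprime (Ideal.span {sg K a • u0}) (Ideal.span {sg K b • u0}) := by
    intro a _ b _ hab
    rw [Ideal.isCoprime_iff_sup_eq]
    by_contra hne
    obtain ⟨L, hL, hle⟩ := Ideal.exists_le_maximal _ hne
    have ha : sg K a • u0 ∈ L := hle (Ideal.mem_sup_left (Ideal.mem_span_singleton_self _))
    have hb : sg K b • u0 ∈ L := hle (Ideal.mem_sup_right (Ideal.mem_span_singleton_self _))
    apply hnot L hL.isPrime a ha
    have h1 : ∀ a : (ZMod p)ˣ, sg K a • u0 ∈ L → (x : 𝓞 K) - sg K a • ζ ∈ L := by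
      intro a ha
      have := congrArg (fun z => sg K a • z) hu
      simp only [smul_mul', smul_sub, sg_int] at this
      rw [← this]; exact L.mul_mem_right _ ha
    have h2 := L.sub_mem (h1 b hb) (h1 a ha)
    rw [sub_sub_sub_cancel_left] at h2
    exact Ideal.mem_of_dvd _ (sub_dvd hζ hab) h2
  obtain ⟨A, hA⟩ := Finset.exists_eq_pow_of_mul_eq_pow_of_coprime (n := q)
    (c := Ideal.span {((b : ℤ) : 𝓞 K)}) hcop
    (by rw [Ideal.prod_span_singleton, norm_eq, hN, Ideal.span_singleton_pow]; simp) 1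
    (Finset.mem_univ _)
  rw [sg_one, one_smul] at hA
  have hu0 : u0 ≠ 0 := by
    rintro rfl
    rw [Algebra.norm_zero] at hN
    exact hb (eq_zero_of_pow_eq_zero hN.symm)
  have hA0 : A ≠ 0 := by
    rintro rfl
    rw [zero_pow hq.ne_zero, Ideal.zero_eq_bot, Ideal.span_singleton_eq_bot] at hA
    exact hu0 hA
  obtain ⟨J, hJ1, hJ2⟩ := jprod hζ hk0 hk1 x A hA0 (by
    intro L hL hAL
    have h1 : u0 ∈ L := by
      have : Ideal.span {u0} ≤ L := by rw [hA]; exact le_trans (Ideal.pow_le_self hq.ne_zero) hAL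
      exact this (Ideal.mem_span_singleton_self _)
    constructor
    · rw [← hu]; exact L.mul_mem_right _ h1
    · apply hnot L hL.isPrime 1; rwa [sg_one, one_smul])
  have hass : Associated (J ^ q) (∏ t ∈ TT p k, sg K t⁻¹ • u0) := by
    rw [← Ideal.span_singleton_eq_span_singleton, ← Ideal.span_singleton_pow, hJ1,
      ← Ideal.prod_span_singleton, ← Finset.prod_pow]
    apply Finset.prod_congr rfl
    intro t _
    rw [hspan, hA]
    simp only [Ideal.pointwise_smul_def, Ideal.map_pow]
  obtain ⟨ε, hε⟩ := hass
  have hnA : ((Ideal.absNorm A : ℕ) : ℝ) ^ q = |((Algebra.norm ℤ u0 : ℤ) : ℝ)| := by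
    have := congrArg Ideal.absNorm hA
    rw [map_pow, Ideal.absNorm_span_singleton] at this
    rw [← Nat.cast_pow, ← this, Nat.cast_natAbs, Int.cast_abs]
  have hA1 : ((Ideal.absNorm A : ℕ) : ℝ) ≠ 0 := by
    rw [Nat.cast_ne_zero, Ne, Ideal.absNorm_eq_zero_iff]; exact hA0
  have hεn : ∀ φ : K →+* ℂ, ‖φ ((ε : 𝓞 K) : K)‖ = 1 := by
    intro φ
    have e1 : ‖φ (J : K)‖ ^ 2 = Ideal.absNorm A := by
      have := congrArg (fun z : 𝓞 K => ‖φ (z : K)‖) hJ2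
      simp only [map_mul, norm_mul, conj_sg', RCLike.norm_conj] at this
      rw [pow_two, this]; simp
    have e2 : ‖φ ((∏ t ∈ TT p k, sg K t⁻¹ • u0 : 𝓞 K) : K)‖ ^ 2 =
        |((Algebra.norm ℤ u0 : ℤ) : ℝ)| := by
      have h1 := TT_prod hk0 hk1 (fun t => sg K t⁻¹ • u0)
      have h2 : ∏ t : (ZMod p)ˣ, sg K t⁻¹ • u0 = ∏ t, sg K t • u0 :=
        Fintype.prod_equiv (Equiv.inv _) _ _ (fun t => rfl)
      rw [h2, norm_eq] at h1
      have h3 : ∏ t ∈ TT p k, sg K (-t)⁻¹ • u0 =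
          sg K (-1 : (ZMod p)ˣ) • ∏ t ∈ TT p k, sg K t⁻¹ • u0 := by
        rw [Finset.smul_prod']
        apply Finset.prod_congr rfl
        intro t _
        rw [sg_smul_smul]; congr 2; rw [inv_neg, neg_one_mul]
      rw [h3] at h1
      have := congrArg (fun z : 𝓞 K => ‖φ (z : K)‖) h1
      simp only [map_mul, norm_mul, conj_sg', RCLike.norm_conj] at this
      rw [pow_two, this]; simp
    have e3 := congrArg (fun z : 𝓞 K => ‖φ (z : K)‖ ^ 2) hε
    simp only [map_mul, norm_mul, map_pow, norm_pow, mul_pow] at e3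
    rw [e2, ← pow_mul, mul_comm, pow_mul' , e1, ← hnA, mul_comm] at e3
    have e4 := mul_left_cancel₀ (pow_ne_zero q hA1) (e3.trans (mul_one _).symm)
    exact (pow_eq_one_iff_of_nonneg (norm_nonneg _) two_ne_zero).1 e4
  obtain ⟨n, hn, hn1⟩ := NumberField.Embeddings.pow_eq_one_of_norm_eq_one K ℂ
    (RingOfIntegers.isIntegral_coe (ε : 𝓞 K)) hεn
  obtain ⟨η, hη, -⟩ := root_pow hq hpo hqp (ε : 𝓞 K) ⟨n, hn, RingOfIntegers.ext (by simpa using hn1)⟩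
  exact ⟨J * η, by rw [mul_pow, hη, hε]⟩

end qpow
end Mih

open NumberField
open scoped Pointwise
namespace Mih
section cert
variable {p : ℕ} [hp : Fact p.Prime] {K : Type*} [Field K] [NumberField K]
  [hK : IsCyclotomicExtension {p} ℚ K]

/-- A numerical certificate inverting the half system `TT p k`. -/
def Cert (p k m : ℕ) (F : ℕ → ℤ) : Prop :=
  ∀ r < p, r ≠ 0 → ∑ t ∈ Finset.range p, (if t ≠ 0 ∧ t + (k * t) % p < p then F ((r * t) % p) else 0)
    = if r = 1 then (m : ℤ) else if r = p - 1 then -(m : ℤ) else 0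

instance (p k m : ℕ) (F : ℕ → ℤ) : Decidable (Cert p k m F) := by
  unfold Cert; infer_instance

lemma cert_sum {k m : ℕ} {F : ℕ → ℤ} (h : Cert p k m F) (hpo : p ≠ 2) (r : (ZMod p)ˣ) :
    ∑ t ∈ TT p k, F ((r * t : (ZMod p)ˣ) : ZMod p).val =
      (if r = 1 then (m : ℤ) else 0) - (if r = -1 then (m : ℤ) else 0) := by
  have h2 := hp.out.two_le
  have hr0 : (r : ZMod p).val ≠ 0 := by rw [Ne, ZMod.val_eq_zero]; exact r.ne_zero
  have := h (r : ZMod p).val (ZMod.val_lt _) hr0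
  rw [← Finset.sum_filter] at this
  have e : ∑ t ∈ TT p k, F ((r * t : (ZMod p)ˣ) : ZMod p).val =
      ∑ t ∈ (Finset.range p).filter (fun t => t ≠ 0 ∧ t + (k * t) % p < p),
        F (((r : ZMod p).val * t) % p) := by
    apply Finset.sum_bij (fun (t : (ZMod p)ˣ) _ => (t : ZMod p).val)
    · intro t ht
      simp only [TT, Finset.mem_filter, Finset.mem_univ, true_and, ZMod.val_mul,
        ZMod.val_natCast, Nat.mod_mul_mod] at ht
      simp only [Finset.mem_filter, Finset.mem_range]
      refine ⟨ZMod.val_lt _, ?_, ht⟩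
      rw [Ne, ZMod.val_eq_zero]; exact t.ne_zero
    · intro t _ s _ hts
      exact Units.ext (ZMod.val_injective p hts)
    · intro n hn
      simp only [Finset.mem_filter, Finset.mem_range] at hn
      obtain ⟨hn1, hn2, hn3⟩ := hn
      have h0 : (n : ZMod p) ≠ 0 := by
        rw [Ne, ZMod.natCast_eq_zero_iff]
        exact fun hd => hn2 (Nat.eq_zero_of_dvd_of_lt hd hn1)
      refine ⟨Units.mk0 (n : ZMod p) h0, ?_, ?_⟩
      · simp only [TT, Finset.mem_filter, Finset.mem_univ, true_and, ZMod.val_mul,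
          ZMod.val_natCast, Nat.mod_mul_mod, Units.val_mk0, Nat.mod_eq_of_lt hn1]
        exact hn3
      · simp [ZMod.val_natCast, Nat.mod_eq_of_lt hn1]
    · intro t _
      rw [Units.val_mul, ZMod.val_mul]
  rw [e, this]
  have e1 : (r : ZMod p).val = 1 ↔ r = 1 := by
    constructor
    · intro h; apply Units.ext; apply ZMod.val_injective p
      rw [h, Units.val_one, ZMod.val_one'' hp.out.one_lt.ne']
    · rintro rfl; rw [Units.val_one, ZMod.val_one'' hp.out.one_lt.ne']
  have hm1 : (((-1 : (ZMod p)ˣ)) : ZMod p).val = p - 1 := by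
    have : NeZero (1 : ZMod p) := ⟨one_ne_zero⟩
    rw [Units.val_neg, Units.val_one, ZMod.val_neg_of_ne_zero, ZMod.val_one'' hp.out.one_lt.ne']
  have e2 : (r : ZMod p).val = p - 1 ↔ r = -1 := by
    constructor
    · intro h; apply Units.ext; apply ZMod.val_injective p
      rw [h, hm1]
    · rintro rfl; exact hm1
  have e3 : (1 : (ZMod p)ˣ) ≠ -1 := by
    intro h
    have := hm1
    rw [← h, Units.val_one, ZMod.val_one'' hp.out.one_lt.ne'] at this
    omega
  simp only [e1, e2]
  by_cases h1 : r = 1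
  · subst h1; simp [e3]
  · simp only [h1, if_false]; split_ifs <;> simp

lemma cert_pow {k m q : ℕ} {F : ℕ → ℤ} (h : Cert p k m F) (hpo : p ≠ 2) (hmq : Nat.Coprime m q)
    (u0 J : 𝓞 K) (hu0 : u0 ≠ 0) (hJ : ∏ t ∈ TT p k, sg K t⁻¹ • u0 = J ^ q) :
    ∃ α : K, α ^ q * ((sg K (-1 : (ZMod p)ˣ) • u0 : 𝓞 K) : K) = (u0 : K) := by
  classical
  have hne : ∀ a : (ZMod p)ˣ, ((sg K a • u0 : 𝓞 K) : K) ≠ 0 := by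
    intro a h
    apply hu0
    have h1 : sg K a • u0 = 0 := RingOfIntegers.ext (by simpa using h)
    exact (smul_eq_zero_iff_eq _).1 h1
  set U : (ZMod p)ˣ → K := fun a => ((sg K a • u0 : 𝓞 K) : K) with hU
  have hG : ∀ s : (ZMod p)ˣ, ∏ t ∈ TT p k, U (s * t⁻¹) = ((sg K s • J : 𝓞 K) : K) ^ q := by
    intro s
    have := congrArg (fun z : 𝓞 K => ((sg K s • z : 𝓞 K) : K)) hJ
    simp only [Finset.smul_prod', sg_smul_smul, smul_pow', map_pow] at this
    rw [← this, RingOfIntegers.coe_eq_algebraMap, map_prod]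
  replace hne : ∀ a, U a ≠ 0 := hne
  clear_value U
  set f : (ZMod p)ˣ → ℤ := fun a => F (a : ZMod p).val with hf
  set B : K := ∏ s : (ZMod p)ˣ, ((sg K s • J : 𝓞 K) : K) ^ f s with hB
  have key : (U 1 / U (-1)) ^ m = B ^ q := by
    have e1 : B ^ q = ∏ s : (ZMod p)ˣ, (∏ t ∈ TT p k, U (s * t⁻¹)) ^ f s := by
      rw [hB, ← Finset.prod_pow]
      apply Finset.prod_congr rfl
      intro s _
      rw [hG, ← zpow_natCast, ← zpow_natCast, ← zpow_mul, ← zpow_mul, mul_comm]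
    have e2 : ∏ s : (ZMod p)ˣ, (∏ t ∈ TT p k, U (s * t⁻¹)) ^ f s
        = ∏ r : (ZMod p)ˣ, ∏ t ∈ TT p k, U r ^ f (r * t) := by
      simp_rw [← Finset.prod_zpow]
      rw [Finset.prod_comm, Finset.prod_comm (s := Finset.univ)]
      apply Finset.prod_congr rfl
      intro t _
      apply Fintype.prod_equiv (Equiv.mulRight t⁻¹)
      intro s; simp
    have e3 : ∀ r : (ZMod p)ˣ, ∏ t ∈ TT p k, U r ^ f (r * t) =
        (if r = 1 then U r ^ m else 1) * (if r = -1 then (U r ^ m)⁻¹ else 1) := by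
      intro r
      have : ∀ s : Finset (ZMod p)ˣ, ∏ t ∈ s, U r ^ f (r * t) = U r ^ ∑ t ∈ s, f (r * t) := by
        intro s
        induction s using Finset.induction_on with
        | empty => simp
        | insert a s ha ih => rw [Finset.prod_insert ha, Finset.sum_insert ha, zpow_add₀ (hne r), ih]
      rw [this, cert_sum h hpo r, zpow_sub₀ (hne r)]
      split_ifs <;> simp [div_eq_mul_inv]
    rw [e1, e2]
    simp_rw [e3]
    rw [Finset.prod_mul_distrib, Finset.prod_ite_eq' Finset.univ, Finset.prod_ite_eq' Finset.univ]
    simp only [Finset.mem_univ, if_true]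
    rw [div_pow, div_eq_mul_inv]
  have hc := Int.isCoprime_iff_gcd_eq_one.2 (by simpa using hmq : Int.gcd (m : ℤ) (q : ℤ) = 1)
  obtain ⟨a, b, hab⟩ := hc
  have hv : U 1 / U (-1) ≠ 0 := div_ne_zero (hne 1) (hne (-1))
  refine ⟨(U 1 / U (-1)) ^ b * B ^ a, ?_⟩
  have : ((U 1 / U (-1)) ^ b * B ^ a) ^ q = U 1 / U (-1) := by
    calc ((U 1 / U (-1)) ^ b * B ^ a) ^ q = (U 1 / U (-1)) ^ (b * q) * (B ^ q) ^ a := by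
          rw [mul_pow, ← zpow_natCast, ← zpow_mul, ← zpow_natCast, ← zpow_mul, ← zpow_natCast, ← zpow_mul,
            mul_comm a]
      _ = (U 1 / U (-1)) ^ (b * q) * (U 1 / U (-1)) ^ (a * m) := by
          rw [← key, ← zpow_natCast, ← zpow_mul, mul_comm (m : ℤ)]
      _ = U 1 / U (-1) := by rw [← zpow_add₀ hv, add_comm, hab, zpow_one]
  rw [this]
  have e5 : ((sg K (-1 : (ZMod p)ˣ) • u0 : 𝓞 K) : K) = U (-1) := by rw [hU]
  rw [e5, div_mul_cancel₀ _ (hne (-1)), hU]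
  simp [sg_one]

end cert
/-- odd function with prescribed values on the lower half -/
def FF (p : ℕ) (l : List ℤ) (n : ℕ) : ℤ :=
  if 2 * n < p then l.getD n 0 else - l.getD (p - n) 0

lemma cert_3 : Cert 3 1 1 (FF 3 [0, 1]) := by decide +kernel
lemma cert_5 : Cert 5 1 2 (FF 5 [0, 1, 1]) := by decide +kernel
lemma cert_7 : Cert 7 1 2 (FF 7 [0, 1, 1, 0]) := by decide +kernel
lemma cert_11 : Cert 11 2 2 (FF 11 [0, 0, 1, 0, -1, 0]) := by decide +kernel
lemma cert_13 : Cert 13 2 2 (FF 13 [0, 0, 0, 1, 0, 0, -1]) := by decide +kernel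
lemma cert_17 : Cert 17 2 2 (FF 17 [0, -1, 1, 1, 0, 1, 0, 1, -1]) := by decide +kernel
lemma cert_19 : Cert 19 2 2 (FF 19 [0, 0, 0, 0, 1, 0, 0, 0, -1, 0]) := by decide +kernel
lemma cert_23 : Cert 23 2 6 (FF 23 [0, 1, 1, 1, 1, 2, 1, -1, -2, 1, -1, 2]) := by decide +kernel
lemma cert_29 : Cert 29 2 4 (FF 29 [0, -1, 1, 0, 0, 0, 1, 1, 0, 1, 0, 1, -1, 0, -1]) := by decide +kernel
lemma cert_31 : Cert 31 2 54 (FF 31 [0, 1, 1, -10, 1, 1, 17, 10, 1, 1, 1, -1, -10, -1, -17, -1]) := by decide +kernel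
lemma cert_37 : Cert 37 3 74 (FF 37 [0, -3, 1, 3, 7, 17, 2, 10, -5, 10, -2, -5, 2, 9, -3, 3, 25, 4, -11]) := by decide +kernel
lemma cert_41 : Cert 41 2 66 (FF 41 [0, 11, -2, 21, -11, -16, -14, -15, 29, 8, 11, -6, 9, -3, 10, -13, -22, -5, -22, 7, 1]) := by decide +kernel
lemma cert_43 : Cert 43 3 844 (FF 43 [0, -29, 106, 90, 20, 27, 13, 195, 167, 19, 25, 137, 98, -17, -218, -142, 139, 47, -84, 300, -55, 6]) := by decide +kernel
end Mih

open NumberField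
open scoped Pointwise
namespace Mih
section fin
variable {p : ℕ} [hp : Fact p.Prime] {K : Type*} [Field K] [NumberField K]
  [hK : IsCyclotomicExtension {p} ℚ K]

lemma integral_aux {q : ℕ} (hq : q ≠ 0) (u : 𝓞 K) (γ : K)
    (h : (u : K) * ((γ + 1) ^ q - γ ^ q) = γ ^ q) : ∃ g : 𝓞 K, (g : K) = γ := by
  have : IsIntegral (𝓞 K) γ := by
    refine ⟨Polynomial.X ^ q + (- (Polynomial.C u * ((Polynomial.X + 1) ^ q - Polynomial.X ^ q))),
      ?_, ?_⟩
    · apply Polynomial.monic_X_pow_add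
      rw [Polynomial.degree_neg]
      have hm : ((Polynomial.X + 1 : Polynomial (𝓞 K)) ^ q).Monic := by
        have := Polynomial.monic_X_add_C (1 : 𝓞 K)
        rw [Polynomial.C_1] at this
        exact this.pow q
      have hd : ((Polynomial.X + 1 : Polynomial (𝓞 K)) ^ q).degree = q := by
        have := Polynomial.degree_X_add_C (1 : 𝓞 K)
        rw [Polynomial.C_1] at this
        rw [Polynomial.degree_pow, this]; simp
      have h1 : ((Polynomial.X + 1 : Polynomial (𝓞 K)) ^ q - Polynomial.X ^ q).degree < (q : WithBot ℕ) := by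
        have := Polynomial.degree_sub_lt_left (p := (Polynomial.X + 1 : Polynomial (𝓞 K)) ^ q)
          (q := Polynomial.X ^ q) (by rw [hd, Polynomial.degree_X_pow]) hm.ne_zero
          (by rw [hm.leadingCoeff, (Polynomial.monic_X_pow q).leadingCoeff])
        rwa [hd] at this
      refine lt_of_le_of_lt ?_ h1
      refine (Polynomial.degree_mul_le _ _).trans ?_
      exact (add_le_add Polynomial.degree_C_le le_rfl).trans_eq (zero_add _)
    · simp only [Polynomial.eval₂_add, Polynomial.eval₂_pow, Polynomial.eval₂_X, Polynomial.eval₂_neg,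
        Polynomial.eval₂_mul, Polynomial.eval₂_C, Polynomial.eval₂_sub, Polynomial.eval₂_one]
      change _ + -((u : K) * _) = 0
      rw [h]
      ring
  have h2 : IsIntegral ℤ γ := isIntegral_trans (R := ℤ) (A := 𝓞 K) γ this
  exact ⟨⟨γ, h2⟩, rfl⟩

/-- Algebraic part of the final argument. -/
lemma algpart {ζ : 𝓞 K} (hζ : IsPrimitiveRoot ζ p) (hpo : p ≠ 2) {q : ℕ} (hq : q.Prime)
    (hqp : p < q) (x : ℤ) (u0 : 𝓞 K) (hu : u0 * (1 - ζ) = x - ζ) (hu0 : u0 ≠ 0)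
    (αB : K) (hα : αB ^ q * ((sg K (-1 : (ZMod p)ˣ) • u0 : 𝓞 K) : K) = (u0 : K)) :
    ∃ u v g ρ ζ' : 𝓞 K, ζ * ζ' = 1 ∧ sg K (-1 : (ZMod p)ˣ) • ζ = ζ' ∧ (1 + ζ) * v = 1 ∧
      u = - (sg K (-1 : (ZMod p)ˣ) • u0) * v ∧ u * (ζ' - ζ) = x - ζ' ∧ u ≠ 0 ∧ g ≠ 0 ∧ ζ' ≠ ζ ∧
      u * ((g + 1) ^ q - g ^ q) = g ^ q ∧ ρ ^ (2 * p) = 1 ∧ ρ ^ q * ζ = - 1 ∧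
      IsUnit ((g + 1) ^ q - g ^ q) := by
  have hζ' : sg K (-1 : (ZMod p)ˣ) • ζ = ζ ^ (p - 1) := by
    rw [sg_root _ hζ.pow_eq_one]
    have : NeZero (1 : ZMod p) := ⟨one_ne_zero⟩
    rw [Units.val_neg, Units.val_one, ZMod.val_neg_of_ne_zero, ZMod.val_one'' hp.out.one_lt.ne']
  have hzz : ζ * ζ ^ (p - 1) = 1 := by
    rw [← pow_succ', Nat.sub_add_cancel hp.out.one_le, hζ.pow_eq_one]
  set ζ' := ζ ^ (p - 1) with hζdef
  have h20 : (2 : ZMod p) ≠ 0 := by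
    have : ((2 : ℕ) : ZMod p) ≠ 0 := by
      rw [Ne, ZMod.natCast_eq_zero_iff]
      intro h
      exact hpo (((Nat.prime_dvd_prime_iff_eq hp.out Nat.prime_two).1 h))
    exact_mod_cast this
  have hval2 : ((Units.mk0 (2 : ZMod p) h20 : (ZMod p)ˣ) : ZMod p).val = 2 := by
    have : ((2 : ℕ) : ZMod p).val = 2 := by
      rw [ZMod.val_natCast, Nat.mod_eq_of_lt]; have := hp.out.two_le; omega
    simpa using this
  have hπ0 : (1 : 𝓞 K) - ζ ≠ 0 := by
    intro h
    exact hζ.ne_one hp.out.one_lt (sub_eq_zero.1 h).symm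
  obtain ⟨v, hv⟩ := dvd_sg' (K := K) hζ (Units.mk0 (2 : ZMod p) h20)
  rw [smul_sub, smul_one, sg_root _ hζ.pow_eq_one, hval2] at hv
  have hv1 : (1 + ζ) * v = 1 := by
    apply mul_left_cancel₀ hπ0
    rw [mul_one]; nth_rewrite 2 [hv]; ring
  have hub : (sg K (-1 : (ZMod p)ˣ) • u0) * (1 - ζ') = x - ζ' := by
    have := congrArg (fun z => sg K (-1 : (ZMod p)ˣ) • z) hu
    simpa only [smul_mul', smul_sub, smul_one, hζ', sg_int] using this
  set ub := sg K (-1 : (ZMod p)ˣ) • u0 with hubdef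
  have hub0 : ub ≠ 0 := by
    intro h; exact hu0 ((smul_eq_zero_iff_eq _).1 h)
  have hv0 : v ≠ 0 := by rintro rfl; simp at hv1
  have huu : (-ub * v) * (ζ' - ζ) = x - ζ' := by
    rw [← hub]
    linear_combination ub * (1 - ζ') * hv1 + ub * v * hzz
  have hne : ζ' ≠ ζ := by
    intro h
    apply hπ0
    have h1 : (1 - ζ) * (1 + ζ) = 0 := by rw [h] at hzz; linear_combination -hzz
    calc (1 - ζ) = (1 - ζ) * ((1 + ζ) * v) := by rw [hv1, mul_one]
      _ = ((1 - ζ) * (1 + ζ)) * v := by ring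
      _ = 0 := by rw [h1, zero_mul]
  clear_value ζ' ub
  obtain ⟨η, hη, hη2⟩ := root_pow (K := K) hq hpo hqp (-ζ) ⟨2 * p, by have := hp.out.pos; omega, by
    rw [pow_mul, neg_sq, pow_right_comm, hζ.pow_eq_one, one_pow]⟩
  set u : 𝓞 K := -ub * v with hudef
  have hu00 : u ≠ 0 := mul_ne_zero (neg_ne_zero.2 hub0) hv0
  have hu1 : (u + 1) = ζ * u0 * v := by
    apply mul_right_cancel₀ (sub_ne_zero.2 hne)
    linear_combination huu - u0 * v * hzz - u0 * (1 - ζ) * hv1 - hu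
  set α : K := (η : K) * αB with hαdef
  have hαq : α ^ q * (u : K) = (u : K) + 1 := by
    have h1 : ((u + 1 : 𝓞 K) : K) = ζ * u0 * v := by rw [hu1]; simp
    have h2 : (u : K) = - ub * v := by rw [hudef]; simp
    have h3 : ((η : K)) ^ q = -ζ := by rw [← map_pow, hη]; simp
    have h4 : ((u + 1 : 𝓞 K) : K) = u + 1 := by simp
    rw [← h4, h1, h2, hαdef, mul_pow, h3]
    linear_combination (ζ : K) * v * hα
  have hα1 : α - 1 ≠ 0 := by
    intro h
    rw [sub_eq_zero.1 h, one_pow, one_mul] at hαq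
    simp at hαq
  set γ : K := 1 / (α - 1) with hγ
  have hγα : γ * α = γ + 1 := by rw [hγ]; field_simp; ring
  have hγ0 : γ ≠ 0 := by rw [hγ]; exact one_div_ne_zero hα1
  have hmain : (u : K) * ((γ + 1) ^ q - γ ^ q) = γ ^ q := by
    rw [← hγα, mul_pow]
    linear_combination γ ^ q * hαq
  obtain ⟨g, hg⟩ := integral_aux hq.ne_zero u γ hmain
  have hg0 : g ≠ 0 := by rintro rfl; apply hγ0; rw [← hg]; simp
  have hmain' : u * ((g + 1) ^ q - g ^ q) = g ^ q := by
    apply RingOfIntegers.ext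
    rw [← hg] at hmain
    simpa using hmain
  have hηη : η ^ (2 * p - 1) * η = 1 := by
    rw [← pow_succ, Nat.sub_add_cancel (by have := hp.out.pos; omega), hη2]
  refine ⟨u, v, g, η ^ (2 * p - 1), ζ', hzz, hζ', hv1, rfl, huu, hu00, hg0, hne, hmain', ?_, ?_, ?_⟩
  · rw [pow_right_comm, hη2, one_pow]
  · have h1 := congrArg (fun z => z ^ q) hηη
    simp only [mul_pow, hη, one_pow] at h1
    linear_combination -h1
  · have hc : IsCoprime (g + 1) g := ⟨1, -1, by ring⟩
    have hc2 : IsCoprime ((g + 1) ^ q - g ^ q) (g ^ q) := by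
      have := IsCoprime.add_mul_right_left (hc.pow (m := q) (n := q)) (-1)
      convert this using 1; ring
    exact hc2.isUnit_of_dvd' dvd_rfl ⟨u, by rw [mul_comm]; exact hmain'.symm⟩
end fin
end Mih

open NumberField
open scoped Pointwise
namespace Mih
section fin
variable {p : ℕ} [hp : Fact p.Prime] {K : Type*} [Field K] [NumberField K]
  [hK : IsCyclotomicExtension {p} ℚ K]

lemma norm_one_sub {ζ : 𝓞 K} (hζ : IsPrimitiveRoot ζ p) (hpo : p ≠ 2) :
    Algebra.norm ℤ (1 - ζ) = p := by
  have h1 : IsPrimitiveRoot (ζ : K) p := hζ.map_of_injective RingOfIntegers.coe_injective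
  have h2 := h1.norm_toInteger_sub_one_of_prime_ne_two' hpo
  have h3 : h1.toInteger = ζ := RingOfIntegers.ext rfl
  rw [h3] at h2
  have h4 : Associated (ζ - 1) (1 - ζ) := ⟨-1, by simp⟩
  have h5 : (1 - ζ) = (-1 : 𝓞 K) * (ζ - 1) := by ring
  have h6 : Algebra.norm ℤ (-1 : 𝓞 K) = 1 := by
    have := Algebra.norm_algebraMap_of_basis (RingOfIntegers.basis K) (-1 : ℤ)
    rw [← Module.finrank_eq_card_basis (RingOfIntegers.basis K), RingOfIntegers.rank,
      finrank_eq (p := p), ((hp.out.even_sub_one hpo)).neg_one_pow] at this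
    rw [← this]; simp
  rw [h5, map_mul, h6, h2, one_mul]

lemma p_eq {ζ : 𝓞 K} (hζ : IsPrimitiveRoot ζ p) (hpo : p ≠ 2) :
    ∏ a : (ZMod p)ˣ, sg K a • (1 - ζ) = (p : 𝓞 K) := by
  rw [norm_eq, norm_one_sub hζ hpo]; simp

lemma p_dvd {ζ : 𝓞 K} (hζ : IsPrimitiveRoot ζ p) (hpo : p ≠ 2) :
    (p : 𝓞 K) ∣ (1 - ζ) ^ (p - 1) := by
  rw [← p_eq hζ hpo]
  have : (1 - ζ) ^ (p - 1) = ∏ a : (ZMod p)ˣ, (1 - ζ) := by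
    rw [Finset.prod_const, Finset.card_univ, ZMod.card_units_eq_totient, Nat.totient_prime hp.out]
  rw [this]
  exact Finset.prod_dvd_prod_of_dvd _ _ (fun a _ => dvd_sg' hζ a)

lemma dvd_p {ζ : 𝓞 K} (hζ : IsPrimitiveRoot ζ p) (hpo : p ≠ 2) :
    (1 - ζ) ^ (p - 1) ∣ (p : 𝓞 K) := by
  rw [← p_eq hζ hpo]
  have : (1 - ζ) ^ (p - 1) = ∏ a : (ZMod p)ˣ, (1 - ζ) := by
    rw [Finset.prod_const, Finset.card_univ, ZMod.card_units_eq_totient, Nat.totient_prime hp.out]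
  rw [this]
  exact Finset.prod_dvd_prod_of_dvd _ _ (fun a _ => dvd_sg hζ a)

lemma max_one_sub {ζ : 𝓞 K} (hζ : IsPrimitiveRoot ζ p) :
    (Ideal.span {1 - ζ} : Ideal (𝓞 K)).IsMaximal := by
  have h1 : IsPrimitiveRoot (ζ : K) p := hζ.map_of_injective RingOfIntegers.coe_injective
  have h2 := h1.zeta_sub_one_prime'
  have h3 : h1.toInteger = ζ := RingOfIntegers.ext rfl
  rw [h3, ← neg_sub] at h2
  have h4 : Prime (1 - ζ) := by simpa using h2.neg
  exact ((Ideal.span_singleton_prime h4.ne_zero).2 h4).isMaximal (by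
    rw [Ne, Ideal.span_singleton_eq_bot]; exact h4.ne_zero)

lemma card_one_sub {ζ : 𝓞 K} (hζ : IsPrimitiveRoot ζ p) (hpo : p ≠ 2) :
    Nat.card (𝓞 K ⧸ Ideal.span {1 - ζ}) = p := by
  rw [← Submodule.cardQuot_apply, ← Ideal.absNorm_apply, Ideal.absNorm_span_singleton,
    norm_one_sub hζ hpo, Int.natAbs_natCast]

/-- `p`-adic part of the final argument. -/
lemma padic {ζ : 𝓞 K} (hζ : IsPrimitiveRoot ζ p) (hpo : p ≠ 2) {q : ℕ} (hq : q.Prime)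
    (hqp : p < q) (x : ℤ) (hx : (p : ℤ) ^ (q - 1) ∣ x - 1) (hx1 : x ≠ 1) (u0 : 𝓞 K)
    (hu1 : 1 - ζ ∣ u0 - 1) (u v g ρ ζ' : 𝓞 K) (hzz : ζ * ζ' = 1) (hv : (1 + ζ) * v = 1)
    (hu : u = - (sg K (-1 : (ZMod p)ˣ) • u0) * v) (huu : u * (ζ' - ζ) = x - ζ') (hu0 : u ≠ 0)
    (hg : u * ((g + 1) ^ q - g ^ q) = g ^ q) (hρ : ρ ^ q * ζ = -1) :
    (p : 𝓞 K) ^ (q - 2) ∣ ρ * (g + 1) - g ∧ ρ * (g + 1) - g ≠ 0 := by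
  set P : Ideal (𝓞 K) := Ideal.span {1 - ζ} with hP
  have hPm : P.IsMaximal := max_one_sub hζ
  letI : Field (𝓞 K ⧸ P) := Ideal.Quotient.field P
  have hcard : Nat.card (𝓞 K ⧸ P) = p := card_one_sub hζ hpo
  set π := Ideal.Quotient.mk P with hπ
  have h1mem : 1 - ζ ∈ P := Ideal.mem_span_singleton_self _
  have hπ0 : (1 : 𝓞 K) - ζ ≠ 0 := by
    intro h
    exact hζ.ne_one hp.out.one_lt (sub_eq_zero.1 h).symm
  set β := ρ * (g + 1) with hβ
  set δ := (g + 1) ^ q - g ^ q with hδ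
  have hE : (1 - ζ) * (β ^ q - g ^ q) = - δ * (x - 1) := by
    have hζ0 : ζ ≠ 0 := left_ne_zero_of_mul_eq_one hzz
    apply mul_left_cancel₀ hζ0
    have e1 : (g + 1) ^ q = δ + g ^ q := by rw [hδ]; ring
    rw [hβ, mul_pow, e1, ← hg]
    have e2 : ζ * (ρ ^ q * (δ + u * δ) - u * δ) = - (δ + u * δ) - ζ * u * δ := by
      linear_combination (δ + u * δ) * hρ
    have e3 : (1 + ζ) * u * (1 - ζ) = x * ζ - 1 := by
      linear_combination ζ * huu - (u + 1) * hzz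
    linear_combination (1 - ζ) * e2 - δ * e3
  have hmem0 : ∀ z, π z = 0 ↔ z ∈ P := fun z => Ideal.Quotient.eq_zero_iff_mem
  have hub : π (sg K (-1 : (ZMod p)ˣ) • u0) = 1 := by
    obtain ⟨w, hw⟩ := hu1
    have h3 : sg K (-1 : (ZMod p)ˣ) • (u0 - 1) ∈ P := by
      rw [hw, smul_mul']; exact P.mul_mem_right _ (Ideal.mem_of_dvd _ (dvd_sg hζ _) h1mem)
    rw [← hmem0, smul_sub, smul_one, map_sub, map_one] at h3
    exact sub_eq_zero.1 h3
  have hπv : π v ≠ 0 := by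
    intro h
    have := congrArg π hv
    rw [map_mul, h, mul_zero, map_one] at this
    exact zero_ne_one this
  have hπu : π u ≠ 0 := by
    rw [hu, map_mul, map_neg, hub]
    simpa using hπv
  have hπg : π g ≠ 0 := by
    intro h
    apply hπu
    have := congrArg π hg
    rw [hδ] at this
    simpa [h, hq.ne_zero] using this
  have hp2 : 2 ≤ p := hp.out.two_le
  obtain ⟨w, hw⟩ : 1 - ζ ∣ (p : 𝓞 K) := (dvd_pow_self _ (by omega)).trans (dvd_p hζ hpo)
  obtain ⟨c, hc⟩ := hx
  have hdvd : β ^ q - g ^ q = (p : 𝓞 K) ^ (q - 2) * (- δ * w * c) := by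
    apply mul_left_cancel₀ hπ0
    rw [hE]
    have e1 : (x : 𝓞 K) - 1 = (p : 𝓞 K) ^ (q - 1) * c := by exact_mod_cast congrArg (Int.cast : ℤ → 𝓞 K) hc
    have e2 : q - 1 = (q - 2) + 1 := by omega
    rw [e1, e2, pow_succ]
    linear_combination (- δ * c * (p : 𝓞 K) ^ (q - 2)) * hw
  have hπp : π (p : 𝓞 K) = 0 := by
    rw [hw, map_mul, (hmem0 _).2 h1mem, zero_mul]
  have hβg : π β = π g := by
    have h1 : π β ^ q = π g ^ q := by
      rw [← sub_eq_zero, ← map_pow, ← map_pow, ← map_sub, hdvd, map_mul, map_pow, hπp,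
        zero_pow (by omega), zero_mul]
    have h2 : (π β / π g) ^ q = 1 := by
      rw [div_pow, h1, div_self (pow_ne_zero _ hπg)]
    have hfin : Finite (𝓞 K ⧸ P) := by
      apply Nat.finite_of_card_ne_zero; rw [hcard]; omega
    letI : Fintype (𝓞 K ⧸ P) := Fintype.ofFinite _
    have h3 : (π β / π g) ^ (p - 1) = 1 := by
      have := FiniteField.pow_card_sub_one_eq_one (π β / π g) (by
        intro h; rw [h, zero_pow hq.ne_zero] at h2; exact zero_ne_one h2)
      rwa [← Nat.card_eq_fintype_card, hcard] at this
    have hcop : Nat.Coprime q (p - 1) := by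
      rw [Nat.Prime.coprime_iff_not_dvd hq]
      intro h
      have := Nat.le_of_dvd (by omega) h
      omega
    have h4 := orderOf_dvd_of_pow_eq_one h2
    have h5 := orderOf_dvd_of_pow_eq_one h3
    have h6 := Nat.dvd_gcd h4 h5
    rw [hcop, Nat.dvd_one, orderOf_eq_one_iff] at h6
    exact (div_eq_one_iff_eq hπg).1 h6
  have hS := geom_sum₂_mul β g q
  set S := ∑ i ∈ Finset.range q, β ^ i * g ^ (q - 1 - i) with hSdef
  have hπS : π S ≠ 0 := by
    have e1 : π S = q * π g ^ (q - 1) := by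
      rw [hSdef, map_sum, Finset.sum_congr rfl (g := fun _ => π g ^ (q - 1))]
      · simp
      · intro i hi
        rw [map_mul, map_pow, map_pow, hβg, ← pow_add]
        congr 1
        have := Finset.mem_range.1 hi
        omega
    rw [e1]
    apply mul_ne_zero _ (pow_ne_zero _ hπg)
    intro h
    have hcop : IsCoprime (p : ℤ) (q : ℤ) := by
      rw [Nat.isCoprime_iff_coprime, Nat.coprime_primes hp.out hq]; omega
    obtain ⟨a, b, hab⟩ := hcop
    have := congrArg (Int.cast : ℤ → 𝓞 K ⧸ P) hab
    push_cast at this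
    rw [h, ← map_natCast π p, hπp] at this
    simp at this
  have hcS : IsCoprime S (1 - ζ) := by
    rw [← Ideal.isCoprime_span_singleton_iff, Ideal.isCoprime_iff_sup_eq, sup_comm]
    have hlt : P < P ⊔ Ideal.span {S} := by
      refine lt_of_le_of_ne le_sup_left ?_
      intro h
      apply hπS
      rw [hmem0, h]
      exact Ideal.mem_sup_right (Ideal.mem_span_singleton_self _)
    exact hPm.1.2 _ hlt
  have hcp : IsCoprime S ((p : 𝓞 K) ^ (q - 2)) := by
    apply IsCoprime.pow_right
    exact (hcS.pow_right (n := p - 1)).of_isCoprime_of_dvd_right (p_dvd hζ hpo)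
  constructor
  · apply hcp.symm.dvd_of_dvd_mul_left
    rw [hS, hdvd]; exact dvd_mul_right _ _
  · intro h
    have h1 : β ^ q - g ^ q = 0 := by rw [sub_eq_zero.1 h, sub_self]
    rw [h1, mul_zero] at hE
    have h2 := hE.symm
    rw [mul_eq_zero, neg_eq_zero] at h2
    rcases h2 with h2 | h2
    · have hg0 : g ^ q = 0 := by rw [← hg, h2, mul_zero]
      apply hπg
      rw [eq_zero_of_pow_eq_zero hg0, map_zero]
    · apply hx1
      have : ((x - 1 : ℤ) : 𝓞 K) = 0 := by push_cast; exact h2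
      have := Int.cast_eq_zero.1 this
      omega
end fin
end Mih

open NumberField
open scoped Pointwise
namespace Mih
section fin
variable {p : ℕ} [hp : Fact p.Prime] {K : Type*} [Field K] [NumberField K]
  [hK : IsCyclotomicExtension {p} ℚ K]

lemma card_emb : Fintype.card (K →+* ℂ) = p - 1 := by
  rw [NumberField.Embeddings.card, finrank_eq (p := p)]

lemma geom_bound (q : ℕ) (a : ℂ) (ha : ‖a‖ = 1) (h : ‖a - 1‖ * q ≤ 1) :
    (q : ℝ) / 2 ≤ ‖∑ j ∈ Finset.range q, a ^ j‖ := by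
  have h1 : ∀ j : ℕ, ‖a ^ j - 1‖ ≤ j * ‖a - 1‖ := by
    intro j
    induction j with
    | zero => simp
    | succ j ih =>
      have : a ^ (j + 1) - 1 = a * (a ^ j - 1) + (a - 1) := by ring
      rw [this]
      refine (norm_add_le _ _).trans ?_
      rw [norm_mul, ha, one_mul]
      push_cast
      linarith
  have h2 : ‖∑ j ∈ Finset.range q, (a ^ j - 1)‖ ≤ (q : ℝ) / 2 := by
    refine (norm_sum_le _ _).trans ?_
    refine (Finset.sum_le_sum (fun j _ => h1 j)).trans ?_
    rw [← Finset.sum_mul]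
    have h3 : (∑ i ∈ Finset.range q, (i : ℝ)) * 2 ≤ q * q := by
      have := Finset.sum_range_id_mul_two q
      have h4 : (∑ i ∈ Finset.range q, (i : ℝ)) * 2 = ((q * (q - 1) : ℕ) : ℝ) := by
        rw [← this]; push_cast; rfl
      rw [h4]
      exact_mod_cast Nat.mul_le_mul_left q (Nat.sub_le q 1)
    have h5 : 0 ≤ ‖a - 1‖ := norm_nonneg _
    nlinarith [Nat.cast_nonneg (α := ℝ) q]
  have h3 : ∑ j ∈ Finset.range q, a ^ j = (q : ℂ) + ∑ j ∈ Finset.range q, (a ^ j - 1) := by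
    simp
  have h4 := norm_sub_norm_le (q : ℂ) (-∑ j ∈ Finset.range q, (a ^ j - 1))
  rw [sub_neg_eq_add, ← h3, norm_neg, Complex.norm_natCast] at h4
  linarith

lemma three_pow (q : ℕ) (hq : 5 ≤ q) : 2 * q < 3 ^ (q - 2) := by
  obtain ⟨n, rfl⟩ := Nat.exists_eq_add_of_le hq
  induction n with
  | zero => norm_num
  | succ n ih =>
    have := ih (by omega)
    have e : 5 + (n + 1) - 2 = (5 + n - 2) + 1 := by omega
    rw [e, pow_succ]; omega

lemma final {ζ : 𝓞 K} (hζ : IsPrimitiveRoot ζ p) (hpo : p ≠ 2) {q : ℕ} (hq : q.Prime)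
    (hqp : p < q) (x b : ℤ) (hx : (p : ℤ) ^ (q - 1) ∣ x - 1) (hx1 : x ≠ 1) (u0 : 𝓞 K)
    (hu : u0 * (1 - ζ) = x - ζ) (hu1 : 1 - ζ ∣ u0 - 1) (hN : Algebra.norm ℤ u0 = b ^ q)
    (hu0 : u0 ≠ 0)
    (αB : K) (hα : αB ^ q * ((sg K (-1 : (ZMod p)ˣ) • u0 : 𝓞 K) : K) = (u0 : K)) : False := by
  classical
  obtain ⟨u, v, g, ρ, ζ', hzz, hζ', hv, hudef, huu, hu00, hg0, hne, hg, hρ, hρq, hδ⟩ :=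
    algpart hζ hpo hq hqp x u0 hu hu0 αB hα
  obtain ⟨hd, hd0⟩ := padic hζ hpo hq hqp x hx hx1 u0 hu1 u v g ρ ζ' hzz hv hudef huu hu00 hg hρq
  have hp3 : 3 ≤ p := by have := hp.out.two_le; omega
  have hq5 : 5 ≤ q := by
    by_contra h
    have : q = 4 := by omega
    subst this; revert hq; norm_num
  have hinj : ∀ φ : K →+* ℂ, ∀ z : 𝓞 K, z ≠ 0 → φ (z : K) ≠ 0 := by
    intro φ z hz h
    apply hz
    rw [map_eq_zero] at h
    exact RingOfIntegers.ext (by simpa using h)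
  have hφζ : ∀ φ : K →+* ℂ, ‖φ (ζ : K)‖ = 1 := by
    intro φ
    apply Complex.norm_eq_one_of_pow_eq_one (n := p) _ hp.out.ne_zero
    have := congrArg (fun z : 𝓞 K => φ (z : K)) hζ.pow_eq_one
    simpa using this
  have hφζ' : ∀ φ : K →+* ℂ, φ (ζ' : K) = (starRingEnd ℂ) (φ (ζ : K)) := by
    intro φ; rw [← hζ', conj_sg']
  have hφρ : ∀ φ : K →+* ℂ, ‖φ (ρ : K)‖ = 1 := by
    intro φ
    apply Complex.norm_eq_one_of_pow_eq_one (n := 2 * p) _ (by omega)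
    have := congrArg (fun z : 𝓞 K => φ (z : K)) hρ
    simpa using this
  have hxz : ∀ φ : K →+* ℂ, ‖(x : ℂ) - φ (ζ' : K)‖ = ‖(x : ℂ) - φ (ζ : K)‖ := by
    intro φ
    rw [hφζ', ← RCLike.norm_conj ((x : ℂ) - φ (ζ : K)), map_sub]; simp
  have hφu : ∀ φ : K →+* ℂ, φ (u : K) * (φ (ζ' : K) - φ (ζ : K)) = x - φ (ζ' : K) := by
    intro φ
    have := congrArg (fun z : 𝓞 K => φ (z : K)) huu
    simpa using this
  have hφu1 : ∀ φ : K →+* ℂ, (φ (u : K) + 1) * (φ (ζ' : K) - φ (ζ : K)) = x - φ (ζ : K) := by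
    intro φ; linear_combination hφu φ
  have hφne : ∀ φ : K →+* ℂ, φ (ζ' : K) - φ (ζ : K) ≠ 0 := by
    intro φ
    have := hinj φ (ζ' - ζ) (sub_ne_zero.2 hne)
    simpa using this
  have hφg : ∀ φ : K →+* ℂ, φ (u : K) * ((φ (g : K) + 1) ^ q - φ (g : K) ^ q) = φ (g : K) ^ q := by
    intro φ
    have := congrArg (fun z : 𝓞 K => φ (z : K)) hg
    simpa using this
  have hA : ∀ φ : K →+* ℂ, ‖φ (g : K) + 1‖ = ‖φ (g : K)‖ := by
    intro φ
    have h1 : ‖φ (u : K) + 1‖ = ‖φ (u : K)‖ := by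
      have h2 := congrArg norm (hφu φ)
      have h3 := congrArg norm (hφu1 φ)
      rw [norm_mul] at h2 h3
      rw [hxz, ← h3] at h2
      exact (mul_right_cancel₀ (norm_ne_zero_iff.2 (hφne φ)) h2).symm
    have h2 : φ (u : K) * (φ (g : K) + 1) ^ q = (φ (u : K) + 1) * φ (g : K) ^ q := by
      linear_combination hφg φ
    have h3 := congrArg norm h2
    rw [norm_mul, norm_mul, h1, norm_pow, norm_pow] at h3
    have h4 := mul_left_cancel₀ (norm_ne_zero_iff.2 (hinj φ u hu00)) h3
    exact (pow_left_inj₀ (norm_nonneg _) (norm_nonneg _) hq.ne_zero).1 h4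
  have hhalf : ∀ φ : K →+* ℂ, 1 ≤ 2 * ‖φ (g : K)‖ := by
    intro φ
    have h1 : ‖(1 : ℂ)‖ ≤ ‖φ (g : K) + 1‖ + ‖φ (g : K)‖ := by
      have := norm_sub_le (φ (g : K) + 1) (φ (g : K))
      simpa using this
    rw [hA, norm_one] at h1
    linarith
  -- norms
  have hNg : |((Algebra.norm ℤ g : ℤ) : ℝ)| = |(b : ℝ)| := by
    have h1 := congrArg (fun z => |Algebra.norm ℤ z|) hg
    have hunit : ∀ z : 𝓞 K, IsUnit z → |Algebra.norm ℤ z| = 1 := by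
      intro z hz
      exact Int.isUnit_iff_abs_eq.1 (hz.map (Algebra.norm ℤ))
    have hv' : IsUnit v := IsUnit.of_mul_eq_one (1 + ζ) (by rw [mul_comm]; exact hv)
    have hneg : |Algebra.norm ℤ (-(sg K (-1 : (ZMod p)ˣ) • u0))| = |b| ^ q := by
      rw [neg_eq_neg_one_mul, map_mul, abs_mul, hunit _ (isUnit_one.neg), one_mul, norm_sg, hN, abs_pow]
    simp only [map_mul, map_pow, abs_mul, abs_pow, hunit _ hδ, mul_one, hudef, hneg, hunit _ hv'] at h1
    have h2 := (pow_left_inj₀ (abs_nonneg _) (abs_nonneg _) hq.ne_zero).1 h1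
    rw [← Int.cast_abs, ← h2, Int.cast_abs]
  have hNb : |(b : ℝ)| = ∏ φ : K →+* ℂ, ‖φ (g : K)‖ := by rw [← hNg, norm_abs]
  have hp0 : (0 : ℝ) < p := by exact_mod_cast hp.out.pos
  have hlower : ((p : ℝ) ^ (q - 2)) ^ (p - 1) ≤ ∏ φ : K →+* ℂ, (2 * ‖φ (g : K)‖) := by
    obtain ⟨w, hw⟩ := hd
    have hw0 : w ≠ 0 := by rintro rfl; rw [mul_zero] at hw; exact hd0 hw
    have h1 : (1 : ℝ) ≤ |((Algebra.norm ℤ w : ℤ) : ℝ)| := by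
      have : Algebra.norm ℤ w ≠ 0 := Algebra.norm_ne_zero_iff.2 hw0
      exact_mod_cast Int.one_le_abs this
    have h2 : |((Algebra.norm ℤ (ρ * (g + 1) - g) : ℤ) : ℝ)| ≤ ∏ φ : K →+* ℂ, (2 * ‖φ (g : K)‖) := by
      rw [norm_abs]
      apply Finset.prod_le_prod
      · intro φ _; exact norm_nonneg _
      · intro φ _
        have e : φ ((ρ * (g + 1) - g : 𝓞 K) : K) = φ (ρ : K) * (φ (g : K) + 1) - φ (g : K) := by simp
        rw [e]
        refine (norm_sub_le _ _).trans ?_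
        rw [norm_mul, hφρ, hA]; linarith
    refine le_trans ?_ h2
    rw [hw, map_mul, Int.cast_mul, abs_mul]
    have e3 : |((Algebra.norm ℤ ((p : 𝓞 K) ^ (q - 2)) : ℤ) : ℝ)| = ((p : ℝ) ^ (q - 2)) ^ (p - 1) := by
      rw [norm_abs]
      have : ∀ φ : K →+* ℂ, ‖φ (((p : 𝓞 K) ^ (q - 2) : 𝓞 K) : K)‖ = (p : ℝ) ^ (q - 2) := by
        intro φ; simp
      simp_rw [this]
      rw [Finset.prod_const, Finset.card_univ, card_emb (p := p)]
    rw [e3]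
    exact le_mul_of_one_le_right (by positivity) h1
  by_cases hcase : ∀ φ : K →+* ℂ, ‖φ (g : K)‖ ≤ q
  · have h1 : ∏ φ : K →+* ℂ, (2 * ‖φ (g : K)‖) ≤ (2 * q : ℝ) ^ (p - 1) := by
      rw [← card_emb (p := p) (K := K), ← Finset.card_univ, ← Finset.prod_const]
      apply Finset.prod_le_prod
      · intro φ _; positivity
      · intro φ _; have := hcase φ; linarith
    have h2 := hlower.trans h1
    have h3 : (p : ℝ) ^ (q - 2) ≤ 2 * q :=
      (pow_le_pow_iff_left₀ (by positivity) (by positivity) (by omega : p - 1 ≠ 0)).1 h2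
    have h4 : p ^ (q - 2) ≤ 2 * q := by exact_mod_cast h3
    have h5 := three_pow q hq5
    have h6 := Nat.pow_le_pow_left hp3 (q - 2)
    omega
  · push Not at hcase
    obtain ⟨φ, hφ⟩ := hcase
    -- size of x
    have hX : ((3 : ℝ) ^ p) - 1 ≤ |(x : ℝ)| := by
      have h1 : (p : ℤ) ^ (q - 1) ≤ |x - 1| := Int.le_of_dvd (abs_pos.2 (sub_ne_zero.2 hx1)) ((dvd_abs _ _).2 hx)
      have h2 : (3 : ℤ) ^ p ≤ (p : ℤ) ^ (q - 1) := by
        calc (3 : ℤ) ^ p ≤ 3 ^ (q - 1) := pow_le_pow_right₀ (by norm_num) (by omega)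
          _ ≤ _ := by gcongr; exact_mod_cast hp3
      have h3 : |x - 1| ≤ |x| + 1 := by simpa using abs_sub x 1
      have h4 : (3 : ℤ) ^ p ≤ |x| + 1 := by linarith
      have h5 : (3 : ℝ) ^ p ≤ |(x : ℝ)| + 1 := by exact_mod_cast h4
      linarith
    set X := |(x : ℝ)| with hXdef
    have h27 : (27 : ℝ) ≤ 3 ^ p := by
      calc (27 : ℝ) = 3 ^ 3 := by norm_num
        _ ≤ 3 ^ p := pow_le_pow_right₀ (by norm_num) hp3
    have h23 : (2 : ℝ) ^ p ≤ 3 ^ p := by gcongr; norm_num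
    have hnx : ‖(x : ℂ)‖ = X := by rw [hXdef]; simp
    have hb : |(b : ℝ)| ≤ X + 1 := by
      have h1 : |((Algebra.norm ℤ (u0 * (1 - ζ)) : ℤ) : ℝ)| ≤ (X + 1) ^ (p - 1) := by
        rw [hu, norm_abs, ← card_emb (p := p) (K := K), ← Finset.card_univ, ← Finset.prod_const]
        apply Finset.prod_le_prod
        · intro φ _; positivity
        · intro φ _
          have e : φ (((x : 𝓞 K) - ζ : 𝓞 K) : K) = x - φ (ζ : K) := by simp
          rw [e]
          refine (norm_sub_le _ _).trans ?_
          rw [hφζ, hnx]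
      rw [map_mul, hN, norm_one_sub hζ hpo] at h1
      push_cast at h1
      rw [abs_mul, abs_pow] at h1
      have h2 : |(b : ℝ)| ^ q ≤ (X + 1) ^ q := by
        have h3 : (X + 1) ^ (p - 1) ≤ (X + 1) ^ q := pow_le_pow_right₀ (by linarith) (by omega)
        have h4 : |(b : ℝ)| ^ q ≤ |(b : ℝ)| ^ q * |(p : ℝ)| := by
          apply le_mul_of_one_le_right (by positivity)
          rw [abs_of_pos hp0]; exact_mod_cast hp.out.one_le
        linarith
      exact (pow_le_pow_iff_left₀ (by positivity) (by linarith) hq.ne_zero).1 h2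
    -- big conjugate
    set G := φ (g : K) with hG
    have hG0 : G ≠ 0 := hinj φ g hg0
    have hbig : (q : ℝ) * (X - 1) / 4 ≤ ‖G‖ := by
      set a := (G + 1) / G with ha
      have ha1 : ‖a‖ = 1 := by
        rw [ha, norm_div, hA, div_self (norm_ne_zero_iff.2 hG0)]
      have ha2 : a - 1 = 1 / G := by rw [ha]; field_simp; ring
      have ha3 : ‖a - 1‖ * q ≤ 1 := by
        rw [ha2, norm_div, norm_one, one_div, inv_mul_le_iff₀ (norm_pos_iff.2 hG0)]
        linarith
      have h1 := geom_bound q a ha1 ha3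
      have h2 : G = φ (u : K) * ∑ j ∈ Finset.range q, a ^ j := by
        have h3 := geom_sum_mul a q
        have h4 : φ (u : K) * (a ^ q - 1) = 1 := by
          rw [ha, div_pow, div_sub_one (pow_ne_zero _ hG0), ← mul_div_assoc, hφg,
            div_self (pow_ne_zero _ hG0)]
        rw [← h3, ha2] at h4
        field_simp at h4
        linear_combination -h4
      have h5 : (X - 1) / 2 ≤ ‖φ (u : K)‖ := by
        have h6 := congrArg norm (hφu φ)
        rw [norm_mul, hxz] at h6
        have h7 : X - 1 ≤ ‖(x : ℂ) - φ (ζ : K)‖ := by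
          have := norm_sub_norm_le (x : ℂ) (φ (ζ : K))
          rwa [hnx, hφζ] at this
        have h8 : ‖φ (ζ' : K) - φ (ζ : K)‖ ≤ 2 := by
          refine (norm_sub_le _ _).trans ?_
          rw [hφζ', RCLike.norm_conj, hφζ]; norm_num
        have h9 := norm_nonneg (φ (u : K))
        nlinarith
      rw [h2, norm_mul]
      calc (q : ℝ) * (X - 1) / 4 = (X - 1) / 2 * (q / 2) := by ring
        _ ≤ _ := by
          apply mul_le_mul h5 h1 (by positivity) (norm_nonneg _)
    have hφφ : φ ≠ ComplexEmbedding.conjugate φ := by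
      intro h
      have h1 := congrArg (fun f : K →+* ℂ => f (ζ : K)) h
      simp only [ComplexEmbedding.conjugate_coe_eq] at h1
      rw [← hφζ'] at h1
      apply hφne φ
      rw [h1, sub_self]
    have hprod : (2 * ‖G‖) ^ 2 ≤ ∏ φ : K →+* ℂ, (2 * ‖φ (g : K)‖) := by
      rw [← Finset.prod_sdiff (Finset.subset_univ ({φ, ComplexEmbedding.conjugate φ} : Finset (K →+* ℂ))),
        Finset.prod_pair hφφ]
      have h1 : (1 : ℝ) ≤ ∏ ψ ∈ Finset.univ \ ({φ, ComplexEmbedding.conjugate φ} : Finset (K →+* ℂ)),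
          (2 * ‖ψ (g : K)‖) := by
        have := Finset.prod_le_prod (s := Finset.univ \ ({φ, ComplexEmbedding.conjugate φ} : Finset (K →+* ℂ)))
          (f := fun _ => (1 : ℝ)) (g := fun ψ => 2 * ‖ψ (g : K)‖) (fun _ _ => zero_le_one)
          (fun ψ _ => hhalf ψ)
        simpa using this
      have h2 : ‖(ComplexEmbedding.conjugate φ) (g : K)‖ = ‖G‖ := by
        rw [ComplexEmbedding.conjugate_coe_eq, RCLike.norm_conj]
      rw [h2, ← hG, ← pow_two]
      exact le_mul_of_one_le_left (by positivity) h1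
    rw [Finset.prod_mul_distrib, ← hNb, Finset.prod_const, Finset.card_univ, card_emb (p := p)] at hprod
    have hq5' : (5 : ℝ) ≤ q := by exact_mod_cast hq5
    have h1 : 2 * (X - 1) ≤ 2 * ‖G‖ := by
      have : (X - 1) * 4 ≤ q * (X - 1) := by nlinarith
      linarith
    have h2 : (2 * (X - 1)) ^ 2 ≤ 2 ^ (p - 1) * (X + 1) := by
      calc (2 * (X - 1)) ^ 2 ≤ (2 * ‖G‖) ^ 2 := by
            apply pow_le_pow_left₀ _ h1; linarith
        _ ≤ _ := hprod.trans (by gcongr)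
    have h3 : (2 : ℝ) ^ (p - 1) * 2 = 2 ^ p := by
      rw [← pow_succ, Nat.sub_add_cancel hp.out.one_le]
    nlinarith
end fin
end Mih

namespace Mih
lemma geom_mod (n : ℕ) (x : ℤ) : x - 1 ∣ (∑ i ∈ Finset.range n, x^i) - n := by
  have : (∑ i ∈ Finset.range n, x^i) - n = ∑ i ∈ Finset.range n, (x^i - 1) := by
    simp [Finset.sum_sub_distrib]
  rw [this]
  exact Finset.dvd_sum fun i _ => sub_one_dvd_pow_sub_one x i

lemma fac {p q : ℕ} (hp : p.Prime) (hq : Odd q) {x y : ℤ} (h : x^p - y^q = 1) (hy : ¬ (p:ℤ) ∣ y) :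
    ∃ a : ℤ, x - 1 = a^q := by
  have hS := mul_geom_sum x p
  set S := ∑ i ∈ Finset.range p, x^i with hSd
  have hpp : Prime (p:ℤ) := Nat.prime_iff_prime_int.1 hp
  have e : (x - 1) * S = y^q := by rw [hS]; linarith
  have hc : IsCoprime (x - 1) S := by
    obtain ⟨c, hc⟩ := geom_mod p x
    have hxp : ¬ (p:ℤ) ∣ x - 1 := fun hd => hy (hpp.dvd_of_dvd_pow (e ▸ hd.mul_right S))
    have : S = p + (x-1) * c := by linarith
    rw [this]
    rw [IsCoprime.add_mul_left_right_iff]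
    exact ((Prime.coprime_iff_not_dvd hpp).2 hxp).symm
  exact Int.eq_pow_of_mul_eq_pow_odd_left hc hq e

lemma pow_gap {M : ℤ} {p : ℕ} (hM : 1 ≤ M) (hp : 2 ≤ p) : M^p + 1 < (M+1)^p := by
  obtain ⟨k, rfl⟩ : ∃ k, p = k + 2 := ⟨p - 2, by omega⟩
  have h1 : M^(k+1) ≤ (M+1)^(k+1) := pow_le_pow_left₀ (by omega) (by omega) _
  have h2 : 2 ≤ (M+1)^(k+1) := by
    have := one_le_pow₀ (n := k) (show 1 ≤ M+1 by omega)
    rw [pow_succ]; nlinarith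
  calc M^(k+2) + 1 = M * M^(k+1) + 1 := by ring
    _ < M * (M+1)^(k+1) + (M+1)^(k+1) := by nlinarith
    _ = _ := by ring

lemma cas_dvd {p q : ℕ} (hp : p.Prime) (hpo : Odd p) (hqo : Odd q) (hpq : p < q)
    {x y : ℤ} (hx : x ≠ 0) (hy0 : y ≠ 0) (h : x^p - y^q = 1) : (p:ℤ) ∣ y := by
  by_contra hy
  obtain ⟨a, ha⟩ := fac hp hqo h hy
  have hp2 := hp.two_le
  obtain ⟨d, rfl⟩ : ∃ d, q = p + d := ⟨q - p, by omega⟩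
  have hx' : x = a^(p+d) + 1 := by linarith
  rcases lt_trichotomy a 0 with h0 | h0 | h0
  · obtain ⟨A, rfl⟩ : ∃ A, a = -A := ⟨-a, by ring⟩
    rw [Odd.neg_pow hqo] at hx'
    rcases eq_or_lt_of_le (show 1 ≤ A by omega) with h1 | h1
    · rw [← h1] at hx'; apply hx; simpa using hx'
    have hAp : 1 < A^p := one_lt_pow₀ h1 (by omega)
    have hAq : 1 < A^(p+d) := one_lt_pow₀ h1 (by omega)
    have hAd : 1 ≤ A^d := one_le_pow₀ (by omega)
    have hY : (-y)^(p+d) = (A^(p+d) - 1)^p + 1 := by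
      rw [Odd.neg_pow hqo]
      have : x^p = -(A^(p+d)-1)^p := by
        rw [← Odd.neg_pow hpo, hx']; congr 1; ring
      linarith
    have u := pow_gap (M := A^(p+d) - 1) (p := p) (by omega) hp2
    rw [sub_add_cancel, ← hY, ← pow_mul, mul_comm, pow_mul] at u
    have u2 : -y < A^p := lt_of_pow_lt_pow_left₀ _ (by positivity) u
    have hYp : 0 < -y := by
      have : 0 < (-y)^(p+d) := by
        rw [hY]; have : 0 < (A^(p+d) - 1)^p := pow_pos (by omega) _
        omega
      exact (Odd.pow_pos_iff hqo).1 this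
    have u3 : (-y)^(p+d) ≤ (A^p - 1)^(p+d) := pow_le_pow_left₀ hYp.le (by omega) _
    have u4 : (A^p - 1)^(p+d) ≤ (A^(p+d) - 1)^p := by
      calc (A^p - 1)^(p+d) = (A^p-1)^p * (A^p-1)^d := pow_add _ _ _
        _ ≤ (A^p-1)^p * (A^p)^d := by
          apply mul_le_mul_of_nonneg_left _ (pow_nonneg (by omega) _)
          exact pow_le_pow_left₀ (by omega) (by omega) _
        _ = ((A^p-1) * A^d)^p := by rw [mul_pow, ← pow_mul, ← pow_mul, mul_comm d p]
        _ ≤ _ := by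
          apply pow_le_pow_left₀ (mul_nonneg (by omega) (by omega))
          rw [pow_add]; nlinarith
    omega
  · rw [h0, zero_pow (by omega)] at hx'
    rw [hx'] at h; simp at h
    exact hy0 (h.1)
  · have hAp : 1 ≤ a^p := one_le_pow₀ (by omega)
    have hAq : 1 ≤ a^(p+d) := one_le_pow₀ (by omega)
    have hAd : 1 ≤ a^d := one_le_pow₀ (by omega)
    have u := pow_gap (M := a^(p+d)) (p := p) (by omega) hp2
    rw [← hx'] at u
    have hY : (a^p)^(p+d) < y^(p+d) := by
      rw [← pow_mul, mul_comm, pow_mul]; linarith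
    have u2 : a^p < y := (hqo.strictMono_pow).lt_iff_lt.1 hY
    have u3 : (a^p + 1)^(p+d) ≤ y^(p+d) := pow_le_pow_left₀ (by omega) (by omega) _
    have u4 : x^p ≤ (a^p + 1)^(p+d) := by
      rw [hx']
      calc (a^(p+d) + 1)^p ≤ ((a^p+1) * a^d)^p := by
            apply pow_le_pow_left₀ (by omega)
            rw [pow_add]; nlinarith
        _ = (a^p+1)^p * (a^p)^d := by rw [mul_pow, ← pow_mul, ← pow_mul, mul_comm d p]
        _ ≤ (a^p+1)^p * (a^p+1)^d := by
          apply mul_le_mul_of_nonneg_left _ (pow_nonneg (by omega) _)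
          exact pow_le_pow_left₀ (by omega) (by omega) _
        _ = _ := (pow_add _ _ _).symm
    omega

lemma cas {p q : ℕ} (hp : p.Prime) (hpo : Odd p) (hqo : Odd q) (hpq : p < q)
    {x y : ℤ} (hx : x ≠ 0) (hy0 : y ≠ 0) (h : x^p - y^q = 1) :
    ∃ a b : ℤ, x - 1 = p^(q-1) * a^q ∧ (∑ i ∈ Finset.range p, x^i) = p * b^q := by
  have hd := cas_dvd hp hpo hqo hpq hx hy0 h
  have hS := mul_geom_sum x p
  set S := ∑ i ∈ Finset.range p, x^i with hSd
  have hpp : Prime (p:ℤ) := Nat.prime_iff_prime_int.1 hp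
  have hq0 : q ≠ 0 := by omega
  have e : (x - 1) * S = y^q := by rw [hS]; linarith
  have hx1 : (p:ℤ) ∣ x - 1 := by
    have : Fact p.Prime := ⟨hp⟩
    rw [← ZMod.intCast_zmod_eq_zero_iff_dvd]
    have h1 := congrArg (Int.cast : ℤ → ZMod p) h
    push_cast at h1
    rw [ZMod.pow_card, (ZMod.intCast_zmod_eq_zero_iff_dvd y p).2 hd, zero_pow hq0] at h1
    push_cast
    linear_combination h1
  obtain ⟨b, hb⟩ := hx1
  have hS2 : (p:ℤ)^2 ∣ S - p := by
    have := odd_sq_dvd_geom_sum₂_sub (a := (1:ℤ)) (b := b) hpo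
    rw [← hb] at this
    simpa using this
  obtain ⟨S', hS'⟩ : (p:ℤ) ∣ S := by
    have : (p:ℤ) ∣ S - p := (dvd_pow_self _ two_ne_zero).trans hS2
    simpa using this
  have hpS : ¬ (p:ℤ) ∣ S' := by
    rintro ⟨c, rfl⟩
    have : (p:ℤ)^2 ∣ p := by
      have h2 : (p:ℤ)^2 ∣ S := ⟨c, by rw [hS']; ring⟩
      simpa using dvd_sub h2 hS2
    have := Int.le_of_dvd (by exact_mod_cast hp.pos) this
    have h2 : (2:ℤ) ≤ p := by exact_mod_cast hp.two_le
    nlinarith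
  have hc : IsCoprime (p * (x - 1)) S' := by
    have h1 : IsCoprime (p:ℤ) S' := (Prime.coprime_iff_not_dvd hpp).2 hpS
    apply h1.mul_left
    obtain ⟨c, hc⟩ := geom_mod p x
    have h2 : p * S' = p + (x-1) * c := by rw [← hS']; linarith
    rw [hb] at h2 ⊢
    apply h1.mul_left
    have h3 : S' = 1 + b * c := by
      have : (p:ℤ) ≠ 0 := hpp.ne_zero
      apply mul_left_cancel₀ this; linarith
    rw [h3]
    exact ⟨-c, 1, by ring⟩
  have e2 : (p * (x-1)) * S' = y^q := by rw [← e, hS']; ring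
  obtain ⟨A, hA⟩ := Int.eq_pow_of_mul_eq_pow_odd_left hc hqo e2
  obtain ⟨B, hB⟩ := Int.eq_pow_of_mul_eq_pow_odd_right hc hqo e2
  obtain ⟨a, rfl⟩ : (p:ℤ) ∣ A := hpp.dvd_of_dvd_pow (n := q) (by rw [← hA]; exact dvd_mul_right _ _)
  refine ⟨a, B, ?_, by rw [hS', hB]⟩
  have : (p:ℤ) ≠ 0 := hpp.ne_zero
  apply mul_left_cancel₀ this
  rw [hA, mul_pow, ← mul_assoc, ← pow_succ', Nat.sub_add_cancel (by omega)]
end Mih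

namespace Mih
noncomputable def gg (t : ℝ) : ℝ := 1 - 211/43 * t + 211*84/43^2 * t^2 - 211*28*125/43^3 * t^3
  + 211*7*125*82/43^4 * t^4 - 211*175*82*39/43^5 * t^5

noncomputable def gg' (t : ℝ) : ℝ := - 211/43 + 2*(211*84/43^2 * t) - 3*(211*28*125/43^3 * t^2)
  + 4*(211*7*125*82/43^4 * t^3) - 5*(211*175*82*39/43^5 * t^4)

lemma gg_deriv (t : ℝ) : HasDerivAt gg (gg' t) t := by
  have h : ∀ (c : ℝ) (n : ℕ), HasDerivAt (fun t : ℝ => c * t ^ n) (c * (n * t ^ (n-1))) t :=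
    fun c n => (hasDerivAt_pow n t).const_mul c
  have := (((((hasDerivAt_const t (1:ℝ)).sub (h (211/43) 1)).add (h (211*84/43^2) 2)).sub
    (h (211*28*125/43^3) 3)).add (h (211*7*125*82/43^4) 4)).sub (h (211*175*82*39/43^5) 5)
  refine HasDerivAt.congr_deriv (f := gg) (this.congr_of_eventuallyEq
    (Filter.Eventually.of_forall fun s => ?_)) ?_
  · simp [gg]
  · simp [gg']; ring

lemma gg_ode (t : ℝ) : 43 * gg' t * (1 - t) + 211 * gg t = 4 * (211*175*82*39/43^5) * t^5 := by
  unfold gg gg'; ring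

lemma gg_bound {t : ℝ} (ht : |t| ≤ 1/10^6) : |gg t - 1| ≤ 1/10^4 := by
  have h1 := abs_le.1 ht
  have h2 : ∀ n : ℕ, n ≠ 0 → |t^n| ≤ 1/10^6 := by
    intro n hn
    rw [abs_pow]
    calc |t|^n ≤ |t|^1 := pow_le_pow_of_le_one (abs_nonneg _) (ht.trans (by norm_num)) (by omega)
      _ ≤ _ := by simpa using ht
  have a2 := abs_le.1 (h2 2 (by norm_num))
  have a3 := abs_le.1 (h2 3 (by norm_num))
  have a4 := abs_le.1 (h2 4 (by norm_num))
  have a5 := abs_le.1 (h2 5 (by norm_num))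
  unfold gg
  rw [abs_le]
  constructor <;> linarith [h1.1, h1.2, a2.1, a2.2, a3.1, a3.2, a4.1, a4.2, a5.1, a5.2]

lemma H_bound {t : ℝ} (ht : |t| ≤ 1/10^6) : |gg t ^ 43 / (1 - t)^211 - 1| ≤ 100 * |t|^6 := by
  set f : ℝ → ℝ := fun s => gg s ^ 43 / (1 - s)^211 with hf
  have hs : ∀ s ∈ Set.Icc (-|t|) (|t|), |s| ≤ |t| := fun s hs => abs_le.2 hs
  have hd : ∀ s ∈ Set.Icc (-|t|) (|t|), HasDerivWithinAt f
      (gg s ^ 42 * (4 * (211*175*82*39/43^5) * s^5) / (1-s)^212) (Set.Icc (-|t|) (|t|)) s := by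
    intro s hss
    have h1 := abs_le.1 ((hs s hss).trans ht)
    have hne : (1 - s) ≠ 0 := by intro h; linarith
    have d1 := (gg_deriv s).pow 43
    have d2 := ((hasDerivAt_const s (1:ℝ)).sub (hasDerivAt_id s)).pow 211
    have d3 := d1.div d2 (pow_ne_zero _ hne)
    refine HasDerivAt.hasDerivWithinAt ?_
    refine HasDerivAt.congr_deriv d3 ?_
    rw [← gg_ode]
    simp
    have e1 : (1 - s)^211 = (1-s)^210 * (1-s) := by rw [← pow_succ]
    have e2 : (1 - s)^212 = (1-s)^210 * (1-s)^2 := by rw [← pow_add]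
    have e3 : gg s ^ 43 = gg s ^ 42 * gg s := by rw [← pow_succ]
    rw [e1, e2, e3]
    generalize gg s ^ 42 = A
    have := pow_ne_zero 210 hne
    generalize (1-s)^210 = B at *
    field_simp
  have hb : ∀ s ∈ Set.Icc (-|t|) (|t|),
      ‖gg s ^ 42 * (4 * (211*175*82*39/43^5) * s^5) / (1-s)^212‖ ≤ 100 * |t|^5 := by
    intro s hss
    have h0 := hs s hss
    have h1 := abs_le.1 (h0.trans ht)
    have hg := abs_le.1 (gg_bound (h0.trans ht))
    have g0 : 0 ≤ gg s := by linarith [hg.1]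
    have g1 : gg s ^ 42 ≤ 2 := by
      calc gg s ^ 42 ≤ (1 + 1/10^4 : ℝ)^42 := pow_le_pow_left₀ g0 (by linarith [hg.2]) _
        _ ≤ 2 := by norm_num
    have b1 : (1:ℝ)/2 ≤ (1 - s)^212 := by
      have := one_add_mul_le_pow (a := -s) (by linarith [h1.1, h1.2]) 212
      rw [← sub_eq_add_neg] at this
      refine le_trans ?_ this
      push_cast
      linarith [h1.1, h1.2]
    rw [Real.norm_eq_abs, abs_div, abs_mul, abs_mul, abs_of_nonneg (pow_nonneg g0 42),
      abs_of_pos (lt_of_lt_of_le (by norm_num) b1), abs_pow s, div_le_iff₀ (lt_of_lt_of_le (by norm_num) b1)]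
    have h5 : |s|^5 ≤ |t|^5 := pow_le_pow_left₀ (abs_nonneg _) h0 _
    rw [abs_of_pos (show (0:ℝ) < 4 * (211*175*82*39/43^5) by norm_num)]
    calc gg s ^ 42 * (4 * (211*175*82*39/43^5) * |s|^5) ≤ 2 * (25 * |t|^5) := by
          apply mul_le_mul g1 _ (by positivity) (by norm_num)
          apply mul_le_mul (by norm_num) h5 (by positivity) (by norm_num)
      _ = 100 * |t|^5 * (1/2) := by ring
      _ ≤ _ := by gcongr
  have h0 : (0:ℝ) ∈ Set.Icc (-|t|) (|t|) := ⟨by simp, by simp⟩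
  have ht' : t ∈ Set.Icc (-|t|) (|t|) := abs_le.1 le_rfl
  have := Convex.norm_image_sub_le_of_norm_hasDerivWithin_le hd hb (convex_Icc _ _) h0 ht'
  have hf0 : f 0 = 1 := by simp [hf, gg]
  rw [hf0, Real.norm_eq_abs, Real.norm_eq_abs, sub_zero] at this
  calc _ ≤ 100 * |t|^5 * |t| := this
    _ = _ := by ring

lemma root_close {w e : ℝ} (he : e < 1) (h : |w^43 - 1| ≤ e) : |w - 1| ≤ e := by
  have h1 := abs_le.1 h
  have h0 : 0 < w := by
    by_contra hn
    push Not at hn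
    have : w^43 ≤ 0 := Odd.pow_nonpos (by decide) hn
    linarith
  rw [abs_le]
  rcases le_total 1 w with hw | hw
  · have : w ≤ w^43 := le_self_pow₀ hw (by norm_num)
    constructor <;> linarith
  · have : w^43 ≤ w := pow_le_of_le_one h0.le hw (by norm_num)
    constructor <;> linarith

lemma zpow_aux (x B T t : ℝ) (n : ℕ) (h2 : x^43 = (T-1)^n + 1) (h3 : T = B^43) (htT : t * T = 1)
    (hn : 5 * 43 = n + 4) : (x * B^4 * t^5)^43 = (1-t)^n + t^n := by
  calc (x * B^4 * t^5)^43 = x^43 * (B^43)^4 * t^(5*43) := by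
          rw [mul_pow, mul_pow, ← pow_mul, ← pow_mul, ← pow_mul]
    _ = ((T-1)^n + 1) * (t*T)^4 * t^n := by
        rw [h2, ← h3, mul_pow, hn, pow_add]
        ring
    _ = (t * T - t)^n + t^n := by
        rw [htT, one_pow, mul_one, add_mul, one_mul, ← mul_pow]
        have : (T-1)*t = 1 - t := by linear_combination htT
        rw [this]
    _ = _ := by rw [htT]

lemma uv_aux (U V G : ℝ) (hU : U ≠ 0) : U + V - G = V - (G / U - 1) * U := by
  field_simp; ring

lemma close_aux {t z : ℝ} (ht1 : |t| ≤ 1/10^12) (hzp : z^43 = (1-t)^211 + t^211) :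
    |z - gg t| ≤ 804 * |t|^6 := by
  have ht2 : |t| ≤ 1/10^6 := ht1.trans (by norm_num)
  have hg := abs_le.1 (gg_bound ht2)
  have g0 : 0 < gg t := by linarith only [hg.1]
  have g1 : gg t ≤ 2 := by linarith only [hg.2]
  have g2 : (1:ℝ)/2 ≤ gg t ^ 43 := by
    calc (1:ℝ)/2 ≤ (1 - 1/10^4)^43 := by norm_num
      _ ≤ _ := pow_le_pow_left₀ (by norm_num) (by linarith only [hg.1]) _
  have hta := abs_le.1 ht2
  have u0 : 0 < 1 - t := by linarith only [hta.2]
  have u1 : (1 - t)^211 ≤ 2 := by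
    calc (1 - t)^211 ≤ (1 + 1/10^6)^211 := pow_le_pow_left₀ u0.le (by linarith only [hta.1]) _
      _ ≤ 2 := by norm_num
  have hH := H_bound ht2
  have up : 0 < (1 - t)^211 := pow_pos u0 _
  have k1 : |z^43 - gg t ^ 43| ≤ 201 * |t|^6 := by
    have e : z^43 - gg t ^ 43 = t^211 - (gg t ^ 43 / (1-t)^211 - 1) * (1-t)^211 := by
      rw [hzp]
      exact uv_aux _ _ _ up.ne'
    rw [e]
    refine (abs_sub _ _).trans ?_
    rw [abs_mul, abs_of_pos up, abs_pow]
    have a1 : |t|^211 ≤ |t|^6 := pow_le_pow_of_le_one (abs_nonneg _) (ht2.trans (by norm_num)) (by norm_num)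
    have a2 : |gg t ^ 43 / (1 - t) ^ 211 - 1| * (1 - t) ^ 211 ≤ 100 * |t|^6 * 2 :=
      mul_le_mul hH u1 up.le (by positivity)
    exact (add_le_add a1 a2).trans (by linarith only [abs_nonneg t])
  have k2 : |(z / gg t)^43 - 1| ≤ 402 * |t|^6 := by
    have gp : 0 < gg t ^ 43 := pow_pos g0 _
    have e : (z / gg t)^43 - 1 = (z^43 - gg t ^ 43) / gg t ^ 43 := by
      rw [div_pow, sub_div, div_self gp.ne']
    rw [e, abs_div, abs_of_pos gp, div_le_iff₀ gp]
    calc _ ≤ 201 * |t|^6 := k1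
      _ = 402 * |t|^6 * (1/2) := by ring
      _ ≤ _ := by gcongr
  have t6 : |t|^6 ≤ 1/10^12 := by
    calc |t|^6 ≤ |t|^1 := pow_le_pow_of_le_one (abs_nonneg _) (ht2.trans (by norm_num)) (by norm_num)
      _ ≤ _ := by simpa using ht1
  have k3 := root_close (by linarith only [t6]) k2
  · have e : z - gg t = gg t * (z / gg t - 1) := by field_simp
    rw [e, abs_mul, abs_of_pos g0]
    calc _ ≤ 2 * (402 * |t|^6) := mul_le_mul g1 k3 (abs_nonneg _) (by norm_num)
      _ = _ := by ring

lemma cassels_num {x B : ℤ} (hB : 42 ≤ |B|)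
    (h : x^43 = (B^43 - 1)^211 + 1) : False := by
  obtain ⟨T, hT⟩ : ∃ T : ℤ, T = B^43 := ⟨_, rfl⟩
  rw [← hT] at h
  have hTa : (10:ℝ)^12 ≤ |(T:ℝ)| := by
    have h1 : (42:ℝ) ≤ |(B:ℝ)| := by exact_mod_cast hB
    rw [hT]; push_cast; rw [abs_pow]
    calc (10:ℝ)^12 ≤ 42^43 := by norm_num
      _ ≤ _ := pow_le_pow_left₀ (by norm_num) h1 _
  have hT0 : (T:ℝ) ≠ 0 := by
    intro h0; rw [h0] at hTa; norm_num at hTa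
  obtain ⟨t, ht⟩ : ∃ t : ℝ, t = 1 / (T:ℝ) := ⟨_, rfl⟩
  have ht1 : |t| ≤ 1/10^12 := by
    rw [ht, abs_div, abs_one]
    exact one_div_le_one_div_of_le (by norm_num) hTa
  have ht2 : |t| ≤ 1/10^6 := ht1.trans (by norm_num)
  have htT : t * T = 1 := by rw [ht]; field_simp
  obtain ⟨z, hz⟩ : ∃ z : ℝ, z = x * B^4 * t^5 := ⟨_, rfl⟩
  have hzp : z^43 = (1-t)^211 + t^211 := by
    have h2 : (x:ℝ)^43 = ((T:ℝ)-1)^211 + 1 := by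
      have := congrArg (Int.cast : ℤ → ℝ) h
      rwa [Int.cast_pow, Int.cast_add, Int.cast_pow, Int.cast_sub, Int.cast_one] at this
    have h3 : (T:ℝ) = (B:ℝ)^43 := by rw [hT]; push_cast; rfl
    rw [hz]
    exact zpow_aux x B T t 211 h2 h3 htT (by norm_num)
  have k4 := close_aux ht1 hzp
  clear hzp h
  set R : ℤ := 43^5 * T^5 - 211*43^4*T^4 + 211*84*43^3*T^3 - 211*28*125*43^2*T^2
    + 211*7*125*82*43*T - 211*175*82*39 with hR
  have k5 : ((43^5 * x * B^4 - R : ℤ) : ℝ) = 43^5 * T^5 * (z - gg t) := by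
    have e1 : (x:ℝ) * B^4 = z * T^5 := by
      rw [hz, mul_assoc, ← mul_pow, htT]; ring
    have e2 : (R:ℝ) = 43^5 * T^5 * gg t := by
      rw [hR, gg, ht]; push_cast; field_simp; ring
    rw [mul_sub, ← e2]; push_cast
    rw [mul_assoc, e1]; ring
  have k6 : |((43^5 * x * B^4 - R : ℤ) : ℝ)| < 1 := by
    rw [k5, abs_mul, abs_mul, abs_pow (T:ℝ), abs_of_pos (show (0:ℝ) < 43^5 by norm_num)]
    calc (43:ℝ)^5 * |(T:ℝ)|^5 * |z - gg t| ≤ 43^5 * |(T:ℝ)|^5 * (804 * |t|^6) := by gcongr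
      _ = 43^5 * 804 * (|t| * |(T:ℝ)|)^5 * |t| := by ring
      _ = 43^5 * 804 * |t| := by rw [← abs_mul, htT]; simp
      _ ≤ 43^5 * 804 * (1/10^12) := by gcongr
      _ < 1 := by norm_num
  have k7 : 43^5 * x * B^4 - R = 0 := by
    have : |43^5 * x * B^4 - R| < 1 := by exact_mod_cast k6
    exact Int.abs_lt_one_iff.1 this
  have k8 : (43:ℤ) ∣ 211*175*82*39 := by
    refine ⟨43^4 * T^5 - 211*43^3*T^4 + 211*84*43^2*T^3 - 211*28*125*43*T^2
      + 211*7*125*82*T - 43^4 * x * B^4, ?_⟩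
    rw [hR] at k7
    linear_combination k7
  revert k8
  norm_num
end Mih

open NumberField
open scoped Pointwise
namespace Mih
section setup
variable {p : ℕ} [hp : Fact p.Prime] {K : Type*} [Field K] [NumberField K]
  [hK : IsCyclotomicExtension {p} ℚ K]

lemma norm_x_sub {ζ : 𝓞 K} (hζ : IsPrimitiveRoot ζ p) (x : ℤ) :
    Algebra.norm ℤ ((x : 𝓞 K) - ζ) = ∑ i ∈ Finset.range p, x ^ i := by
  classical
  rw [← Int.cast_inj (α := 𝓞 K), ← norm_eq (p := p)]
  have h1 := congrArg (Polynomial.eval (x : 𝓞 K)) (Polynomial.cyclotomic_eq_prod_X_sub_primitiveRoots hζ)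
  rw [Polynomial.cyclotomic_prime, Polynomial.eval_geom_sum, Polynomial.eval_prod] at h1
  push_cast
  rw [h1]
  refine Finset.prod_bij (fun a _ => sg K a • ζ) ?_ ?_ ?_ ?_
  · intro a _
    rw [mem_primitiveRoots hp.out.pos, sg_root _ hζ.pow_eq_one]
    exact hζ.pow_of_coprime _ (ZMod.val_coe_unit_coprime a)
  · intro a _ b _ hab
    simp only [sg_root _ hζ.pow_eq_one] at hab
    exact Units.ext (ZMod.val_injective p (hζ.pow_inj (ZMod.val_lt _) (ZMod.val_lt _) hab))
  · intro μ hμ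
    rw [mem_primitiveRoots hp.out.pos, hζ.isPrimitiveRoot_iff] at hμ
    obtain ⟨i, hi, hc, rfl⟩ := hμ
    refine ⟨ZMod.unitOfCoprime i hc, Finset.mem_univ _, ?_⟩
    rw [sg_root _ hζ.pow_eq_one, ZMod.coe_unitOfCoprime, ZMod.val_cast_of_lt hi]
  · intro a _
    rw [smul_sub, sg_int]; simp

lemma setup {ζ : 𝓞 K} (hζ : IsPrimitiveRoot ζ p) (hpo : p ≠ 2) {q : ℕ} (x b : ℤ)
    (hx : (p : ℤ) ∣ x - 1) (hS : ∑ i ∈ Finset.range p, x ^ i = p * b ^ q) :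
    ∃ u0 : 𝓞 K, u0 * (1 - ζ) = x - ζ ∧ 1 - ζ ∣ u0 - 1 ∧ Algebra.norm ℤ u0 = b ^ q := by
  have hp2 := hp.out.two_le
  obtain ⟨c, hc⟩ := hx
  obtain ⟨d, hd⟩ := dvd_p (K := K) hζ hpo
  obtain ⟨k, hk⟩ : ∃ k, p - 1 = k + 2 := ⟨p - 3, by omega⟩
  rw [hk] at hd
  have hx' : (x : 𝓞 K) - 1 = p * c := by
    have := congrArg (Int.cast : ℤ → 𝓞 K) hc
    push_cast at this; exact this
  have hu : (1 + (1 - ζ) ^ (k+1) * d * c) * (1 - ζ) = x - ζ := by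
    linear_combination -hx' - c * hd
  refine ⟨1 + (1 - ζ) ^ (k+1) * d * c, hu, ⟨(1 - ζ) ^ k * d * c, by ring⟩, ?_⟩
  have h := congrArg (Algebra.norm ℤ) hu
  rw [map_mul, norm_x_sub hζ, norm_one_sub hζ hpo, hS, mul_comm] at h
  exact mul_left_cancel₀ (by exact_mod_cast hp.out.ne_zero) h
end setup
end Mih

open NumberField
open scoped Pointwise
namespace Mih
section wief
variable {p : ℕ} [hp : Fact p.Prime] {K : Type*} [Field K] [NumberField K]
  [hK : IsCyclotomicExtension {p} ℚ K]

lemma int_dvd_of {q : ℕ} (hq : q.Prime) (n : ℤ) (h : (q : 𝓞 K) ∣ (n : 𝓞 K)) : (q : ℤ) ∣ n := by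
  have h1 : (algebraMap ℤ (𝓞 K) q) ∣ algebraMap ℤ (𝓞 K) n := by simpa using h
  have h2 := map_dvd (Algebra.norm ℤ) h1
  rw [Algebra.norm_algebraMap, Algebra.norm_algebraMap] at h2
  have hqp : Prime (q : ℤ) := Nat.prime_iff_prime_int.1 hq
  apply hqp.dvd_of_dvd_pow ((dvd_pow_self _ ?_).trans h2)
  exact Module.finrank_pos.ne'

lemma frob {ζ : 𝓞 K} (hζ : IsPrimitiveRoot ζ p) {q : ℕ} (hq : q.Prime) (hc : Nat.Coprime q p)
    (z : 𝓞 K) : (q : 𝓞 K) ∣ z ^ q - sg K (ZMod.unitOfCoprime q hc) • z := by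
  have : Fact q.Prime := ⟨hq⟩
  have hnu : (q : 𝓞 K) ∈ nonunits (𝓞 K) := by
    intro hu
    have := int_dvd_of (K := K) hq 1 (by simpa using hu.dvd)
    have := Int.le_of_dvd one_pos this
    have := hq.two_le
    omega
  have : CharP (𝓞 K ⧸ Ideal.span {(q : 𝓞 K)}) q := CharP.quotient (𝓞 K) q hnu
  let m := Ideal.Quotient.mk (Ideal.span {(q : 𝓞 K)})
  let f : 𝓞 K →ₐ[ℤ] 𝓞 K ⧸ Ideal.span {(q : 𝓞 K)} :=
    ((frobenius _ q).comp m).toIntAlgHom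
  let g : 𝓞 K →ₐ[ℤ] 𝓞 K ⧸ Ideal.span {(q : 𝓞 K)} :=
    (m.comp (MulSemiringAction.toRingHom _ (𝓞 K) (sg K (ZMod.unitOfCoprime q hc)))).toIntAlgHom
  have hζK : IsPrimitiveRoot (ζ : K) p := hζ.map_of_injective RingOfIntegers.coe_injective
  have hfg : f = g := by
    apply (hζK.integralPowerBasis).algHom_ext
    rw [hζK.integralPowerBasis_gen]
    have e : hζK.toInteger = ζ := RingOfIntegers.ext rfl
    rw [e]
    change (m ζ) ^ q = m (sg K (ZMod.unitOfCoprime q hc) • ζ)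
    rw [sg_root _ hζ.pow_eq_one, ZMod.coe_unitOfCoprime, ← map_pow, ZMod.val_natCast,
      ← pow_mod_orderOf, ← hζ.eq_orderOf]
  have h := congrArg (fun φ => φ z) hfg
  change (m z) ^ q = m (sg K (ZMod.unitOfCoprime q hc) • z) at h
  rw [← map_pow, Ideal.Quotient.eq, Ideal.mem_span_singleton] at h
  exact h

lemma radical {ζ : 𝓞 K} (hζ : IsPrimitiveRoot ζ p) {q : ℕ} (hq : q.Prime) (hc : Nat.Coprime q p)
    (z : 𝓞 K) (h : (q : 𝓞 K) ∣ z ^ q) : (q : 𝓞 K) ∣ z := by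
  have h1 := (dvd_sub_right h).1 (frob hζ hq hc z)
  obtain ⟨w, hw⟩ := h1
  refine ⟨sg K (ZMod.unitOfCoprime q hc)⁻¹ • w, ?_⟩
  have := congrArg (fun y => sg K (ZMod.unitOfCoprime q hc)⁻¹ • y) hw
  simp only [smul_mul', sg_nat, sg_smul_smul, inv_mul_cancel, sg_one, one_smul] at this
  exact this

lemma sum_root {ζ : 𝓞 K} (hζ : IsPrimitiveRoot ζ p) :
    ∑ b : (ZMod p)ˣ, sg K b • ζ = -1 := by
  have h0 := hζ.geom_sum_eq_zero hp.out.one_lt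
  have h1 : ∑ b : (ZMod p)ˣ, sg K b • ζ = ∑ i ∈ (Finset.range p).erase 0, ζ ^ i := by
    refine Finset.sum_bij (fun a _ => (a : ZMod p).val) ?_ ?_ ?_ ?_
    · intro a _
      rw [Finset.mem_erase, Finset.mem_range]
      exact ⟨by rw [Ne, ZMod.val_eq_zero]; exact a.ne_zero, ZMod.val_lt _⟩
    · intro a _ b _ hab
      exact Units.ext (ZMod.val_injective p hab)
    · intro i hi
      rw [Finset.mem_erase, Finset.mem_range] at hi
      have hc : Nat.Coprime i p := (Nat.coprime_of_lt_prime hi.1 hi.2 hp.out).symm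
      exact ⟨ZMod.unitOfCoprime i hc, Finset.mem_univ _, by
        rw [ZMod.coe_unitOfCoprime, ZMod.val_cast_of_lt hi.2]⟩
    · intro a _
      rw [sg_root _ hζ.pow_eq_one]
  have h2 := Finset.add_sum_erase (Finset.range p) (fun i => ζ ^ i)
    (Finset.mem_range.2 hp.out.pos)
  rw [h0] at h2
  rw [h1]
  simp only [pow_zero] at h2
  linear_combination h2

lemma sum_root' {ζ : 𝓞 K} (hζ : IsPrimitiveRoot ζ p) (a s : (ZMod p)ˣ) :
    ∑ b : (ZMod p)ˣ, sg K b • (sg K a • ζ * sg K (-s) • ζ) = (if a = s then (p : 𝓞 K) else 0) - 1 := by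
  have hz : sg K a • ζ * sg K (-s) • ζ = ζ ^ ((a : ZMod p) - s).val := by
    rw [sg_root _ hζ.pow_eq_one, sg_root _ hζ.pow_eq_one, ← pow_add]
    rw [← pow_mod_orderOf, ← hζ.eq_orderOf, ← ZMod.val_add]
    congr 2
    push_cast; ring
  rw [hz]
  split_ifs with h
  · rw [h, sub_self, ZMod.val_zero, pow_zero]
    simp only [smul_one, Finset.sum_const, Finset.card_univ, ZMod.card_units_eq_totient,
      Nat.totient_prime hp.out, nsmul_eq_mul, mul_one]
    rw [Nat.cast_sub hp.out.pos]; simp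
  · have hne : (a : ZMod p) - s ≠ 0 := by
      rw [sub_ne_zero]; exact fun e => h (Units.ext e)
    rw [zero_sub]
    apply sum_root
    apply hζ.pow_of_coprime
    apply (Nat.coprime_of_lt_prime _ (ZMod.val_lt _) hp.out).symm
    rwa [Ne, ZMod.val_eq_zero]

lemma theta_dvd {ζ : 𝓞 K} (hζ : IsPrimitiveRoot ζ p) (hpo : p ≠ 2) {q : ℕ} (hq : q.Prime)
    (hpq : p ≠ q) {k : ℕ} (hk0 : (k : ZMod p) ≠ 0) (hk1 : (k : ZMod p) + 1 ≠ 0) (x : ℤ)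
    (h : (q : 𝓞 K) ∣ x * ∑ t ∈ TT p k, (sg K (-t⁻¹) • ζ - sg K t⁻¹ • ζ)) : (q : ℤ) ∣ x := by
  have hcard := TT_card hk0 hk1
  have hne : (TT p k).Nonempty := by
    rw [← Finset.card_pos]
    have := hp.out.two_le
    omega
  obtain ⟨t0, ht0⟩ := hne
  obtain ⟨w, hw⟩ := h
  have h1 : (q : 𝓞 K) ∣ ((x * p : ℤ) : 𝓞 K) := by
    refine ⟨-∑ b : (ZMod p)ˣ, sg K b • (w * sg K (-t0⁻¹) • ζ), ?_⟩
    have h2 : (q : 𝓞 K) * ∑ b : (ZMod p)ˣ, sg K b • (w * sg K (-t0⁻¹) • ζ) =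
        ∑ b : (ZMod p)ˣ, sg K b • (x * (∑ t ∈ TT p k, (sg K (-t⁻¹) • ζ - sg K t⁻¹ • ζ))
          * sg K (-t0⁻¹) • ζ) := by
      rw [Finset.mul_sum]
      apply Finset.sum_congr rfl
      intro b _
      rw [hw, mul_assoc, smul_mul' _ (q : 𝓞 K), sg_nat]
    have h3 : ∀ b : (ZMod p)ˣ, sg K b • (x * (∑ t ∈ TT p k, (sg K (-t⁻¹) • ζ - sg K t⁻¹ • ζ))
          * sg K (-t0⁻¹) • ζ) = x * ∑ t ∈ TT p k, (sg K b • (sg K (-t⁻¹) • ζ * sg K (-t0⁻¹) • ζ)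
            - sg K b • (sg K t⁻¹ • ζ * sg K (-t0⁻¹) • ζ)) := by
      intro b
      rw [mul_assoc, smul_mul', sg_int, Finset.sum_mul, Finset.smul_sum]
      congr 1
      apply Finset.sum_congr rfl
      intro t _
      rw [sub_mul, smul_sub]
    rw [mul_neg, h2]
    simp_rw [h3]
    rw [← Finset.mul_sum, Finset.sum_comm]
    simp_rw [Finset.sum_sub_distrib, sum_root' hζ]
    have h4 : ∀ t ∈ TT p k, (if -t⁻¹ = t0⁻¹ then (p : 𝓞 K) else 0) - 1 = -1 := by
      intro t ht
      rw [if_neg, zero_sub]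
      intro e
      rw [← inv_neg, inv_inj] at e
      rw [← e] at ht0
      exact (TT_neg hk0 hk1 t).1 ht0 ht
    have h5 : ∀ t ∈ TT p k, (if t⁻¹ = t0⁻¹ then (p : 𝓞 K) else 0) - 1
        = (if t = t0 then (p : 𝓞 K) else 0) - 1 := by
      intro t _
      simp only [inv_inj]
    have h8 : ∀ t ∈ TT p k, (if -t⁻¹ = t0⁻¹ then (p : 𝓞 K) else 0) - 1 -
        ((if t⁻¹ = t0⁻¹ then (p : 𝓞 K) else 0) - 1) = - (if t = t0 then (p : 𝓞 K) else 0) := by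
      intro t ht
      rw [h4 t ht, h5 t ht]; ring
    rw [← Finset.sum_sub_distrib, Finset.sum_congr rfl h8, Finset.sum_neg_distrib,
      Finset.sum_ite_eq', if_pos ht0]
    push_cast
    simp
  have h6 := int_dvd_of hq _ h1
  have hqp : Prime (q : ℤ) := Nat.prime_iff_prime_int.1 hq
  refine (hqp.dvd_or_dvd h6).resolve_right ?_
  intro h7
  have := (Nat.prime_dvd_prime_iff_eq hq hp.out).1 (by exact_mod_cast h7)
  exact hpq this.symm
end wief
end Mih

open NumberField
open scoped Pointwise
namespace Mih
section wief
variable {p : ℕ} [hp : Fact p.Prime] {K : Type*} [Field K] [NumberField K]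
  [hK : IsCyclotomicExtension {p} ℚ K]

lemma prod_mod {ι R : Type*} [CommRing R] (s : Finset ι) (f : ι → R) (x : R) :
    x ^ 2 ∣ ∏ i ∈ s, (1 - x * f i) - (1 - x * ∑ i ∈ s, f i) := by
  classical
  induction s using Finset.induction_on with
  | empty => simp
  | insert a s ha ih =>
    rw [Finset.prod_insert ha, Finset.sum_insert ha]
    obtain ⟨c, hc⟩ := ih
    refine ⟨(1 - x * f a) * c + f a * ∑ i ∈ s, f i, ?_⟩
    linear_combination (1 - x * f a) * hc

lemma sq_of_pow {R : Type*} [CommRing R] {q : ℕ} (a b : R) (h : (q : R) ∣ a - b) :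
    (q : R) ^ 2 ∣ a ^ q - b ^ q := by
  simpa using dvd_sub_pow_of_dvd_sub h 1

lemma wief {ζ : 𝓞 K} (hζ : IsPrimitiveRoot ζ p) (hpo : p ≠ 2) {q : ℕ} (hq : q.Prime)
    (hqp : p < q) {k : ℕ} (hk0 : (k : ZMod p) ≠ 0) (hk1 : (k : ZMod p) + 1 ≠ 0) (x b : ℤ)
    (u0 J : 𝓞 K) (hu : u0 * (1 - ζ) = x - ζ) (hN : Algebra.norm ℤ u0 = b ^ q)
    (hbq : IsCoprime (q : ℤ) b) (hx : (q : ℤ) ∣ x)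
    (hJ : ∏ t ∈ TT p k, sg K t⁻¹ • u0 = J ^ q) : (q : ℤ) ^ 2 ∣ x := by
  classical
  have hc : Nat.Coprime q p := (Nat.coprime_primes hq hp.out).2 hqp.ne'
  have hζ0 : ∀ a : (ZMod p)ˣ, sg K a • ζ * sg K (-a) • ζ = 1 := by
    intro a
    have h1 : sg K (1 : (ZMod p)ˣ) • ζ * sg K (-1 : (ZMod p)ˣ) • ζ = 1 := by
      rw [sg_one, one_smul, sg_root _ hζ.pow_eq_one, ← pow_succ', ← pow_mod_orderOf, ← hζ.eq_orderOf]
      have : (((-1 : (ZMod p)ˣ) : ZMod p).val + 1) % p = 0 := by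
        have h2 : ((((-1 : (ZMod p)ˣ) : ZMod p).val + 1 : ℕ) : ZMod p) = 0 := by
          push_cast; rw [ZMod.natCast_zmod_val]; simp
        exact Nat.mod_eq_zero_of_dvd ((ZMod.natCast_eq_zero_iff _ _).1 h2)
      rw [this, pow_zero]
    have h2 := congrArg (fun z => sg K a • z) h1
    simpa [smul_mul', sg_smul_smul] using h2
  have h1ζ : ∀ a : (ZMod p)ˣ, 1 - sg K a • ζ ≠ 0 := by
    intro a h
    have h1 : sg K a • (1 - ζ) = 0 := by rw [smul_sub, smul_one, h]
    rw [smul_eq_zero_iff_eq] at h1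
    exact hζ.ne_one hp.out.one_lt (sub_eq_zero.1 h1).symm
  have hua : ∀ a : (ZMod p)ˣ, sg K a • u0 * (1 - sg K a • ζ) = x - sg K a • ζ := by
    intro a
    have := congrArg (fun z => sg K a • z) hu
    simpa only [smul_mul', smul_sub, smul_one, sg_int] using this
  have hrel : ∀ a : (ZMod p)ˣ, sg K a • u0 * (1 - x * sg K a • ζ) =
      (-(sg K a • ζ)) * (sg K (-a) • u0 * (1 - x * sg K (-a) • ζ)) := by
    intro a
    have e1 := hua a
    have e2 := hua (-a)
    have e3 := hζ0 a
    apply mul_right_cancel₀ (h1ζ a)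
    generalize sg K a • u0 = U at *
    generalize sg K (-a) • u0 = V at *
    generalize sg K (-a) • ζ = z' at *
    have e0 := h1ζ a
    generalize sg K a • ζ = z at *
    have e4 : V * (1 - z) = 1 - x * z := by linear_combination -z * e2 + (1 - V) * e3
    have e5 : -z * (1 - x * z') = x - z := by linear_combination x * e3
    linear_combination (1 - x * z) * e1 - (x - z) * e4 - (V * (1 - z)) * e5
  set c := sg K (-1 : (ZMod p)ˣ) with hcd
  have hcJ : ∏ t ∈ TT p k, sg K (-t⁻¹) • u0 = (c • J) ^ q := by
    rw [← smul_pow', ← hJ, Finset.smul_prod']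
    apply Finset.prod_congr rfl
    intro t _
    rw [hcd, sg_smul_smul, neg_one_mul]
  set E : 𝓞 K := ∏ t ∈ TT p k, (-(sg K t⁻¹ • ζ)) with hE
  have hEp : E ^ (2 * p) = 1 := by
    rw [hE, ← Finset.prod_pow]
    apply Finset.prod_eq_one
    intro t _
    rw [pow_mul, neg_sq, ← pow_mul, mul_comm, pow_mul, ← smul_pow', hζ.pow_eq_one, smul_one, one_pow]
  obtain ⟨ρ, hρ, -⟩ := root_pow hq hpo hqp E ⟨2 * p, by have := hp.out.pos; omega, hEp⟩
  set P := ∏ t ∈ TT p k, (1 - (x : 𝓞 K) * sg K t⁻¹ • ζ) with hP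
  set P' := ∏ t ∈ TT p k, (1 - (x : 𝓞 K) * sg K (-t⁻¹) • ζ) with hP'
  have hmain : J ^ q * P = (ρ * c • J) ^ q * P' := by
    rw [mul_pow, hρ, ← hJ, ← hcJ, hE, hP, hP', ← Finset.prod_mul_distrib, mul_assoc,
      ← Finset.prod_mul_distrib, ← Finset.prod_mul_distrib]
    exact Finset.prod_congr rfl fun t _ => hrel _
  have hnorm : J ^ q * (c • J) ^ q = ((b ^ q : ℤ) : 𝓞 K) := by
    rw [← hJ, ← hcJ, ← hN, ← norm_eq (p := p)]
    have h1 := TT_prod hk0 hk1 (fun t => sg K t⁻¹ • u0)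
    simp only [inv_neg] at h1
    rw [h1]
    exact Fintype.prod_equiv (Equiv.inv _) _ _ (fun t => rfl)
  obtain ⟨x', rfl⟩ := hx
  set W := ρ * c • J with hW
  set S := ∑ t ∈ TT p k, sg K t⁻¹ • ζ with hS
  set S' := ∑ t ∈ TT p k, sg K (-t⁻¹) • ζ with hS'
  obtain ⟨m, hm⟩ := prod_mod (TT p k) (fun t => sg K t⁻¹ • ζ) (((q * x' : ℤ)) : 𝓞 K)
  obtain ⟨m', hm'⟩ := prod_mod (TT p k) (fun t => sg K (-t⁻¹) • ζ) (((q * x' : ℤ)) : 𝓞 K)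
  rw [← hP, ← hS] at hm
  rw [← hP', ← hS'] at hm'
  push_cast at hm hm'
  have hq1 : (q : 𝓞 K) ∣ J ^ q - W ^ q := by
    refine ⟨J ^ q * (x' * S - q * x' ^ 2 * m) - W ^ q * (x' * S' - q * x' ^ 2 * m'), ?_⟩
    linear_combination hmain - J ^ q * hm + W ^ q * hm'
  have hq2 : (q : 𝓞 K) ∣ (J - W) ^ q := by
    have hf := frob hζ hq hc
    have h1 : (q : 𝓞 K) ∣ sg K (ZMod.unitOfCoprime q hc) • (J - W) := by
      rw [smul_sub]
      have h2 := dvd_sub (dvd_sub hq1 (hf J)) (dvd_neg.2 (hf W))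
      have e : J ^ q - W ^ q - (J ^ q - sg K (ZMod.unitOfCoprime q hc) • J) -
          -(W ^ q - sg K (ZMod.unitOfCoprime q hc) • W) =
          sg K (ZMod.unitOfCoprime q hc) • J - sg K (ZMod.unitOfCoprime q hc) • W := by ring
      rwa [e] at h2
    have := dvd_add (hf (J - W)) h1
    simpa using this
  have hq3 := sq_of_pow _ _ (radical hζ hq hc _ hq2)
  obtain ⟨r, hr⟩ := hq3
  have hq4 : (q : 𝓞 K) ^ 2 ∣ W ^ q * ((q : 𝓞 K) * (x' * (S' - S))) := by
    refine ⟨- W ^ q * (x' ^ 2 * m - x' ^ 2 * m') - r * P, ?_⟩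
    linear_combination hmain - hr * P - W ^ q * hm + W ^ q * hm'
  have hq5 : (q : 𝓞 K) ∣ W ^ q * (x' * (S' - S)) := by
    have hq0 : (q : 𝓞 K) ≠ 0 := Nat.cast_ne_zero.2 hq.ne_zero
    rw [pow_two] at hq4
    apply (mul_dvd_mul_iff_left hq0).1
    rwa [mul_left_comm]
  have hq6 : (q : 𝓞 K) ∣ ((b ^ q : ℤ) : 𝓞 K) * (x' * (S' - S)) := by
    have h1 := (hq5.mul_left (J ^ q)).mul_left (E ^ (2 * p - 1))
    have e : E ^ (2 * p - 1) * (J ^ q * (W ^ q * (x' * (S' - S)))) =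
        ((b ^ q : ℤ) : 𝓞 K) * (x' * (S' - S)) := by
      rw [← hnorm, hW, mul_pow, hρ]
      have : E ^ (2 * p - 1) * E = 1 := by
        rw [← pow_succ, Nat.sub_add_cancel (by have := hp.out.pos; omega), hEp]
      linear_combination (J ^ q * (c • J) ^ q * (x' * (S' - S))) * this
    rwa [e] at h1
  have hcop : IsCoprime (q : 𝓞 K) ((b ^ q : ℤ) : 𝓞 K) := by
    have := (hbq.pow_right (n := q)).map (Int.castRingHom (𝓞 K))
    simpa using this
  have hq7 := hcop.dvd_of_dvd_mul_left hq6
  have hq8 : (q : ℤ) ∣ x' := by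
    apply theta_dvd hζ hpo hq hqp.ne hk0 hk1
    rw [Finset.sum_sub_distrib]
    exact hq7
  obtain ⟨y, rfl⟩ := hq8
  exact ⟨y, by ring⟩
end wief
end Mih

open NumberField
open scoped Pointwise
namespace Mih

lemma setup_all {p q : ℕ} (hp : p.Prime) (hq : q.Prime) (hpo : Odd p) (hqo : Odd q)
    (hpq : p < q) {x y : ℤ} (hx : x ≠ 0) (hy : y ≠ 0) (h : x^p - y^q = 1) :
    ∃ a b : ℤ, x - 1 = p^(q-1) * a^q ∧ (∑ i ∈ Finset.range p, x^i) = p * b^q ∧ x ≠ 1 ∧ b ≠ 0 := by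
  obtain ⟨a, b, ha, hb⟩ := cas hp hpo hqo hpq hx hy h
  have hS := mul_geom_sum x p
  refine ⟨a, b, ha, hb, ?_, ?_⟩
  · rintro rfl
    apply hy
    rw [one_pow] at h
    exact eq_zero_of_pow_eq_zero (n := q) (by linarith)
  · rintro rfl
    rw [hb, zero_pow hq.ne_zero] at hS
    apply hy
    exact eq_zero_of_pow_eq_zero (n := q) (by linarith)

lemma main_cert {p q k m : ℕ} {F : ℕ → ℤ} (hp : p.Prime) (hq : q.Prime) (hpo : Odd p) (hqo : Odd q)
    (hpq : p < q) (hc : Cert p k m F) (hk0 : (k : ZMod p) ≠ 0) (hk1 : (k : ZMod p) + 1 ≠ 0)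
    (hmq : Nat.Coprime m q) {x y : ℤ} (hx : x ≠ 0) (hy : y ≠ 0) (h : x^p - y^q = 1) : False := by
  obtain ⟨a, b, ha, hb, hx1, hb0⟩ := setup_all hp hq hpo hqo hpq hx hy h
  have : Fact p.Prime := ⟨hp⟩
  have hpz : NeZero ((p : ℕ) : ℚ) := ⟨Nat.cast_ne_zero.2 hp.ne_zero⟩
  have : IsCyclotomicExtension {p} ℚ (CyclotomicField p ℚ) := CyclotomicField.isCyclotomicExtension p ℚ
  have hp2 : p ≠ 2 := by rintro rfl; exact absurd hpo (by decide)
  have hζ := (IsCyclotomicExtension.zeta_spec p ℚ (CyclotomicField p ℚ)).toInteger_isPrimitiveRoot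
  have hdx : (p : ℤ) ^ (q - 1) ∣ x - 1 := ⟨_, ha⟩
  have hpx : (p : ℤ) ∣ x - 1 := (dvd_pow_self _ (by have := hq.two_le; omega)).trans hdx
  obtain ⟨u0, hu, hu1, hN⟩ := setup hζ hp2 (q := q) x b hpx hb
  have hu0 : u0 ≠ 0 := by
    rintro rfl
    rw [Algebra.norm_zero] at hN
    exact hb0 (eq_zero_of_pow_eq_zero hN.symm)
  obtain ⟨J, hJ⟩ := stick hζ hp2 hq hpq hk0 hk1 x b u0 hu hu1 hN hb0
  obtain ⟨α, hα⟩ := cert_pow hc hp2 hmq u0 J hu0 hJ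
  exact final hζ hp2 hq hpq x b hdx hx1 u0 hu hu1 hN hu0 α hα

lemma main_wief {p q k : ℕ} (hp : p.Prime) (hq : q.Prime) (hpo : Odd p) (hqo : Odd q)
    (hpq : p < q) (hk0 : (k : ZMod p) ≠ 0) (hk1 : (k : ZMod p) + 1 ≠ 0)
    {x y : ℤ} (hx : x ≠ 0) (hy : y ≠ 0) (h : x^p - y^q = 1) (hqx : (q:ℤ) ∣ x) :
    (q:ℤ)^2 ∣ (p:ℤ)^(q-1) - 1 := by
  obtain ⟨a, b, ha, hb, hx1, hb0⟩ := setup_all hp hq hpo hqo hpq hx hy h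
  have : Fact p.Prime := ⟨hp⟩
  have : Fact q.Prime := ⟨hq⟩
  have hpz : NeZero ((p : ℕ) : ℚ) := ⟨Nat.cast_ne_zero.2 hp.ne_zero⟩
  have : IsCyclotomicExtension {p} ℚ (CyclotomicField p ℚ) := CyclotomicField.isCyclotomicExtension p ℚ
  have hp2 : p ≠ 2 := by rintro rfl; exact absurd hpo (by decide)
  have hζ := (IsCyclotomicExtension.zeta_spec p ℚ (CyclotomicField p ℚ)).toInteger_isPrimitiveRoot
  have hdx : (p : ℤ) ^ (q - 1) ∣ x - 1 := ⟨_, ha⟩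
  have hpx : (p : ℤ) ∣ x - 1 := (dvd_pow_self _ (by have := hq.two_le; omega)).trans hdx
  obtain ⟨u0, hu, hu1, hN⟩ := setup hζ hp2 (q := q) x b hpx hb
  obtain ⟨J, hJ⟩ := stick hζ hp2 hq hpq hk0 hk1 x b u0 hu hu1 hN hb0
  have hqp : Prime (q : ℤ) := Nat.prime_iff_prime_int.1 hq
  have hbq : IsCoprime (q : ℤ) b := by
    rw [Prime.coprime_iff_not_dvd hqp]
    intro hd
    have h1 : (q : ℤ) ∣ ∑ i ∈ Finset.range p, x ^ i := by
      rw [hb]; exact (hd.trans (dvd_pow_self _ hq.ne_zero)).mul_left _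
    have hp1 : p = (p - 1) + 1 := by have := hp.two_le; omega
    rw [hp1, Finset.sum_range_succ'] at h1
    have h2 : (q : ℤ) ∣ ∑ i ∈ Finset.range (p - 1), x ^ (i + 1) :=
      Finset.dvd_sum fun i _ => hqx.trans (dvd_pow_self _ (by omega))
    have h3 := (dvd_add_right h2).1 h1
    rw [pow_zero] at h3
    exact hqp.not_dvd_one h3
  have hx2 := wief hζ hp2 hq hpq hk0 hk1 x b u0 J hu hN hbq hqx hJ
  have ha1 : (q : ℤ) ∣ a - (-1) := by
    rw [← ZMod.intCast_zmod_eq_zero_iff_dvd]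
    have h1 := congrArg (Int.cast : ℤ → ZMod q) ha
    push_cast at h1
    have hp0 : (p : ZMod q) ≠ 0 := by
      rw [Ne, ZMod.natCast_eq_zero_iff]
      intro hd
      exact hpq.ne' ((Nat.prime_dvd_prime_iff_eq hq hp).1 hd)
    rw [ZMod.pow_card, ZMod.pow_card_sub_one_eq_one hp0,
      (ZMod.intCast_zmod_eq_zero_iff_dvd x q).2 hqx] at h1
    push_cast
    linear_combination -h1
  have ha2 := sq_of_pow a (-1) ha1
  rw [hqo.neg_one_pow] at ha2
  obtain ⟨c, hc⟩ := ha2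
  obtain ⟨d, hd⟩ := hx2
  refine ⟨(p:ℤ)^(q-1) * c - d, ?_⟩
  linear_combination (p:ℤ)^(q-1) * hc - hd + ha

lemma main_cassels {p q : ℕ} (hp : p.Prime) (hq : q.Prime) (hpo : Odd p) (hqo : Odd q)
    (hpq : p < q) {x y : ℤ} (hx : x ≠ 0) (hy : y ≠ 0) (h : x^p - y^q = 1) (hqx : ¬ (q:ℤ) ∣ x) :
    ∃ B : ℤ, (p:ℤ) - 1 ≤ |B| ∧ x^p = (B^p - 1)^q + 1 := by
  have hd := cas_dvd hp hpo hqo hpq hx hy h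
  obtain ⟨a, ha⟩ := fac hq hpo (x := -y) (y := -x) (by rw [hqo.neg_pow, hpo.neg_pow]; linarith)
    (by rwa [dvd_neg])
  have hB : (-a)^p = y + 1 := by rw [hpo.neg_pow, ← ha]; ring
  refine ⟨-a, ?_, by rw [hB, add_sub_cancel_right]; linarith⟩
  generalize -a = B at hB
  have : Fact p.Prime := ⟨hp⟩
  have hB1 : (p : ℤ) ∣ B - 1 := by
    rw [← ZMod.intCast_zmod_eq_zero_iff_dvd]
    have h1 := congrArg (Int.cast : ℤ → ZMod p) hB
    push_cast at h1
    rw [ZMod.pow_card, (ZMod.intCast_zmod_eq_zero_iff_dvd y p).2 hd] at h1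
    push_cast
    linear_combination h1
  have hne : B ≠ 1 := by
    rintro rfl
    rw [one_pow] at hB
    exact hy (by linarith)
  have h2 := Int.le_of_dvd (abs_pos.2 (sub_ne_zero.2 hne)) ((dvd_abs _ _).2 hB1)
  have h3 := abs_sub B 1
  rw [abs_one] at h3
  linarith

lemma zmod_ne {p k : ℕ} (hk : k ≠ 0) (hkp : k + 1 < p) :
    (k : ZMod p) ≠ 0 ∧ (k : ZMod p) + 1 ≠ 0 := by
  constructor
  · rw [Ne, ZMod.natCast_eq_zero_iff]
    intro h; have := Nat.le_of_dvd (by omega) h; omega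
  · have : (k : ZMod p) + 1 = ((k + 1 : ℕ) : ZMod p) := by push_cast; rfl
    rw [this, Ne, ZMod.natCast_eq_zero_iff]
    intro h; have := Nat.le_of_dvd (by omega) h; omega

lemma cop {q : ℕ} (hq : q.Prime) {m : ℕ} (h : ¬ q ∣ m) : Nat.Coprime m q :=
  ((Nat.Prime.coprime_iff_not_dvd hq).2 h).symm

lemma ndvd2 {q : ℕ} (hq : q.Prime) {p : ℕ} (hpq : p < q) {l : List ℕ} (hl : ∀ i ∈ l, 0 < i ∧ i ≤ p) :
    ¬ q ∣ l.prod := by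
  intro h
  obtain ⟨i, hi, hd⟩ := (Prime.dvd_prod_iff hq.prime).1 h
  have := Nat.le_of_dvd (hl i hi).1 hd
  have := (hl i hi).2
  omega

lemma main_43 {q : ℕ} (hq : q.Prime) (hqo : Odd q) (hpq : 43 < q) {x y : ℤ} (hx : x ≠ 0) (hy : y ≠ 0)
    (h : x^43 - y^q = 1) : False := by
  have hk := zmod_ne (p := 43) (k := 3) (by norm_num) (by norm_num)
  by_cases hq2 : q = 211
  · by_cases hqx : (q : ℤ) ∣ x
    · have := main_wief (p := 43) (by norm_num) hq (by decide) hqo hpq hk.1 hk.2 hx hy h hqx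
      rw [hq2] at this
      norm_num at this
    · obtain ⟨B, hB, hB2⟩ := main_cassels (p := 43) (by norm_num) hq (by decide) hqo hpq hx hy h hqx
      rw [hq2] at hB2
      exact cassels_num (by push_cast at hB; linarith only [hB]) hB2
  · refine main_cert (by norm_num) hq (by decide) hqo hpq cert_43 hk.1 hk.2 (cop hq ?_) hx hy h
    have e : 844 = 4 * 211 := by norm_num
    rw [e, hq.dvd_mul]
    rintro (h1 | h1)
    · have := Nat.le_of_dvd (by norm_num) h1; omega
    · exact hq2 ((Nat.prime_dvd_prime_iff_eq hq (by norm_num)).1 h1)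

lemma main_lt {p q : ℕ} (hp : p.Prime) (hq : q.Prime) (hpo : Odd p) (hqo : Odd q)
    (hpq : p < q) (hs : p ≤ 43) {x y : ℤ} (hx : x ≠ 0) (hy : y ≠ 0) (h : x^p - y^q = 1) : False := by
  have key : ∀ {k m : ℕ} {F : ℕ → ℤ} (l : List ℕ), Cert p k m F → (k ≠ 0 ∧ k + 1 < p) →
      l.prod = m → (∀ i ∈ l, 0 < i ∧ i ≤ p) → False := by
    intro k m F l hc hk hl hl2
    have hk' := zmod_ne hk.1 hk.2
    exact main_cert hp hq hpo hqo hpq hc hk'.1 hk'.2 (cop hq (hl ▸ ndvd2 hq hpq hl2)) hx hy h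
  have hmem : p = 3 ∨ p = 5 ∨ p = 7 ∨ p = 11 ∨ p = 13 ∨ p = 17 ∨ p = 19 ∨ p = 23 ∨ p = 29 ∨
      p = 31 ∨ p = 37 ∨ p = 41 ∨ p = 43 := by
    clear key h
    revert hp hpo
    interval_cases p <;> decide
  rcases hmem with rfl | rfl | rfl | rfl | rfl | rfl | rfl | rfl | rfl | rfl | rfl | rfl | rfl
  · exact key [1] cert_3 (by norm_num) rfl (by decide)
  · exact key [2] cert_5 (by norm_num) rfl (by decide)
  · exact key [2] cert_7 (by norm_num) rfl (by decide)
  · exact key [2] cert_11 (by norm_num) rfl (by decide)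
  · exact key [2] cert_13 (by norm_num) rfl (by decide)
  · exact key [2] cert_17 (by norm_num) rfl (by decide)
  · exact key [2] cert_19 (by norm_num) rfl (by decide)
  · exact key [6] cert_23 (by norm_num) rfl (by decide)
  · exact key [4] cert_29 (by norm_num) rfl (by decide)
  · exact key [6, 9] cert_31 (by norm_num) rfl (by decide)
  · exact key [2, 37] cert_37 (by norm_num) rfl (by decide)
  · exact key [6, 11] cert_41 (by norm_num) rfl (by decide)
  · exact main_43 hq hqo hpq hx hy h

end Mih

/-- Mihăilescu's second theorem: if `p, q` are distinct odd primes with `p ≤ 43` or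
`q ≤ 43`, then there are no nonzero integers `x, y` with `x ^ p - y ^ q = 1`. -/
theorem mihailescu_second (p q : ℕ) (hp : p.Prime) (hq : q.Prime)
    (hpodd : Odd p) (hqodd : Odd q) (hpq : p ≠ q) (hsmall : p ≤ 43 ∨ q ≤ 43) :
    ¬ ∃ x y : ℤ, x ≠ 0 ∧ y ≠ 0 ∧ x ^ p - y ^ q = 1 := by
  rintro ⟨x, y, hx, hy, h⟩
  rcases lt_or_gt_of_ne hpq with hlt | hlt
  · exact Mih.main_lt hp hq hpodd hqodd hlt (by omega) hx hy h
  · refine Mih.main_lt hq hp hqodd hpodd hlt (by omega) (neg_ne_zero.2 hy) (neg_ne_zero.2 hx) ?_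
    rw [hpodd.neg_pow, hqodd.neg_pow]
    linarith
end
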